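/- Let λ ∈ ℂ and let N, P ≥ 0 be such that β_c := max{2 − 2P, (4 − 2N)/3} > 1. Then there exist constants C, c > 0, complex-valued potentials V : ℝ² → ℂ and W : ℝ² → ℂ² exactly one of which is identically zero, and a nonzero twice continuously differentiable function u : ℝ² → ℂ, such that −Δu + W·∇u + Vu = λu in ℝ², |V(x)| ≤ C⟨x⟩^{−N} and |W(x)| ≤ C⟨x⟩^{−P} for all x ∈ ℝ², and there exists A ∈ {−1, 0} such that |u(x)| ≤ C·exp(−c·|x|^{β_c}·(log|x|)^{A}) for all x with |x| ≥ 2. -/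

import Mathlib

noncomputable section

/-- Partial derivative of `u` in the `i`-th coordinate direction. -/
def pd (u : EuclideanSpace ℝ (Fin 2) → ℂ) (i : Fin 2) (x : EuclideanSpace ℝ (Fin 2)) : ℂ :=
  fderiv ℝ u x (EuclideanSpace.single i 1)

/-- Laplacian on ℝ²: sum of second partial derivatives. -/
def lap (u : EuclideanSpace ℝ (Fin 2) → ℂ) (x : EuclideanSpace ℝ (Fin 2)) : ℂ :=
  ∑ i, pd (fun y => pd u i y) i x

open Filter Topology

/-- the complex coordinate on the plane -/
def zc (x : EuclideanSpace ℝ (Fin 2)) : ℂ := (x 0 : ℂ) + (x 1 : ℂ) * Complex.I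

/-- `zc` as a continuous linear map -/
def zcL : EuclideanSpace ℝ (Fin 2) →L[ℝ] ℂ :=
  Complex.ofRealCLM.comp (EuclideanSpace.proj (0 : Fin 2)) +
    (Complex.I) • (Complex.ofRealCLM.comp (EuclideanSpace.proj (1 : Fin 2)))

theorem zcL_apply (x) : zcL x = zc x := by
  simp [zcL, zc, mul_comm]

theorem zc_norm (x : EuclideanSpace ℝ (Fin 2)) : ‖zc x‖ = ‖x‖ := by
  rw [EuclideanSpace.norm_eq, zc, Complex.norm_add_mul_I]
  simp [Fin.sum_univ_two]

theorem norm_sq_two (x : EuclideanSpace ℝ (Fin 2)) : ‖x‖ ^ 2 = x 0 ^ 2 + x 1 ^ 2 := by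
  rw [EuclideanSpace.norm_sq_eq]; simp [Fin.sum_univ_two]

theorem zc_ne {x : EuclideanSpace ℝ (Fin 2)} (hx : x ≠ 0) : zc x ≠ 0 := by
  rw [← norm_pos_iff, zc_norm]; exact norm_pos_iff.2 hx

/-- local log-polar coordinates around `x` -/
def gl (x y : EuclideanSpace ℝ (Fin 2)) : ℝ × ℝ :=
  (Real.log ‖y‖, Complex.arg (zc x) + Complex.arg (zc y / zc x))

theorem gl_self {x : EuclideanSpace ℝ (Fin 2)} (hx : x ≠ 0) :
    gl x x = (Real.log ‖x‖, Complex.arg (zc x)) := by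
  simp [gl, div_self (zc_ne hx)]

theorem slit_near {x : EuclideanSpace ℝ (Fin 2)} (hx : x ≠ 0) :
    ∀ᶠ y in 𝓝 x, y ≠ 0 ∧ zc y / zc x ∈ Complex.slitPlane := by
  have h1 : ∀ᶠ y in 𝓝 x, y ≠ 0 := isOpen_ne.mem_nhds hx
  have hc : Continuous (fun y => zc y / zc x) := by
    have : Continuous zc := by
      have := zcL.continuous
      simpa [funext zcL_apply] using this
    fun_prop
  have h2 : ∀ᶠ y in 𝓝 x, zc y / zc x ∈ Complex.slitPlane := by
    apply hc.continuousAt.eventually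
    apply Complex.isOpen_slitPlane.mem_nhds
    show zc x / zc x ∈ _
    rw [div_self (zc_ne hx)]; simp
  exact h1.and h2

theorem gl_eq {x y : EuclideanSpace ℝ (Fin 2)} (hx : x ≠ 0) (hy : y ≠ 0) :
    gl x y = (Real.log ‖x‖ + (Complex.log (zc y / zc x)).re,
      Complex.arg (zc x) + (Complex.log (zc y / zc x)).im) := by
  rw [gl, Complex.log_re, Complex.log_im, norm_div, zc_norm, zc_norm,
    Real.log_div (norm_ne_zero_iff.2 hy) (norm_ne_zero_iff.2 hx)]
  congr 1; ring

theorem gl_contDiffAt {x : EuclideanSpace ℝ (Fin 2)} (hx : x ≠ 0) :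
    ContDiffAt ℝ 2 (gl x) x := by
  have hl : ContDiffAt ℝ 2 (fun y => Complex.log (zc y / zc x)) x := by
    have e : (fun y => zc y / zc x) = fun y => zcL y / zc x := by
      funext y; rw [zcL_apply]
    have h0 : ContDiffAt ℝ 2 Complex.log (zc x / zc x) := by
      have : ContDiffAt ℂ 2 Complex.log (zc x / zc x) := by
        apply Complex.contDiffAt_log
        rw [div_self (zc_ne hx)]; simp
      exact this.restrict_scalars ℝ
    have h1 : ContDiffAt ℝ 2 (fun y => zc y / zc x) x := by
      rw [e]
      exact (zcL.contDiff.contDiffAt).mul contDiffAt_const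
    exact h0.comp x h1
  have h2 : ContDiffAt ℝ 2 (fun y => (Real.log ‖x‖ + (Complex.log (zc y / zc x)).re,
      Complex.arg (zc x) + (Complex.log (zc y / zc x)).im)) x := by
    apply ContDiffAt.prodMk
    · exact contDiffAt_const.add (Complex.reCLM.contDiff.contDiffAt.comp x hl)
    · exact contDiffAt_const.add (Complex.imCLM.contDiff.contDiffAt.comp x hl)
  apply h2.congr_of_eventuallyEq
  filter_upwards [slit_near hx] with y hy
  exact gl_eq hx hy.1

theorem gl_fderiv {x y : EuclideanSpace ℝ (Fin 2)} (hx : x ≠ 0) (hy : y ≠ 0)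
    (hs : zc y / zc x ∈ Complex.slitPlane) :
    ∃ L : EuclideanSpace ℝ (Fin 2) →L[ℝ] ℝ × ℝ, HasFDerivAt (gl x) L y ∧
      L (EuclideanSpace.single 0 1) = (y 0 / ‖y‖ ^ 2, - y 1 / ‖y‖ ^ 2) ∧
      L (EuclideanSpace.single 1 1) = (y 1 / ‖y‖ ^ 2, y 0 / ‖y‖ ^ 2) := by
  have h1 : HasFDerivAt (fun y => zc y / zc x) ((zc x)⁻¹ • zcL) y := by
    have := (zcL.hasFDerivAt (x := y)).const_smul (zc x)⁻¹
    refine this.congr_of_eventuallyEq (Eventually.of_forall fun w => ?_)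
    simp only [Pi.smul_apply]
    rw [zcL_apply, smul_eq_mul]; field_simp
  have h2 : HasFDerivAt (fun y => Complex.log (zc y / zc x)) ((zc y)⁻¹ • zcL) y := by
    have h0 := (Complex.hasStrictDerivAt_log hs).hasDerivAt.complexToReal_fderiv
    have := h0.comp y h1
    refine this.congr_fderiv ?_
    ext v
    have := zc_ne hx
    have := zc_ne hy
    simp
    field_simp
  have h3 : HasFDerivAt (fun y => (Real.log ‖x‖ + (Complex.log (zc y / zc x)).re,
      Complex.arg (zc x) + (Complex.log (zc y / zc x)).im)) _ y :=
    HasFDerivAt.prodMk ((Complex.reCLM.hasFDerivAt.comp y h2).const_add (Real.log ‖x‖))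
     ((Complex.imCLM.hasFDerivAt.comp y h2).const_add (Complex.arg (zc x)))
  have h4 : gl x =ᶠ[𝓝 y] (fun y => (Real.log ‖x‖ + (Complex.log (zc y / zc x)).re,
      Complex.arg (zc x) + (Complex.log (zc y / zc x)).im)) := by
    filter_upwards [isOpen_ne.mem_nhds hy] with w hw
    exact gl_eq hx hw
  refine ⟨_, h3.congr_of_eventuallyEq h4, ?_, ?_⟩
  all_goals
    have e3 : Complex.normSq (zc y) = ‖y‖ ^ 2 := by
      rw [Complex.normSq_eq_norm_sq, zc_norm]
    have r1 : (zc y).re = y 0 := by simp [zc]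
    have r2 : (zc y).im = y 1 := by simp [zc]
  · have z0 : zcL (EuclideanSpace.single 0 1) = 1 := by simp [zcL_apply, zc]
    simp [z0, e3, r1, r2]
  · have z0 : zcL (EuclideanSpace.single 1 1) = Complex.I := by simp [zcL_apply, zc]
    simp [z0, e3, r1, r2]
    ring

theorem ab_fderiv (x : EuclideanSpace ℝ (Fin 2)) (hx : x ≠ 0) :
    ∃ A : EuclideanSpace ℝ (Fin 2) →L[ℝ] ℝ,
      HasFDerivAt (fun y : EuclideanSpace ℝ (Fin 2) => y 0 / ‖y‖ ^ 2) A x ∧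
      A (EuclideanSpace.single 0 1) = (x 1 ^ 2 - x 0 ^ 2) / (x 0 ^ 2 + x 1 ^ 2) ^ 2 ∧
      A (EuclideanSpace.single 1 1) = (-2 * x 0 * x 1) / (x 0 ^ 2 + x 1 ^ 2) ^ 2 ∧
    ∃ B : EuclideanSpace ℝ (Fin 2) →L[ℝ] ℝ,
      HasFDerivAt (fun y : EuclideanSpace ℝ (Fin 2) => y 1 / ‖y‖ ^ 2) B x ∧
      B (EuclideanSpace.single 0 1) = (-2 * x 0 * x 1) / (x 0 ^ 2 + x 1 ^ 2) ^ 2 ∧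
      B (EuclideanSpace.single 1 1) = (x 0 ^ 2 - x 1 ^ 2) / (x 0 ^ 2 + x 1 ^ 2) ^ 2 := by
  have hrn : x 0 ^ 2 + x 1 ^ 2 ≠ 0 := by
    rw [← norm_sq_two]; exact pow_ne_zero _ (norm_ne_zero_iff.2 hx)
  have hp : ∀ i : Fin 2, HasFDerivAt (fun y : EuclideanSpace ℝ (Fin 2) => y i)
      (EuclideanSpace.proj (𝕜 := ℝ) i : EuclideanSpace ℝ (Fin 2) →L[ℝ] ℝ) x := fun i =>
    (EuclideanSpace.proj (𝕜 := ℝ) i : EuclideanSpace ℝ (Fin 2) →L[ℝ] ℝ).hasFDerivAt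
  have hs := ((hp 0).pow 2).add ((hp 1).pow 2)
  have hi := (hasDerivAt_inv hrn).comp_hasFDerivAt x hs
  have ha := (hp 0).mul hi
  have hb := (hp 1).mul hi
  simp only [norm_sq_two, div_eq_mul_inv]
  refine ⟨_, ha, ?_, ?_, _, hb, ?_, ?_⟩ <;>
  · simp
    field_simp
    try ring

theorem pd_of_hasFDerivAt {v : EuclideanSpace ℝ (Fin 2) → ℂ} {x : EuclideanSpace ℝ (Fin 2)}
    {L : EuclideanSpace ℝ (Fin 2) →L[ℝ] ℂ} (h : HasFDerivAt v L x) (i : Fin 2) :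
    pd v i x = L (EuclideanSpace.single i 1) := by
  rw [pd, h.fderiv]

theorem polar_transfer (u : EuclideanSpace ℝ (Fin 2) → ℂ) (f f1 f2 : ℝ × ℝ → ℂ) (f11 f22 : ℂ)
    (x : EuclideanSpace ℝ (Fin 2)) (hx : x ≠ 0)
    (hu : ∀ᶠ y in 𝓝 x, u y = f (gl x y))
    (hf : ContDiffAt ℝ 2 f (gl x x))
    (h1 : ∀ᶠ p in 𝓝 (gl x x), HasDerivAt (fun s => f (s, p.2)) (f1 p) p.1)
    (h2 : ∀ᶠ p in 𝓝 (gl x x), HasDerivAt (fun s => f (p.1, s)) (f2 p) p.2)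
    (h11 : HasDerivAt (fun s => f1 (s, (gl x x).2)) f11 (gl x x).1)
    (h22 : HasDerivAt (fun s => f2 ((gl x x).1, s)) f22 (gl x x).2) :
    ContDiffAt ℝ 2 u x ∧ lap u x = (f11 + f22) / (‖x‖ : ℂ) ^ 2 ∧
    pd u 0 x = (f1 (gl x x) * x 0 - f2 (gl x x) * x 1) / (‖x‖ : ℂ) ^ 2 ∧
    pd u 1 x = (f1 (gl x x) * x 1 + f2 (gl x x) * x 0) / (‖x‖ : ℂ) ^ 2 := by
  have hg := gl_contDiffAt hx
  have hgc : Tendsto (gl x) (𝓝 x) (𝓝 (gl x x)) := hg.continuousAt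
  have hcd : ContDiffAt ℝ 2 u x := (hf.comp x hg).congr_of_eventuallyEq hu
  -- differentiability of f near the base point
  have hfd : ∀ᶠ p in 𝓝 (gl x x), DifferentiableAt ℝ f p := by
    filter_upwards [(hf.eventually (by simp))] with p hp
    exact hp.differentiableAt (by norm_num)
  have hF1 : ∀ᶠ p in 𝓝 (gl x x), f1 p = fderiv ℝ f p (1, 0) := by
    filter_upwards [h1, hfd] with p hp hd
    have : HasDerivAt (fun s : ℝ => (s, p.2)) (1, 0) p.1 :=
      (hasDerivAt_id _).prodMk (hasDerivAt_const _ _)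
    exact hp.unique (HasFDerivAt.comp_hasDerivAt (f := fun s : ℝ => (s, p.2)) p.1
      (l' := fderiv ℝ f p) hd.hasFDerivAt this)
  have hF2 : ∀ᶠ p in 𝓝 (gl x x), f2 p = fderiv ℝ f p (0, 1) := by
    filter_upwards [h2, hfd] with p hp hd
    have : HasDerivAt (fun s : ℝ => (p.1, s)) (0, 1) p.2 :=
      (hasDerivAt_const _ _).prodMk (hasDerivAt_id _)
    exact hp.unique (HasFDerivAt.comp_hasDerivAt (f := fun s : ℝ => (p.1, s)) p.2
      (l' := fderiv ℝ f p) hd.hasFDerivAt this)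
  have hDf : DifferentiableAt ℝ (fderiv ℝ f) (gl x x) :=
    (hf.fderiv_right (m := 1) (by norm_num)).differentiableAt (by norm_num)
  have hd1 : DifferentiableAt ℝ f1 (gl x x) := by
    have : DifferentiableAt ℝ (fun p => fderiv ℝ f p (1, 0)) (gl x x) :=
      hDf.clm_apply (differentiableAt_const _)
    exact this.congr_of_eventuallyEq hF1
  have hd2 : DifferentiableAt ℝ f2 (gl x x) := by
    have : DifferentiableAt ℝ (fun p => fderiv ℝ f p (0, 1)) (gl x x) :=
      hDf.clm_apply (differentiableAt_const _)
    exact this.congr_of_eventuallyEq hF2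
  have e11 : fderiv ℝ f1 (gl x x) (1, 0) = f11 := by
    have : HasDerivAt (fun s : ℝ => (s, (gl x x).2)) (1, 0) (gl x x).1 :=
      (hasDerivAt_id _).prodMk (hasDerivAt_const _ _)
    exact (HasFDerivAt.comp_hasDerivAt (f := fun s : ℝ => (s, (gl x x).2)) (gl x x).1
      (l' := fderiv ℝ f1 (gl x x)) hd1.hasFDerivAt this).unique h11
  have e22 : fderiv ℝ f2 (gl x x) (0, 1) = f22 := by
    have : HasDerivAt (fun s : ℝ => ((gl x x).1, s)) (0, 1) (gl x x).2 :=
      (hasDerivAt_const _ _).prodMk (hasDerivAt_id _)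
    exact (HasFDerivAt.comp_hasDerivAt (f := fun s : ℝ => ((gl x x).1, s)) (gl x x).2
      (l' := fderiv ℝ f2 (gl x x)) hd2.hasFDerivAt this).unique h22
  have split : ∀ (A : ℝ × ℝ →L[ℝ] ℂ) (a b : ℝ), A (a, b) = a * A (1, 0) + b * A (0, 1) := by
    intro A a b
    have : ((a, b) : ℝ × ℝ) = a • (1, 0) + b • (0, 1) := by simp
    rw [this, map_add, map_smul, map_smul]; simp
  have key : ∀ᶠ y in 𝓝 x, 
      pd u 0 y = f1 (gl x y) * ((y 0 / ‖y‖ ^ 2 : ℝ) : ℂ) - f2 (gl x y) * ((y 1 / ‖y‖ ^ 2 : ℝ) : ℂ) ∧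
      pd u 1 y = f1 (gl x y) * ((y 1 / ‖y‖ ^ 2 : ℝ) : ℂ) + f2 (gl x y) * ((y 0 / ‖y‖ ^ 2 : ℝ) : ℂ) := by
    filter_upwards [slit_near hx, hu.eventually_nhds, hgc.eventually hfd, hgc.eventually hF1,
      hgc.eventually hF2] with y hy huy hfy h1y h2y
    obtain ⟨L, hL, l0, l1⟩ := gl_fderiv hx hy.1 hy.2
    have hd : HasFDerivAt u ((fderiv ℝ f (gl x y)).comp L) y :=
      (hfy.hasFDerivAt.comp y hL).congr_of_eventuallyEq huy
    simp only [pd, hd.fderiv, ContinuousLinearMap.comp_apply, l0, l1]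
    rw [split, split _ (y 1 / ‖y‖ ^ 2), h1y, h2y]
    push_cast
    constructor <;> ring
  have hx2 : (‖x‖ : ℂ) ≠ 0 := by exact_mod_cast norm_ne_zero_iff.2 hx
  refine ⟨hcd, ?_, ?_, ?_⟩
  · obtain ⟨L, hL, l0, l1⟩ := gl_fderiv hx hx (by rw [div_self (zc_ne hx)]; simp)
    have hc1 := hd1.hasFDerivAt.comp x hL
    have hc2 := hd2.hasFDerivAt.comp x hL
    have hrn : x 0 ^ 2 + x 1 ^ 2 ≠ 0 := by
      rw [← norm_sq_two]; exact pow_ne_zero _ (norm_ne_zero_iff.2 hx)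
    obtain ⟨A, hA, A0, A1, B, hB, B0, B1⟩ := ab_fderiv x hx
    have hm1 := (hc1.mul (Complex.ofRealCLM.hasFDerivAt.comp x hA)).sub
      (hc2.mul (Complex.ofRealCLM.hasFDerivAt.comp x hB))
    have hm2 := (hc1.mul (Complex.ofRealCLM.hasFDerivAt.comp x hB)).add
      (hc2.mul (Complex.ofRealCLM.hasFDerivAt.comp x hA))
    have k1 := hm1.congr_of_eventuallyEq (f₁ := pd u 0) (by
      filter_upwards [key] with y hy
      simpa using hy.1)
    have k2 := hm2.congr_of_eventuallyEq (f₁ := pd u 1) (by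
      filter_upwards [key] with y hy
      simpa using hy.2)
    have q1 := pd_of_hasFDerivAt k1 0
    have q2 := pd_of_hasFDerivAt k2 1
    rw [lap, Fin.sum_univ_two, q1, q2]
    simp only [add_apply, sub_apply,
      smul_apply, ContinuousLinearMap.comp_apply, A0, A1, B0, B1, l0, l1,
      Function.comp_apply, Complex.ofRealCLM_apply, smul_eq_mul]
    rw [split, split _ (x 1 / ‖x‖ ^ 2), split (fderiv ℝ f2 (gl x x)), 
      split (fderiv ℝ f2 (gl x x)) (x 1 / ‖x‖ ^ 2), e11, e22]
    have hn : (‖x‖ : ℂ) ^ 2 = (x 0 : ℂ) ^ 2 + (x 1 : ℂ) ^ 2 := by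
      exact_mod_cast congrArg (fun t : ℝ => (t : ℂ)) (norm_sq_two x)
    have hrn' : (x 0 : ℂ) ^ 2 + (x 1 : ℂ) ^ 2 ≠ 0 := by
      rw [← hn]; exact pow_ne_zero _ hx2
    push_cast
    rw [hn]
    field_simp
    ring
  · rw [key.self_of_nhds.1]; push_cast; field_simp
  · rw [key.self_of_nhds.2]; push_cast; field_simp

open Filter Topology

/-- angular frequencies -/
def nn (j : ℕ) : ℝ := 16 * (j : ℝ) ^ 2
/-- frequency jumps -/
def kk (j : ℕ) : ℝ := 16 * (2 * (j : ℝ) + 1)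

theorem nn_succ (j : ℕ) : nn (j + 1) = nn j + kk j := by
  simp only [nn, kk]; push_cast; ring

def wv (lam : ℂ) (j : ℕ) (s : ℝ) : ℂ := lam * Complex.exp (2 * s) / (nn j : ℂ) ^ 2
def qv (lam : ℂ) (j : ℕ) (s : ℝ) : ℂ := (1 - wv lam j s) ^ (1 / 2 : ℂ)
def sg (lam : ℂ) (j : ℕ) (s : ℝ) : ℂ :=
  nn j * qv lam j s + wv lam j s / (2 * qv lam j s ^ 2)
def dv (lam : ℂ) (j : ℕ) (s : ℝ) : ℂ := kk j * (2 - kk j / nn j) / (4 * qv lam j s)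
def dsg (lam : ℂ) (j : ℕ) (s : ℝ) : ℂ :=
  -nn j * wv lam j s / qv lam j s + wv lam j s / qv lam j s ^ 2 +
    wv lam j s ^ 2 / qv lam j s ^ 4
def ddv (lam : ℂ) (j : ℕ) (s : ℝ) : ℂ := dv lam j s * wv lam j s / qv lam j s ^ 2

section
variable {lam : ℂ} {j : ℕ} {s : ℝ}

theorem kk_pos : 0 < kk j := by simp only [kk]; positivity

theorem nn_big (hj : 299 ≤ j) : 1000 ≤ nn j := by
  have : (299 : ℝ) ≤ j := by exact_mod_cast hj
  simp only [nn]; nlinarith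

theorem kk_big : 16 ≤ kk j := by
  simp only [kk]; nlinarith [Nat.cast_nonneg (α := ℝ) j]

theorem kk_le (hj : 299 ≤ j) : kk j ≤ nn j / 100 := by
  have : (299 : ℝ) ≤ j := by exact_mod_cast hj
  simp only [kk, nn]; nlinarith

theorem w_mem (hw : ‖wv lam j s‖ ≤ 1 / 100) : 1 - wv lam j s ∈ Complex.slitPlane := by
  left
  have := (Complex.abs_re_le_norm (wv lam j s)).trans hw
  have := (abs_le.1 this).2
  simp; linarith

theorem q_sq (hw : ‖wv lam j s‖ ≤ 1 / 100) : qv lam j s ^ 2 = 1 - wv lam j s := by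
  have h := Complex.slitPlane_ne_zero (w_mem hw)
  rw [qv, ← Complex.cpow_nat_mul]; simp

theorem q_re : 0 ≤ (qv lam j s).re := by
  rw [qv]
  by_cases h : 1 - wv lam j s = 0
  · rw [h]; simp
  rw [Complex.cpow_def_of_ne_zero h, Complex.exp_re]
  apply mul_nonneg (Real.exp_pos _).le
  have e : (Complex.log (1 - wv lam j s) * (1 / 2 : ℂ)).im = Complex.arg (1 - wv lam j s) / 2 := by
    have : (1 / 2 : ℂ) = ((1 / 2 : ℝ) : ℂ) := by push_cast; rfl
    rw [this, Complex.im_mul_ofReal, Complex.log_im]; ring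
  rw [e]
  have h1 := Complex.neg_pi_lt_arg (1 - wv lam j s)
  have h2 := Complex.arg_le_pi (1 - wv lam j s)
  exact Real.cos_nonneg_of_neg_pi_div_two_le_of_le (by linarith) (by linarith)

theorem q_near (hw : ‖wv lam j s‖ ≤ 1 / 100) : ‖qv lam j s - 1‖ ≤ 1 / 100 := by
  have h := q_sq hw
  have h1 : (qv lam j s - 1) * (qv lam j s + 1) = - wv lam j s := by linear_combination h
  have h2 : 1 ≤ ‖qv lam j s + 1‖ := by
    refine le_trans ?_ (Complex.re_le_norm _)
    simp [q_re]
  have h3 := congrArg norm h1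
  rw [norm_mul, norm_neg] at h3
  nlinarith [norm_nonneg (qv lam j s - 1)]

theorem q_lo (hw : ‖wv lam j s‖ ≤ 1 / 100) : 99 / 100 ≤ ‖qv lam j s‖ := by
  have := q_near hw
  have h := norm_sub_norm_le (1 : ℂ) (qv lam j s)
  rw [norm_sub_rev, norm_one] at h
  linarith

theorem q_hi (hw : ‖wv lam j s‖ ≤ 1 / 100) : ‖qv lam j s‖ ≤ 101 / 100 := by
  have := q_near hw
  have h := norm_sub_norm_le (qv lam j s) (1 : ℂ)
  rw [norm_one] at h
  linarith

theorem q_ne (hw : ‖wv lam j s‖ ≤ 1 / 100) : qv lam j s ≠ 0 := by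
  rw [← norm_pos_iff]; linarith [q_lo hw]

theorem w_deriv : HasDerivAt (wv lam j) (2 * wv lam j s) s := by
  have h : HasDerivAt (fun s : ℝ => Complex.exp (2 * s)) (Complex.exp (2 * s) * (2 * 1)) s :=
    ((Complex.ofRealCLM.hasDerivAt (x := s)).const_mul 2).cexp
  have := (h.const_mul lam).div_const ((nn j : ℂ) ^ 2)
  refine this.congr_deriv ?_
  rw [wv]; ring

theorem q_deriv (hw : ‖wv lam j s‖ ≤ 1 / 100) :
    HasDerivAt (qv lam j) (-wv lam j s / qv lam j s) s := by
  have h0 : HasDerivAt (fun s => 1 - wv lam j s) (-(2 * wv lam j s)) s :=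
    (w_deriv).const_sub 1
  have h1 := HasDerivAt.comp s ((hasDerivAt_id (1 - wv lam j s)).cpow_const
    (c := (1 / 2 : ℂ)) (w_mem hw)) h0
  refine h1.congr_deriv ?_
  simp only [id]
  rw [Complex.cpow_sub _ _ (Complex.slitPlane_ne_zero (w_mem hw)), Complex.cpow_one, ← q_sq hw]
  have := q_ne hw
  have e : (qv lam j s ^ 2) ^ (1 / 2 : ℂ) = qv lam j s := by
    rw [q_sq hw]; rfl
  rw [e]
  field_simp

theorem sg_deriv (hw : ‖wv lam j s‖ ≤ 1 / 100) : HasDerivAt (sg lam j) (dsg lam j s) s := by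
  have hq := q_ne hw
  have h := ((q_deriv hw).const_mul (nn j : ℂ)).add
    ((w_deriv (lam := lam) (j := j) (s := s)).div (((q_deriv hw).pow 2).const_mul (2 : ℂ)) (by simp; exact hq))
  refine h.congr_deriv ?_
  rw [dsg]
  simp only [Pi.pow_apply]
  push_cast
  field_simp
  ring

theorem dv_deriv (hw : ‖wv lam j s‖ ≤ 1 / 100) : HasDerivAt (dv lam j) (ddv lam j s) s := by
  have hq := q_ne hw
  have h := (hasDerivAt_const s ((kk j : ℂ) * (2 - kk j / nn j))).div
    ((q_deriv hw).const_mul (4 : ℂ)) (by simp; exact hq)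
  refine h.congr_deriv ?_
  rw [ddv, dv]
  field_simp
  ring

theorem wq2_le (hw : ‖wv lam j s‖ ≤ 1 / 100) : ‖wv lam j s / qv lam j s ^ 2‖ ≤ 11 / 1000 := by
  rw [norm_div, norm_pow, div_le_iff₀ (by have := q_lo hw; positivity)]
  nlinarith [q_lo hw]

theorem wq_le (hw : ‖wv lam j s‖ ≤ 1 / 100) : ‖wv lam j s / qv lam j s‖ ≤ 11 / 1000 := by
  rw [norm_div, div_le_iff₀ (by have := q_lo hw; positivity)]
  nlinarith [q_lo hw]

theorem sg_near (hw : ‖wv lam j s‖ ≤ 1 / 100) (hj : 299 ≤ j) :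
    ‖sg lam j s - nn j‖ ≤ nn j / 50 := by
  have e : sg lam j s - nn j = nn j * (qv lam j s - 1) + (wv lam j s / qv lam j s ^ 2) / 2 := by
    rw [sg]; have := q_ne hw; field_simp; ring
  have hn := nn_big hj
  rw [e]
  refine (norm_add_le _ _).trans ?_
  rw [norm_mul, norm_div, Complex.norm_real, Real.norm_of_nonneg (by linarith)]
  have := q_near hw
  have := wq2_le hw
  simp only [Complex.norm_ofNat]
  nlinarith

theorem dv_near (hw : ‖wv lam j s‖ ≤ 1 / 100) (hj : 299 ≤ j) :
    ‖dv lam j s - kk j / 2‖ ≤ kk j / 50 := by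
  have hn := nn_big hj
  have hk := kk_le hj
  have hk0 := kk_pos (j := j)
  have hq := q_ne hw
  have e : dv lam j s - kk j / 2 = kk j * ((2 * (1 - qv lam j s) - ((kk j / nn j : ℝ) : ℂ)) / (4 * qv lam j s)) := by
    rw [dv]; push_cast; field_simp; ring
  rw [e, norm_mul, Complex.norm_real, Real.norm_of_nonneg hk0.le, norm_div, norm_mul]
  have h1 : ‖2 * (1 - qv lam j s) - ((kk j / nn j : ℝ) : ℂ)‖ ≤ 3 / 100 := by
    refine (norm_sub_le _ _).trans ?_
    rw [norm_mul, norm_sub_rev, Complex.norm_real, Real.norm_of_nonneg (by positivity)]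
    have := q_near hw
    have : kk j / nn j ≤ 1 / 100 := by rw [div_le_iff₀ (by linarith)]; linarith
    simp only [Complex.norm_ofNat]
    linarith
  have h2 := q_lo hw
  have : ‖2 * (1 - qv lam j s) - ((kk j / nn j : ℝ) : ℂ)‖ / (‖(4 : ℂ)‖ * ‖qv lam j s‖) ≤ 1 / 50 := by
    simp only [Complex.norm_ofNat]
    rw [div_le_iff₀ (by positivity)]; linarith
  nlinarith

theorem dsg_le (hw : ‖wv lam j s‖ ≤ 1 / 100) (hj : 299 ≤ j) : ‖dsg lam j s‖ ≤ nn j / 10 := by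
  have hn := nn_big hj
  have e : dsg lam j s = -nn j * (wv lam j s / qv lam j s) + wv lam j s / qv lam j s ^ 2 +
    (wv lam j s / qv lam j s ^ 2) ^ 2 := by
    rw [dsg]; have := q_ne hw; field_simp
  rw [e]
  refine (norm_add₃_le).trans ?_
  rw [norm_mul, norm_neg, norm_pow, Complex.norm_real, Real.norm_of_nonneg (by linarith)]
  have := wq2_le hw
  have := wq_le hw
  have := norm_nonneg (wv lam j s / qv lam j s ^ 2)
  nlinarith

theorem dv_le (hw : ‖wv lam j s‖ ≤ 1 / 100) (hj : 299 ≤ j) : ‖dv lam j s‖ ≤ kk j := by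
  have h := dv_near hw hj
  have hk0 := kk_pos (j := j)
  have := norm_sub_norm_le (dv lam j s) ((kk j : ℂ) / 2)
  rw [norm_div, Complex.norm_real, Real.norm_of_nonneg hk0.le] at this
  simp only [Complex.norm_ofNat] at this
  linarith

theorem sg_le (hw : ‖wv lam j s‖ ≤ 1 / 100) (hj : 299 ≤ j) : ‖sg lam j s‖ ≤ 2 * nn j := by
  have h := sg_near hw hj
  have hn := nn_big hj
  have := norm_sub_norm_le (sg lam j s) (nn j : ℂ)
  rw [Complex.norm_real, Real.norm_of_nonneg (by linarith)] at this
  linarith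

theorem ddv_le (hw : ‖wv lam j s‖ ≤ 1 / 100) (hj : 299 ≤ j) : ‖ddv lam j s‖ ≤ kk j := by
  have h := dv_le hw hj
  have hk0 := kk_pos (j := j)
  have e : ddv lam j s = dv lam j s * (wv lam j s / qv lam j s ^ 2) := by rw [ddv]; ring
  rw [e, norm_mul]
  have := wq2_le hw
  nlinarith [norm_nonneg (dv lam j s), norm_nonneg (wv lam j s / qv lam j s ^ 2)]

/-- common potential of the two crossing modes -/
def V0 (lam : ℂ) (j : ℕ) (s : ℝ) : ℂ :=
  (sg lam j s + dv lam j s) ^ 2 - (dsg lam j s + ddv lam j s) - nn j ^ 2 + nn j ^ 2 * wv lam j s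

theorem V0_eq (hw : ‖wv lam j s‖ ≤ 1 / 100) (hj : 299 ≤ j) : V0 lam j s =
    (sg lam j s - dv lam j s) ^ 2 - (dsg lam j s - ddv lam j s) - (nn j - kk j) ^ 2
      + nn j ^ 2 * wv lam j s := by
  have hq := q_ne hw
  have hn : (nn j : ℂ) ≠ 0 := by
    have := nn_big hj
    exact_mod_cast (by linarith : nn j ≠ 0)
  have : 4 * sg lam j s * dv lam j s - 2 * ddv lam j s = (kk j : ℂ) * (2 * nn j - kk j) := by
    rw [ddv, sg, dv]; field_simp; ring
  rw [V0]; linear_combination this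

theorem V0_le (hw : ‖wv lam j s‖ ≤ 1 / 100) (hj : 299 ≤ j) :
    ‖V0 lam j s‖ ≤ 10 * (nn j * kk j) := by
  have hq := q_ne hw
  have e : V0 lam j s = nn j * (wv lam j s / qv lam j s) + (wv lam j s / qv lam j s ^ 2) ^ 2 / 4
      + 2 * sg lam j s * dv lam j s + dv lam j s ^ 2 - dsg lam j s - ddv lam j s := by
    have h2 := q_sq hw
    have : sg lam j s ^ 2 = nn j ^ 2 * qv lam j s ^ 2 + nn j * (wv lam j s / qv lam j s)
      + (wv lam j s / qv lam j s ^ 2) ^ 2 / 4 := by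
      rw [sg]; field_simp; ring
    rw [V0]; linear_combination this + (nn j : ℂ) ^ 2 * h2
  have hn := nn_big hj
  have hk := kk_le hj
  have hk0 := kk_big (j := j)
  rw [e]
  have a1 : ‖(nn j : ℂ) * (wv lam j s / qv lam j s)‖ ≤ nn j := by
    rw [norm_mul, Complex.norm_real, Real.norm_of_nonneg (by linarith)]
    nlinarith [wq_le hw]
  have a2 : ‖(wv lam j s / qv lam j s ^ 2) ^ 2 / 4‖ ≤ 1 := by
    rw [norm_div, norm_pow]
    simp only [Complex.norm_ofNat]
    nlinarith [wq2_le hw, norm_nonneg (wv lam j s / qv lam j s ^ 2)]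
  have a3 : ‖2 * sg lam j s * dv lam j s‖ ≤ 4 * (nn j * kk j) := by
    rw [norm_mul, norm_mul]
    simp only [Complex.norm_ofNat]
    have := mul_le_mul (sg_le hw hj) (dv_le hw hj) (norm_nonneg _) (by linarith)
    nlinarith
  have a4 : ‖dv lam j s ^ 2‖ ≤ nn j * kk j := by
    rw [norm_pow]
    nlinarith [dv_le hw hj, norm_nonneg (dv lam j s)]
  have a5 := dsg_le hw hj
  have a6 := ddv_le hw hj
  have n1 := norm_sub_le (nn j * (wv lam j s / qv lam j s) + (wv lam j s / qv lam j s ^ 2) ^ 2 / 4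
      + 2 * sg lam j s * dv lam j s + dv lam j s ^ 2 - dsg lam j s) (ddv lam j s)
  have n2 := norm_sub_le (nn j * (wv lam j s / qv lam j s) + (wv lam j s / qv lam j s ^ 2) ^ 2 / 4
      + 2 * sg lam j s * dv lam j s + dv lam j s ^ 2) (dsg lam j s)
  have n3 := norm_add_le (nn j * (wv lam j s / qv lam j s) + (wv lam j s / qv lam j s ^ 2) ^ 2 / 4
      + 2 * sg lam j s * dv lam j s) (dv lam j s ^ 2)
  have n4 := norm_add_le (nn j * (wv lam j s / qv lam j s) + (wv lam j s / qv lam j s ^ 2) ^ 2 / 4)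
      (2 * sg lam j s * dv lam j s)
  have n5 := norm_add_le (nn j * (wv lam j s / qv lam j s)) ((wv lam j s / qv lam j s ^ 2) ^ 2 / 4)
  nlinarith

theorem sg_diff (hw : ‖wv lam j s‖ ≤ 1 / 100) (hw' : ‖wv lam (j + 1) s‖ ≤ 1 / 100) (hj : 299 ≤ j) :
    ‖sg lam j s - sg lam (j + 1) s‖ ≤ 2 * kk j := by
  have e : ∀ i, ‖wv lam i s‖ ≤ 1 / 100 → sg lam i s = nn i * qv lam i s + (wv lam i s / qv lam i s ^ 2) / 2 := by
    intro i hi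
    rw [sg]; have := q_ne hi; field_simp
  have hn := nn_big hj
  have hn1 := nn_big (show 299 ≤ j + 1 by omega)
  have hk := kk_le hj
  have hk0 := kk_big (j := j)
  have hns := nn_succ j
  have hmain : (nn j * qv lam j s - nn (j + 1) * qv lam (j + 1) s) *
      (nn j * qv lam j s + nn (j + 1) * qv lam (j + 1) s) = (nn j ^ 2 - nn (j + 1) ^ 2 : ℂ) := by
    have h1 := q_sq hw
    have h2 := q_sq hw'
    have h3 : (nn j : ℂ) ^ 2 * wv lam j s = nn (j + 1) ^ 2 * wv lam (j + 1) s := by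
      have hna : (nn j : ℂ) ≠ 0 := by exact_mod_cast (by linarith : nn j ≠ 0)
      have hnb : (nn (j + 1) : ℂ) ≠ 0 := by exact_mod_cast (by linarith : nn (j + 1) ≠ 0)
      simp only [wv]; field_simp
    linear_combination (nn j : ℂ) ^ 2 * h1 - (nn (j + 1) : ℂ) ^ 2 * h2 - h3
  have hlow : nn j ≤ ‖nn j * qv lam j s + nn (j + 1) * qv lam (j + 1) s‖ := by
    refine le_trans ?_ (Complex.re_le_norm _)
    have r1 : 99 / 100 ≤ (qv lam j s).re := by
      have := (Complex.abs_re_le_norm (qv lam j s - 1)).trans (q_near hw)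
      have := (abs_le.1 this).1
      simp at this; linarith
    have r2 : 99 / 100 ≤ (qv lam (j + 1) s).re := by
      have := (Complex.abs_re_le_norm (qv lam (j + 1) s - 1)).trans (q_near hw')
      have := (abs_le.1 this).1
      simp at this; linarith
    simp only [Complex.add_re, Complex.re_ofReal_mul]
    nlinarith
  have hrhs : ‖(nn j ^ 2 - nn (j + 1) ^ 2 : ℂ)‖ = nn (j + 1) ^ 2 - nn j ^ 2 := by
    have : (nn j ^ 2 - nn (j + 1) ^ 2 : ℂ) = ((nn j ^ 2 - nn (j + 1) ^ 2 : ℝ) : ℂ) := by push_cast; rfl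
    rw [this, Complex.norm_real, Real.norm_of_nonpos (by nlinarith)]; ring
  have hc := congrArg norm hmain
  rw [norm_mul, hrhs] at hc
  have hlow2 : (nn j + nn (j+1)) * (99/100) ≤ ‖nn j * qv lam j s + nn (j + 1) * qv lam (j + 1) s‖ := by
    refine le_trans ?_ (Complex.re_le_norm _)
    have r1 : 99 / 100 ≤ (qv lam j s).re := by
      have := (Complex.abs_re_le_norm (qv lam j s - 1)).trans (q_near hw)
      have := (abs_le.1 this).1
      simp at this; linarith
    have r2 : 99 / 100 ≤ (qv lam (j + 1) s).re := by
      have := (Complex.abs_re_le_norm (qv lam (j + 1) s - 1)).trans (q_near hw')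
      have := (abs_le.1 this).1
      simp at this; linarith
    simp only [Complex.add_re, Complex.re_ofReal_mul]
    nlinarith
  have hA : ‖nn j * qv lam j s - nn (j + 1) * qv lam (j + 1) s‖ ≤ 3 / 2 * kk j := by
    by_contra hcon
    push Not at hcon
    have : 3 / 2 * kk j * ((nn j + nn (j+1)) * (99/100)) < nn (j + 1) ^ 2 - nn j ^ 2 := by
      rw [← hc]
      exact mul_lt_mul hcon hlow2 (by nlinarith) (norm_nonneg _)
    nlinarith
  have e2 : sg lam j s - sg lam (j + 1) s = (nn j * qv lam j s - nn (j + 1) * qv lam (j + 1) s)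
     + (wv lam j s / qv lam j s ^ 2) / 2 - (wv lam (j + 1) s / qv lam (j + 1) s ^ 2) / 2 := by
    rw [e j hw, e (j + 1) hw']; ring
  rw [e2]
  refine (norm_sub_le _ _).trans ?_
  have := norm_add_le (nn j * qv lam j s - nn (j + 1) * qv lam (j + 1) s)
     ((wv lam j s / qv lam j s ^ 2) / 2)
  have x1 : ‖(wv lam j s / qv lam j s ^ 2) / 2‖ ≤ 1 := by
    rw [norm_div]; simp only [Complex.norm_ofNat]; linarith [wq2_le hw]
  have x2 : ‖(wv lam (j + 1) s / qv lam (j + 1) s ^ 2) / 2‖ ≤ 1 := by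
    rw [norm_div]; simp only [Complex.norm_ofNat]; linarith [wq2_le hw']
  linarith

end

open Filter Topology

def tt (β s : ℝ) : ℝ := Real.exp (β / 2 * s)
/-- smooth cutoffs in the variable `t` -/
def cut (β a b s : ℝ) : ℝ := Real.smoothTransition (a * tt β s + b)
def cut1 (β a b s : ℝ) : ℝ := deriv Real.smoothTransition (a * tt β s + b) * (a * (β / 2 * tt β s))
def cut2 (β a b s : ℝ) : ℝ :=
  deriv (deriv Real.smoothTransition) (a * tt β s + b) * (a * (β / 2 * tt β s)) ^ 2 +
   deriv Real.smoothTransition (a * tt β s + b) * (a * (β / 2 * (β / 2 * tt β s)))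

theorem st_cd : ContDiff ℝ 2 Real.smoothTransition := Real.smoothTransition.contDiff
theorem st_cd1 : ContDiff ℝ 1 (deriv Real.smoothTransition) := by
  have := Real.smoothTransition.contDiff (n := 2)
  exact ((contDiff_succ_iff_deriv (n := 1)).1 this).2.2
theorem st_c2 : Continuous (deriv (deriv Real.smoothTransition)) := by
  exact st_cd1.continuous_deriv le_rfl

theorem st_d0 {x : ℝ} (h : x < 0 ∨ 1 < x) : deriv Real.smoothTransition x = 0 := by
  rcases h with h | h
  · have : Real.smoothTransition =ᶠ[𝓝 x] fun _ => 0 := by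
      filter_upwards [Iio_mem_nhds h] with y hy using Real.smoothTransition.zero_of_nonpos (le_of_lt hy)
    rw [this.deriv_eq]; simp
  · have : Real.smoothTransition =ᶠ[𝓝 x] fun _ => 1 := by
      filter_upwards [Ioi_mem_nhds h] with y hy using Real.smoothTransition.one_of_one_le (le_of_lt hy)
    rw [this.deriv_eq]; simp

theorem st_d0' {x : ℝ} (h : x < 0 ∨ 1 < x) : deriv (deriv Real.smoothTransition) x = 0 := by
  have : deriv Real.smoothTransition =ᶠ[𝓝 x] fun _ => 0 := by
    rcases h with h | h
    · filter_upwards [Iio_mem_nhds h] with y hy using st_d0 (Or.inl hy)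
    · filter_upwards [Ioi_mem_nhds h] with y hy using st_d0 (Or.inr hy)
  rw [this.deriv_eq]; simp

theorem bdd_of_supp {g : ℝ → ℝ} (hg : Continuous g) (h0 : ∀ x, x < 0 ∨ 1 < x → g x = 0) :
    ∃ B, 0 < B ∧ ∀ x, |g x| ≤ B := by
  obtain ⟨C, hC⟩ := (isCompact_Icc (a := (0:ℝ)) (b := 1)).exists_bound_of_continuousOn hg.continuousOn
  refine ⟨|C| + 1, by positivity, fun x => ?_⟩
  by_cases hx : x < 0 ∨ 1 < x
  · rw [h0 x hx]; simp; positivity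
  · push Not at hx
    have := hC x ⟨hx.1, hx.2⟩
    rw [Real.norm_eq_abs] at this
    linarith [le_abs_self C]

theorem st_bdd : ∃ B : ℝ, 1 ≤ B ∧ (∀ x, |deriv Real.smoothTransition x| ≤ B) ∧
    ∀ x, |deriv (deriv Real.smoothTransition) x| ≤ B := by
  obtain ⟨B1, h1, h1'⟩ := bdd_of_supp st_cd1.continuous (fun x hx => st_d0 hx)
  obtain ⟨B2, h2, h2'⟩ := bdd_of_supp st_c2 (fun x hx => st_d0' hx)
  exact ⟨B1 + B2 + 1, by linarith, fun x => by linarith [h1' x], fun x => by linarith [h2' x]⟩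

section
variable {β a b s : ℝ}

theorem tt_pos : 0 < tt β s := Real.exp_pos _
theorem tt_deriv : HasDerivAt (tt β) (β / 2 * tt β s) s := by
  have := ((hasDerivAt_id s).const_mul (β / 2)).exp
  refine this.congr_deriv ?_
  simp [tt]; ring
theorem tt_cd {n : WithTop ℕ∞} : ContDiff ℝ n (tt β) := by unfold tt; fun_prop

theorem cut_deriv : HasDerivAt (cut β a b) (cut1 β a b s) s := by
  have h1 : HasDerivAt (fun s => a * tt β s + b) (a * (β / 2 * tt β s)) s :=
    ((tt_deriv).const_mul a).add_const b
  have h2 := (st_cd.differentiable (by norm_num) (a * tt β s + b)).hasDerivAt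
  exact h2.comp s h1
theorem cut1_deriv : HasDerivAt (cut1 β a b) (cut2 β a b s) s := by
  have h1 : HasDerivAt (fun s => a * tt β s + b) (a * (β / 2 * tt β s)) s :=
    ((tt_deriv).const_mul a).add_const b
  have h2 := (st_cd1.differentiable (by norm_num) (a * tt β s + b)).hasDerivAt
  have h3 : HasDerivAt (fun s => a * (β / 2 * tt β s)) (a * (β / 2 * (β / 2 * tt β s))) s :=
    (((tt_deriv).const_mul (β / 2)).const_mul a)
  refine ((h2.comp s h1).mul h3).congr_deriv ?_
  rw [cut2, Function.comp]; ring
theorem cut_cd : ContDiff ℝ 2 (cut β a b) :=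
  st_cd.comp ((contDiff_const.mul tt_cd).add contDiff_const)

theorem cut_nonneg : 0 ≤ cut β a b s := Real.smoothTransition.nonneg _
theorem cut_le : cut β a b s ≤ 1 := Real.smoothTransition.le_one _
theorem cut_zero (h : a * tt β s + b ≤ 0) : cut β a b s = 0 := Real.smoothTransition.zero_of_nonpos h
theorem cut_one (h : 1 ≤ a * tt β s + b) : cut β a b s = 1 := Real.smoothTransition.one_of_one_le h
theorem cut1_zero (h : a * tt β s + b < 0 ∨ 1 < a * tt β s + b) : cut1 β a b s = 0 := by
  rw [cut1, st_d0 h]; simp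
theorem cut2_zero (h : a * tt β s + b < 0 ∨ 1 < a * tt β s + b) : cut2 β a b s = 0 := by
  rw [cut2, st_d0 h, st_d0' h]; simp

theorem cut_bdd {B : ℝ} (hB1 : ∀ x, |deriv Real.smoothTransition x| ≤ B)
    (hB2 : ∀ x, |deriv (deriv Real.smoothTransition) x| ≤ B) (h1 : 1 < β) (h2 : β ≤ 2)
    (ha : |a| ≤ 16) : |cut1 β a b s| ≤ 16 * B * tt β s ∧
      (1 ≤ tt β s → |cut2 β a b s| ≤ 512 * B * tt β s ^ 2) := by
  have ht := tt_pos (β := β) (s := s)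
  have hB : 0 ≤ B := (abs_nonneg _).trans (hB1 0)
  have e : |a * (β / 2 * tt β s)| ≤ 16 * tt β s := by
    rw [abs_mul, abs_of_pos (show 0 < β / 2 * tt β s by positivity)]
    have : β / 2 * tt β s ≤ tt β s := by nlinarith
    exact mul_le_mul ha this (by positivity) (by norm_num)
  have e2 : |a * (β / 2 * (β / 2 * tt β s))| ≤ 16 * tt β s := by
    rw [abs_mul, abs_of_pos (show 0 < β / 2 * (β / 2 * tt β s) by positivity)]
    have h3 : β / 2 * tt β s ≤ tt β s := by nlinarith
    have : β / 2 * (β / 2 * tt β s) ≤ tt β s := by nlinarith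
    exact mul_le_mul ha this (by positivity) (by norm_num)
  refine ⟨?_, fun h => ?_⟩
  · rw [cut1, abs_mul]
    calc _ ≤ B * (16 * tt β s) := mul_le_mul (hB1 _) e (abs_nonneg _) hB
      _ = _ := by ring
  · rw [cut2]
    refine (abs_add_le _ _).trans ?_
    rw [abs_mul, abs_mul, abs_pow]
    have := mul_le_mul (hB2 (a * tt β s + b)) (pow_le_pow_left₀ (abs_nonneg _) e 2) (by positivity) hB
    have := mul_le_mul (hB1 (a * tt β s + b)) e2 (abs_nonneg _) hB
    have : B * tt β s ≤ B * tt β s ^ 2 := by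
      apply mul_le_mul_of_nonneg_left _ hB; nlinarith
    nlinarith
end

/-- the transition function of mode `i` -/
def hc (β : ℝ) (i : ℕ) (s : ℝ) : ℝ := cut β (-8 / 3) (11 / 6 + 8 / 3 * ((i : ℝ) - 1)) s
def hc1 (β : ℝ) (i : ℕ) (s : ℝ) : ℝ := cut1 β (-8 / 3) (11 / 6 + 8 / 3 * ((i : ℝ) - 1)) s
def hc2 (β : ℝ) (i : ℕ) (s : ℝ) : ℝ := cut2 β (-8 / 3) (11 / 6 + 8 / 3 * ((i : ℝ) - 1)) s
def PL (lam : ℂ) (J i : ℕ) (s : ℝ) : ℂ :=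
  if i ≤ J then -(nn i : ℂ) else sg lam (i - 1) s - dv lam (i - 1) s
def dPL (lam : ℂ) (J i : ℕ) (s : ℝ) : ℂ :=
  if i ≤ J then 0 else dsg lam (i - 1) s - ddv lam (i - 1) s
def pR (lam : ℂ) (i : ℕ) (s : ℝ) : ℂ := sg lam i s + dv lam i s
def dpR (lam : ℂ) (i : ℕ) (s : ℝ) : ℂ := dsg lam i s + ddv lam i s
def pp (lam : ℂ) (β : ℝ) (J i : ℕ) (s : ℝ) : ℂ :=
  hc β i s * PL lam J i s + (1 - hc β i s) * pR lam i s
def dpp (lam : ℂ) (β : ℝ) (J i : ℕ) (s : ℝ) : ℂ :=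
  hc1 β i s * (PL lam J i s - pR lam i s) + (hc β i s * dPL lam J i s
    + (1 - hc β i s) * dpR lam i s)
def sc (β : ℝ) (i : ℕ) : ℝ := 2 / β * Real.log i
def AA (lam : ℂ) (β : ℝ) (J : ℕ) : ℕ → ℂ
  | 0 => 0
  | i + 1 => AA lam β J i + ∫ x in (sc β i)..(sc β (i + 1)), pp lam β J (i + 1) x
def SS (lam : ℂ) (β : ℝ) (J i : ℕ) (s : ℝ) : ℂ :=
  AA lam β J i + ∫ x in (sc β i)..s, pp lam β J i x

structure Hy (lam : ℂ) (β : ℝ) (J : ℕ) : Prop where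
  hJ : 300 ≤ J
  h1 : 1 < β
  h2 : β ≤ 2
  hw : ∀ j, J ≤ j + 1 → ∀ s, tt β s ≤ j + 2 → ‖wv lam j s‖ ≤ 1 / 100

section
variable {lam : ℂ} {β : ℝ} {J i j : ℕ} {s : ℝ}

theorem tt_sc (H : Hy lam β J) (hi : 1 ≤ i) : tt β (sc β i) = i := by
  have hb := H.h1
  rw [tt, sc]
  have : β / 2 * (2 / β * Real.log i) = Real.log i := by field_simp
  rw [this, Real.exp_log]
  exact_mod_cast hi

theorem tt_lt_iff (H : Hy lam β J) {x y : ℝ} : tt β x < tt β y ↔ x < y := by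
  have hb := H.h1
  rw [tt, tt, Real.exp_lt_exp, mul_lt_mul_iff_right₀ (by linarith)]

theorem tt_le_iff (H : Hy lam β J) {x y : ℝ} : tt β x ≤ tt β y ↔ x ≤ y := by
  have hb := H.h1
  rw [tt, tt, Real.exp_le_exp, mul_le_mul_iff_right₀ (by linarith)]

theorem PL_deriv (H : Hy lam β J) (hi : J ≤ i) (hs : tt β s < i + 1) :
    HasDerivAt (PL lam J i) (dPL lam J i s) s := by
  unfold PL dPL
  split_ifs with h
  · exact hasDerivAt_const _ _
  · have hw := H.hw (i - 1) (by omega) s (by rw [Nat.cast_sub (by omega)]; push_cast; linarith)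
    exact (sg_deriv hw).sub (dv_deriv hw)

theorem pR_deriv (H : Hy lam β J) (hi : J ≤ i) (hs : tt β s < i + 1) :
    HasDerivAt (pR lam i) (dpR lam i s) s := by
  have hw := H.hw i (by omega) s (by linarith)
  exact (sg_deriv hw).add (dv_deriv hw)

theorem pp_deriv (H : Hy lam β J) (hi : J ≤ i) (hs : tt β s < i + 1) :
    HasDerivAt (pp lam β J i) (dpp lam β J i s) s := by
  have h1 : HasDerivAt (fun s => (hc β i s : ℂ)) (hc1 β i s : ℂ) s := (cut_deriv).ofReal_comp
  have := (h1.mul (PL_deriv H hi hs)).add ((h1.const_sub 1).mul (pR_deriv H hi hs))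
  refine this.congr_deriv ?_
  rw [dpp]; ring

theorem wv_cont : Continuous (wv lam j) := by
  unfold wv; fun_prop

theorem dpp_cont (H : Hy lam β J) (hi : J ≤ i) (hs : tt β s < i + 1) :
    ContinuousAt (dpp lam β J i) s := by
  have c1 : ContinuousAt (fun s => (hc β i s : ℂ)) s :=
    (Complex.continuous_ofReal.comp cut_cd.continuous).continuousAt
  have c2 : ContinuousAt (fun s => (hc1 β i s : ℂ)) s :=
    Complex.continuous_ofReal.continuousAt.comp (cut1_deriv (s := s)).continuousAt
  have q : ∀ j, J ≤ j + 1 → tt β s ≤ j + 2 → ContinuousAt (dsg lam j) s ∧ ContinuousAt (ddv lam j) s := by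
    intro j h1 h2
    have hw := H.hw j h1 s h2
    have hq := q_ne hw
    have a1 := (q_deriv hw).continuousAt
    have a2 := (wv_cont (lam := lam) (j := j)).continuousAt (x := s)
    have a3 := (dv_deriv hw).continuousAt
    unfold dsg ddv
    constructor
    · refine ((ContinuousAt.div (by fun_prop) a1 hq).add (a2.div (by fun_prop) (pow_ne_zero _ hq))).add
        (ContinuousAt.div (by fun_prop) (by fun_prop) (pow_ne_zero _ hq))
    · exact (a3.mul a2).div (by fun_prop) (pow_ne_zero _ hq)
  have c3 := (PL_deriv H hi hs).continuousAt
  have c4 := (pR_deriv H hi hs).continuousAt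
  have c5 : ContinuousAt (dPL lam J i) s := by
    unfold dPL
    split_ifs with h
    · exact continuousAt_const
    · have := q (i - 1) (by omega) (by rw [Nat.cast_sub (by omega)]; push_cast; linarith)
      exact this.1.sub this.2
  have c6 : ContinuousAt (dpR lam i) s := by
    have := q i (by omega) (by linarith)
    exact this.1.add this.2
  unfold dpp
  exact (c2.mul (c3.sub c4)).add ((c1.mul c5).add ((continuousAt_const.sub c1).mul c6))

theorem lt_sc (H : Hy lam β J) (hs : tt β s < i + 1) : s < sc β (i + 1) := by
  rw [← tt_lt_iff H, tt_sc H (by omega)]; push_cast; exact hs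

theorem tt_lt (H : Hy lam β J) (hs : s < sc β (i + 1)) : tt β s < i + 1 := by
  rw [← tt_lt_iff H, tt_sc H (by omega)] at hs; push_cast at hs; exact hs

theorem SS_deriv (H : Hy lam β J) (hi : J ≤ i) (hs : tt β s < i + 1) :
    HasDerivAt (SS lam β J i) (pp lam β J i s) s := by
  have hJ := H.hJ
  have hcont : ContinuousOn (pp lam β J i) (Set.Iio (sc β (i + 1))) := fun x hx =>
    (pp_deriv H hi (tt_lt H hx)).continuousAt.continuousWithinAt
  have hsc : sc β i < sc β (i + 1) := by
    rw [← tt_lt_iff H, tt_sc H (by omega), tt_sc H (by omega)]; push_cast; linarith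
  have h := intervalIntegral.integral_hasDerivAt_right (a := sc β i) (b := s) (f := pp lam β J i)
    ?_ ?_ ?_
  · exact h.const_add _
  · apply ContinuousOn.intervalIntegrable
    apply hcont.mono
    intro x hx
    rcases Set.mem_uIcc.1 hx with h | h
    · exact lt_of_le_of_lt h.2 (lt_sc H hs)
    · exact lt_of_le_of_lt h.2 hsc
  · exact hcont.stronglyMeasurableAtFilter isOpen_Iio s (lt_sc H hs)
  · exact (pp_deriv H hi hs).continuousAt

theorem SS_cd (H : Hy lam β J) (hi : J ≤ i) (hs : tt β s < i + 1) :
    ContDiffAt ℝ 2 (SS lam β J i) s := by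
  have hO : IsOpen (Set.Iio (sc β (i + 1))) := isOpen_Iio
  have h1 : ContDiffOn ℝ (0 + 1) (pp lam β J i) (Set.Iio (sc β (i + 1))) := by
    refine (contDiffOn_succ_iff_deriv_of_isOpen hO).2 ⟨fun x hx => (pp_deriv H hi (tt_lt H hx)).differentiableAt.differentiableWithinAt, by simp, ?_⟩
    rw [contDiffOn_zero]
    have : ContinuousOn (dpp lam β J i) (Set.Iio (sc β (i + 1))) := fun x hx =>
      (dpp_cont H hi (tt_lt H hx)).continuousWithinAt
    exact this.congr fun x hx => (pp_deriv H hi (tt_lt H hx)).deriv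
  rw [zero_add] at h1
  have h2 : ContDiffOn ℝ (1 + 1) (SS lam β J i) (Set.Iio (sc β (i + 1))) := by
    refine (contDiffOn_succ_iff_deriv_of_isOpen hO).2 ⟨fun x hx => (SS_deriv H hi (tt_lt H hx)).differentiableAt.differentiableWithinAt, by simp, ?_⟩
    exact h1.congr fun x hx => (SS_deriv H hi (tt_lt H hx)).deriv
  have : (2 : WithTop ℕ∞) = 1 + 1 := by norm_num
  rw [this]
  exact h2.contDiffAt (Iio_mem_nhds (lt_sc H hs))

theorem SS_match : SS lam β J i (sc β i) = SS lam β J (i + 1) (sc β i) := by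
  rw [SS, SS, AA, intervalIntegral.integral_same, intervalIntegral.integral_symm (sc β i) (sc β (i+1))]
  ring

end

open Filter Topology

structure Good (f f1 f2 : ℝ × ℝ → ℂ) (f11 f22 : ℂ) (p : ℝ × ℝ) : Prop where
  cd : ContDiffAt ℝ 2 f p
  d1 : ∀ᶠ q in 𝓝 p, HasDerivAt (fun s => f (s, q.2)) (f1 q) q.1
  d2 : ∀ᶠ q in 𝓝 p, HasDerivAt (fun s => f (q.1, s)) (f2 q) q.2
  d11 : HasDerivAt (fun s => f1 (s, p.2)) f11 p.1
  d22 : HasDerivAt (fun s => f2 (p.1, s)) f22 p.2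

theorem Good.add {f f1 f2 g g1 g2 : ℝ × ℝ → ℂ} {f11 f22 g11 g22 : ℂ} {p : ℝ × ℝ}
    (hf : Good f f1 f2 f11 f22 p) (hg : Good g g1 g2 g11 g22 p) :
    Good (fun q => f q + g q) (fun q => f1 q + g1 q) (fun q => f2 q + g2 q) (f11 + g11)
      (f22 + g22) p := by
  refine ⟨hf.cd.add hg.cd, ?_, ?_, hf.d11.add hg.d11, hf.d22.add hg.d22⟩
  · filter_upwards [hf.d1, hg.d1] with q h1 h2 using h1.add h2
  · filter_upwards [hf.d2, hg.d2] with q h1 h2 using h1.add h2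

def eps (J i : ℕ) : ℝ := (-1) ^ (i + J)
def ka (J i : ℕ) : ℝ := if i ≤ J then 0 else 2 * kk (i - 1)
def MM (i : ℕ) : ℝ := nn (i - 1) + nn i
def Ph (J i : ℕ) (θ : ℝ) : ℝ := ka J i / MM i * Real.sin (MM i * θ)
def Ph1 (J i : ℕ) (θ : ℝ) : ℝ := ka J i * Real.cos (MM i * θ)
def Ph2 (J i : ℕ) (θ : ℝ) : ℝ := -(ka J i * MM i * Real.sin (MM i * θ))

def ph (lam : ℂ) (β : ℝ) (J i : ℕ) (p : ℝ × ℝ) : ℂ :=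
  -SS lam β J i p.1 + Complex.I * (eps J i * (nn i * p.2 + hc β i p.1 * Ph J i p.2) : ℝ)
def ph1 (lam : ℂ) (β : ℝ) (J i : ℕ) (p : ℝ × ℝ) : ℂ :=
  -pp lam β J i p.1 + Complex.I * (eps J i * (hc1 β i p.1 * Ph J i p.2) : ℝ)
def ph2 (β : ℝ) (J i : ℕ) (p : ℝ × ℝ) : ℂ :=
  Complex.I * (eps J i * (nn i + hc β i p.1 * Ph1 J i p.2) : ℝ)
def ph11 (lam : ℂ) (β : ℝ) (J i : ℕ) (p : ℝ × ℝ) : ℂ :=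
  -dpp lam β J i p.1 + Complex.I * (eps J i * (hc2 β i p.1 * Ph J i p.2) : ℝ)
def ph22 (β : ℝ) (J i : ℕ) (p : ℝ × ℝ) : ℂ :=
  Complex.I * (eps J i * (hc β i p.1 * Ph2 J i p.2) : ℝ)
def EE (lam : ℂ) (β : ℝ) (J i : ℕ) (p : ℝ × ℝ) : ℂ := Complex.exp (ph lam β J i p)

section
variable {lam : ℂ} {β : ℝ} {J i j : ℕ} {s : ℝ}

theorem MM_pos (hi : 1 ≤ i) : 0 < MM i := by
  have : (0 : ℝ) < i := by exact_mod_cast hi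
  simp only [MM, nn]; positivity

theorem Ph_deriv (hi : 1 ≤ i) (θ : ℝ) : HasDerivAt (Ph J i) (Ph1 J i θ) θ := by
  have h := (((hasDerivAt_id θ).const_mul (MM i)).sin).const_mul (ka J i / MM i)
  refine h.congr_deriv ?_
  have := MM_pos hi
  simp only [id, Ph1]; field_simp

theorem Ph1_deriv (θ : ℝ) : HasDerivAt (Ph1 J i) (Ph2 J i θ) θ := by
  have h := (((hasDerivAt_id θ).const_mul (MM i)).cos).const_mul (ka J i)
  refine h.congr_deriv ?_
  simp only [id, Ph2]; ring

theorem term_good (H : Hy lam β J) (hi : J ≤ i) {w w1 w2 : ℝ → ℝ} (hw : ContDiff ℝ 2 w)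
    (hw1 : ∀ s, HasDerivAt w (w1 s) s) (hw2 : ∀ s, HasDerivAt w1 (w2 s) s) {p : ℝ × ℝ}
    (hp : tt β p.1 < i + 1) :
    Good (fun q => w q.1 * EE lam β J i q)
      (fun q => (w1 q.1 + w q.1 * ph1 lam β J i q) * EE lam β J i q)
      (fun q => w q.1 * ph2 β J i q * EE lam β J i q)
      ((w2 p.1 + 2 * w1 p.1 * ph1 lam β J i p +
        w p.1 * (ph11 lam β J i p + ph1 lam β J i p ^ 2)) * EE lam β J i p)
      (w p.1 * (ph22 β J i p + ph2 β J i p ^ 2) * EE lam β J i p) p := by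
  have hJ := H.hJ
  have hi1 : 1 ≤ i := by omega
  have dE1 : ∀ q : ℝ × ℝ, tt β q.1 < i + 1 →
      HasDerivAt (fun s => EE lam β J i (s, q.2)) (EE lam β J i q * ph1 lam β J i q) q.1 := by
    intro q hq
    have h2 : HasDerivAt (fun s => eps J i * (nn i * q.2 + hc β i s * Ph J i q.2))
        (eps J i * (hc1 β i q.1 * Ph J i q.2)) q.1 :=
      ((((cut_deriv).mul_const _).const_add _).const_mul _)
    have h3 := (((SS_deriv H hi hq).neg).add (h2.ofReal_comp.const_mul Complex.I)).cexp
    exact h3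
  have dE2 : ∀ q : ℝ × ℝ,
      HasDerivAt (fun s => EE lam β J i (q.1, s)) (EE lam β J i q * ph2 β J i q) q.2 := by
    intro q
    have h2 : HasDerivAt (fun s => eps J i * (nn i * s + hc β i q.1 * Ph J i s))
        (eps J i * (nn i + hc β i q.1 * Ph1 J i q.2)) q.2 := by
      refine HasDerivAt.const_mul _ (HasDerivAt.add ?_ ((Ph_deriv hi1 _).const_mul _))
      simpa using (hasDerivAt_id q.2).const_mul (nn i)
    have h3 := ((h2.ofReal_comp.const_mul Complex.I).const_add (-SS lam β J i q.1)).cexp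
    exact h3
  have hev : ∀ᶠ q : ℝ × ℝ in 𝓝 p, tt β q.1 < i + 1 :=
    (((tt_cd (n := 2)).continuous.comp continuous_fst).continuousAt).eventually (Iio_mem_nhds hp)
  refine ⟨?_, ?_, ?_, ?_, ?_⟩
  · have a1 : ContDiffAt ℝ 2 (fun q : ℝ × ℝ => (w q.1 : ℂ)) p :=
      (Complex.ofRealCLM.contDiff.comp (hw.comp contDiff_fst)).contDiffAt
    have a2 : ContDiffAt ℝ 2 (fun q : ℝ × ℝ => SS lam β J i q.1) p :=
      ContDiffAt.comp (g := SS lam β J i) (f := Prod.fst) p (SS_cd H hi hp) contDiffAt_fst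
    have a3 : ContDiff ℝ 2 (fun q : ℝ × ℝ => eps J i * (nn i * q.2 + hc β i q.1 * Ph J i q.2)) := by
      have b1 : ContDiff ℝ 2 (fun q : ℝ × ℝ => hc β i q.1) := cut_cd.comp contDiff_fst
      have b2 : ContDiff ℝ 2 (fun q : ℝ × ℝ => Ph J i q.2) := by unfold Ph; fun_prop
      fun_prop
    have a4 := Complex.ofRealCLM.contDiff.comp a3
    exact a1.mul ((a2.neg.add (contDiffAt_const.mul a4.contDiffAt)).cexp)
  · filter_upwards [hev] with q hq
    refine ((hw1 q.1).ofReal_comp.mul (dE1 q hq)).congr_deriv ?_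
    ring
  · filter_upwards with q
    refine ((dE2 q).const_mul _).congr_deriv ?_
    ring
  · have h2 : HasDerivAt (fun s => eps J i * (hc1 β i s * Ph J i p.2))
        (eps J i * (hc2 β i p.1 * Ph J i p.2)) p.1 :=
      (((cut1_deriv).mul_const _).const_mul _)
    have h3 : HasDerivAt (fun s => ph1 lam β J i (s, p.2)) (ph11 lam β J i p) p.1 :=
      ((pp_deriv H hi hp).neg).add (h2.ofReal_comp.const_mul Complex.I)
    refine ((((hw2 p.1).ofReal_comp).add ((hw1 p.1).ofReal_comp.mul h3)).mul (dE1 p hp)).congr_deriv ?_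
    simp only [Prod.mk.eta, Pi.add_apply, Pi.mul_apply]
    ring
  · have h2 : HasDerivAt (fun s => eps J i * (nn i + hc β i p.1 * Ph1 J i s))
        (eps J i * (hc β i p.1 * Ph2 J i p.2)) p.2 :=
      (((Ph1_deriv _).const_mul _).const_add _).const_mul _
    have h3 : HasDerivAt (fun s => ph2 β J i (p.1, s)) (ph22 β J i p) p.2 :=
      (h2.ofReal_comp.const_mul Complex.I)
    refine ((h3.const_mul (w p.1 : ℂ)).mul (dE2 p)).congr_deriv ?_
    simp only [Prod.mk.eta]
    ring
end

open Filter Topology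

section
variable {lam : ℂ} {β : ℝ} {J i j : ℕ} {s : ℝ}

theorem eps_sq : eps J i ^ 2 = 1 := by rw [eps, ← pow_mul, mul_comm, pow_mul]; norm_num
theorem eps_abs : |eps J i| = 1 := by rw [eps, abs_pow]; norm_num

theorem lam_wv (hj : 1 ≤ j) : lam * Complex.exp (2 * s) = (nn j : ℂ) ^ 2 * wv lam j s := by
  have : (nn j : ℂ) ≠ 0 := by
    have : (0:ℝ) < j := by exact_mod_cast hj
    have : nn j ≠ 0 := by simp only [nn]; positivity
    exact_mod_cast this
  rw [wv]; field_simp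

theorem ka_nonneg : 0 ≤ ka J i := by
  have := kk_pos (j := i - 1)
  rw [ka]; split_ifs <;> linarith

theorem kk_mono (i : ℕ) : kk (i - 1) ≤ kk i := by
  have : ((i - 1 : ℕ) : ℝ) ≤ i := by exact_mod_cast Nat.sub_le i 1
  simp only [kk]; linarith

theorem nn_mono (i : ℕ) : nn (i - 1) ≤ nn i := by
  have : ((i - 1 : ℕ) : ℝ) ≤ i := by exact_mod_cast Nat.sub_le i 1
  simp only [nn]; gcongr

theorem ka_le : ka J i ≤ 2 * kk i := by
  have := kk_pos (j := i)
  have := kk_mono i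
  rw [ka]; split_ifs <;> linarith

theorem MM_le : MM i ≤ 2 * nn i := by
  have := nn_mono i
  rw [MM]; linarith

theorem Ph_small (hi : 300 ≤ i) (θ : ℝ) : |Ph J i θ| ≤ 1 / 50 * |Real.sin (MM i * θ)| := by
  have h := MM_pos (i := i) (by omega)
  rw [Ph, abs_mul]
  refine mul_le_mul_of_nonneg_right ?_ (abs_nonneg _)
  rw [abs_of_nonneg (div_nonneg ka_nonneg h.le), div_le_iff₀ h]
  have := ka_le (J := J) (i := i)
  have := kk_le (j := i) (by omega)
  have : 0 ≤ nn (i-1) := by simp only [nn]; positivity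
  rw [MM]; linarith

theorem Ph_le (hi : 300 ≤ i) (θ : ℝ) : |Ph J i θ| ≤ 1 := by
  have := Ph_small (J := J) hi θ
  have := Real.abs_sin_le_one (MM i * θ)
  linarith

theorem Ph1_le (θ : ℝ) : |Ph1 J i θ| ≤ 2 * kk i := by
  rw [Ph1, abs_mul, abs_of_nonneg ka_nonneg]
  have := Real.abs_cos_le_one (MM i * θ)
  have := ka_le (J := J) (i := i)
  have := ka_nonneg (J := J) (i := i)
  nlinarith [abs_nonneg (Real.cos (MM i * θ))]

theorem Ph2_le (hi : 1 ≤ i) (θ : ℝ) : |Ph2 J i θ| ≤ 4 * (nn i * kk i) := by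
  rw [Ph2, abs_neg, abs_mul, abs_mul, abs_of_nonneg ka_nonneg, abs_of_pos (MM_pos hi)]
  have h1 := Real.abs_sin_le_one (MM i * θ)
  have h2 := ka_le (J := J) (i := i)
  have h3 := ka_nonneg (J := J) (i := i)
  have h4 := MM_pos hi
  have h5 := MM_le (i := i)
  have h6 : ka J i * MM i ≤ 2 * kk i * (2 * nn i) := mul_le_mul h2 h5 h4.le (by linarith [kk_pos (j := i)])
  have : ka J i * MM i * |Real.sin (MM i * θ)| ≤ ka J i * MM i := by
    apply mul_le_of_le_one_right (by positivity) h1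
  linarith

theorem cast_pred (hi : 1 ≤ i) : ((i - 1 : ℕ) : ℝ) = i - 1 := by
  rw [Nat.cast_sub hi]; simp

theorem D_le (H : Hy lam β J) (hi : J < i) (hs : tt β s ≤ i + 1) :
    ‖PL lam J i s - pR lam i s‖ ≤ 4 * kk i := by
  have hJ := H.hJ
  have hw1 := H.hw (i - 1) (by omega) s (by rw [cast_pred (by omega)]; linarith)
  have hw2 := H.hw i (by omega) s (by linarith)
  rw [PL, if_neg (by omega), pR]
  have e : sg lam (i - 1) s - dv lam (i - 1) s - (sg lam i s + dv lam i s) =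
    (sg lam (i - 1) s - sg lam i s) - dv lam (i - 1) s - dv lam i s := by ring
  rw [e]
  have h1 : ‖sg lam (i - 1) s - sg lam i s‖ ≤ 2 * kk (i - 1) := by
    have := sg_diff (lam := lam) (j := i - 1) (s := s) hw1 (by rw [Nat.sub_add_cancel (by omega)]; exact hw2) (by omega)
    rwa [Nat.sub_add_cancel (by omega)] at this
  have h2 := dv_le hw1 (by omega)
  have h3 := dv_le hw2 (by omega)
  have n1 := norm_sub_le (sg lam (i - 1) s - sg lam i s - dv lam (i - 1) s) (dv lam i s)
  have n2 := norm_sub_le (sg lam (i - 1) s - sg lam i s) (dv lam (i - 1) s)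
  linarith [kk_mono i]

theorem pR_le (H : Hy lam β J) (hi : J ≤ i) (hs : tt β s ≤ i + 1) : ‖pR lam i s‖ ≤ 3 * nn i := by
  have hJ := H.hJ
  have hw2 := H.hw i (by omega) s (by linarith)
  have h2 := dv_le hw2 (by omega)
  have h3 := sg_le hw2 (by omega)
  rw [pR]
  linarith [norm_add_le (sg lam i s) (dv lam i s), kk_le (j := i) (by omega), nn_big (j := i) (by omega)]

theorem dD_le (H : Hy lam β J) (hi : J < i) (hs : tt β s ≤ i + 1) :
    ‖dPL lam J i s - dpR lam i s‖ ≤ nn i := by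
  have hJ := H.hJ
  have hw1 := H.hw (i - 1) (by omega) s (by rw [cast_pred (by omega)]; linarith)
  have hw2 := H.hw i (by omega) s (by linarith)
  rw [dPL, if_neg (by omega), dpR]
  have n1 := norm_sub_le (dsg lam (i - 1) s - ddv lam (i - 1) s) (dsg lam i s + ddv lam i s)
  have n2 := norm_sub_le (dsg lam (i - 1) s) (ddv lam (i - 1) s)
  have n3 := norm_add_le (dsg lam i s) (ddv lam i s)
  have h2 := dsg_le hw1 (by omega)
  have h3 := dsg_le hw2 (by omega)
  have h4 := ddv_le hw1 (by omega)
  have h5 := ddv_le hw2 (by omega)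
  linarith [kk_mono i, nn_mono i, kk_le (j := i) (by omega), nn_big (j := i) (by omega)]

theorem norm_I_mul (x : ℝ) : ‖Complex.I * (x : ℂ)‖ = |x| := by simp

set_option maxHeartbeats 1600000 in
theorem mono_est {B : ℝ} (hB : 1 ≤ B) (hB1 : ∀ x, |deriv Real.smoothTransition x| ≤ B)
    (hB2 : ∀ x, |deriv (deriv Real.smoothTransition) x| ≤ B)
    (H : Hy lam β J) (hi : J < i) {p : ℝ × ℝ} (hs : tt β p.1 ≤ i) (hs' : (i : ℝ) - 1 ≤ tt β p.1) :
    ‖ph11 lam β J i p + ph1 lam β J i p ^ 2 + (ph22 β J i p + ph2 β J i p ^ 2)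
      + lam * Complex.exp (2 * p.1)‖ ≤ 2000 * B ^ 2 * (nn i * kk i) := by
  have hJ := H.hJ
  set K := kk i with hK
  set n := nn i with hn
  have hK0 : 16 ≤ K := kk_big
  have hn0 : 1000 ≤ n := nn_big (by omega)
  have hKn : K ≤ n / 100 := kk_le (by omega)
  have hi300 : (301 : ℝ) ≤ i := by exact_mod_cast (by omega : 301 ≤ i)
  have htK : tt β p.1 ≤ K / 32 := by rw [hK, kk]; linarith
  have ht1 : 1 ≤ tt β p.1 := by linarith
  have hw2 := H.hw i (by omega) p.1 (by linarith)
  have ha16 : |(-8 / 3 : ℝ)| ≤ 16 := by rw [abs_le]; constructor <;> norm_num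
  have hc1b : |hc1 β i p.1| ≤ B * K := by
    have := (cut_bdd (b := 11 / 6 + 8 / 3 * ((i : ℝ) - 1)) (s := p.1) hB1 hB2 H.h1 H.h2 ha16).1
    rw [hc1]; nlinarith
  have hc2b : |hc2 β i p.1| ≤ B * K ^ 2 := by
    have h := (cut_bdd (b := 11 / 6 + 8 / 3 * ((i : ℝ) - 1)) (s := p.1) hB1 hB2 H.h1 H.h2 ha16).2 ht1
    have : tt β p.1 ^ 2 ≤ (K / 32) ^ 2 := by gcongr
    rw [hc2]; nlinarith
  set D := PL lam J i p.1 - pR lam i p.1 with hD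
  have hDb : ‖D‖ ≤ 4 * K := D_le H hi (by linarith)
  have hdDb := dD_le (s := p.1) H hi (by linarith)
  have hpR := pR_le (s := p.1) H hi.le (by linarith)
  have hV := V0_le hw2 (by omega)
  set h := hc β i p.1 with hh
  have h0 : 0 ≤ h := cut_nonneg
  have h1 : h ≤ 1 := cut_le
  set a := eps J i * (hc1 β i p.1 * Ph J i p.2) with ha
  set b := eps J i * (hc2 β i p.1 * Ph J i p.2) with hb
  set d := h * Ph1 J i p.2 with hd
  set e := eps J i * (h * Ph2 J i p.2) with he
  have hPh := Ph_le (J := J) (i := i) (by omega) p.2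
  have hab : |a| ≤ B * K := by
    rw [ha, abs_mul, abs_mul, eps_abs, one_mul]
    nlinarith [abs_nonneg (Ph J i p.2), abs_nonneg (hc1 β i p.1)]
  have hbb : |b| ≤ B * K ^ 2 := by
    rw [hb, abs_mul, abs_mul, eps_abs, one_mul]
    nlinarith [abs_nonneg (Ph J i p.2), abs_nonneg (hc2 β i p.1)]
  have hdb : |d| ≤ 2 * K := by
    rw [hd, abs_mul, abs_of_nonneg h0]
    nlinarith [abs_nonneg (Ph1 J i p.2), Ph1_le (J := J) (i := i) p.2]
  have heb : |e| ≤ 4 * (n * K) := by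
    rw [he, abs_mul, abs_mul, eps_abs, one_mul, abs_of_nonneg h0]
    nlinarith [abs_nonneg (Ph2 J i p.2), Ph2_le (J := J) (i := i) (by omega) p.2]
  have hep : ((eps J i : ℝ) : ℂ) ^ 2 = 1 := by exact_mod_cast eps_sq
  have key : ph11 lam β J i p + ph1 lam β J i p ^ 2 + (ph22 β J i p + ph2 β J i p ^ 2)
      + lam * Complex.exp (2 * p.1) = V0 lam i p.1 + 2 * pR lam i p.1 * (h * D) + (h * D) ^ 2
      - hc1 β i p.1 * D - h * (dPL lam J i p.1 - dpR lam i p.1)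
      + Complex.I * b - 2 * (Complex.I * a) * (pR lam i p.1 + h * D) - a ^ 2 + Complex.I * e
      - 2 * n * d - d ^ 2 := by
    rw [lam_wv (j := i) (by omega)]
    have e1 : pp lam β J i p.1 = pR lam i p.1 + h * D := by rw [pp, hD]; ring
    have e2 : dpp lam β J i p.1 = hc1 β i p.1 * D + h * (dPL lam J i p.1 - dpR lam i p.1) + dpR lam i p.1 := by
      rw [dpp, hD]; ring
    have e3 : ph2 β J i p = Complex.I * (eps J i * (n + d)) := by
      rw [ph2, hd]; push_cast; rfl
    rw [ph11, ph1, ph22, e1, e2, e3, V0, dpR]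
    simp only [← ha, ← hb, ← he, ← hh, ← hn]
    rw [pR]
    linear_combination (a ^ 2 : ℂ) * Complex.I_sq + (n + d : ℂ) ^ 2 * (eps J i : ℂ) ^ 2 * Complex.I_sq - (n + d : ℂ) ^ 2 * hep
  rw [key]
  clear key
  clear_value a b d e D h K n
  have hhD : ‖(h : ℂ) * D‖ ≤ 4 * K := by
    rw [norm_mul, Complex.norm_real, Real.norm_of_nonneg h0]
    nlinarith [norm_nonneg D]
  have hnK : K ^ 2 ≤ n * K := by nlinarith
  have b1 : ‖2 * pR lam i p.1 * (h * D)‖ ≤ 24 * (n * K) := by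
    rw [norm_mul, norm_mul, Complex.norm_ofNat]
    have := mul_le_mul hpR hhD (norm_nonneg _) (by linarith)
    nlinarith
  have b2 : ‖((h : ℂ) * D) ^ 2‖ ≤ 16 * (n * K) := by
    rw [norm_pow]
    have := pow_le_pow_left₀ (norm_nonneg _) hhD 2
    nlinarith
  have b3 : ‖(hc1 β i p.1 : ℂ) * D‖ ≤ 4 * B * (n * K) := by
    rw [norm_mul, Complex.norm_real, Real.norm_eq_abs]
    have := mul_le_mul hc1b hDb (norm_nonneg _) (by positivity)
    nlinarith
  have b4 : ‖(h : ℂ) * (dPL lam J i p.1 - dpR lam i p.1)‖ ≤ n * K := by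
    rw [norm_mul, Complex.norm_real, Real.norm_of_nonneg h0]
    nlinarith [norm_nonneg (dPL lam J i p.1 - dpR lam i p.1)]
  have b5 : ‖Complex.I * (b : ℂ)‖ ≤ B * (n * K) := by
    rw [norm_I_mul]; nlinarith
  have b6 : ‖2 * (Complex.I * (a : ℂ)) * (pR lam i p.1 + h * D)‖ ≤ 14 * B * (n * K) := by
    rw [norm_mul, norm_mul, norm_I_mul, Complex.norm_ofNat]
    have x1 : ‖pR lam i p.1 + h * D‖ ≤ 7 * n := by
      linarith [norm_add_le (pR lam i p.1) (h * D)]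
    have := mul_le_mul hab x1 (norm_nonneg _) (by positivity)
    nlinarith
  have b7 : ‖(a : ℂ) ^ 2‖ ≤ B ^ 2 * (n * K) := by
    rw [norm_pow, Complex.norm_real, Real.norm_eq_abs]
    have := pow_le_pow_left₀ (abs_nonneg _) hab 2
    nlinarith [sq_nonneg B]
  have b8 : ‖Complex.I * (e : ℂ)‖ ≤ 4 * (n * K) := by
    rw [norm_I_mul]; exact heb
  have b9 : ‖2 * (n : ℂ) * d‖ ≤ 4 * (n * K) := by
    rw [norm_mul, norm_mul, Complex.norm_real, Complex.norm_real, Real.norm_eq_abs, Real.norm_eq_abs,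
      Complex.norm_ofNat, abs_of_pos (by linarith : 0 < n)]
    nlinarith
  have b10 : ‖(d : ℂ) ^ 2‖ ≤ 4 * (n * K) := by
    rw [norm_pow, Complex.norm_real, Real.norm_eq_abs]
    have := pow_le_pow_left₀ (abs_nonneg _) hdb 2
    nlinarith
  have hBB : B ≤ B ^ 2 := by nlinarith
  have hnKp : 0 < n * K := by positivity
  refine (norm_sub_le _ _).trans ?_
  refine (add_le_add ((norm_sub_le _ _).trans (add_le_add ((norm_add_le _ _).trans (add_le_add ((norm_sub_le _ _).trans (add_le_add ((norm_sub_le _ _).trans (add_le_add ((norm_add_le _ _).trans (add_le_add ((norm_sub_le _ _).trans (add_le_add ((norm_sub_le _ _).trans (add_le_add ((norm_add_le _ _).trans (add_le_add ((norm_add_le _ _).trans (add_le_add hV b1)) b2)) b3)) b4)) b5)) b6)) b7)) b8)) b9)) b10).trans ?_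
  have : B * (n * K) ≤ B ^ 2 * (n * K) := by nlinarith
  have : 1 * (n * K) ≤ B ^ 2 * (n * K) := by nlinarith
  nlinarith

theorem mono_grad (H : Hy lam β J) (hi : J ≤ i) (p : ℝ × ℝ) : nn i / 2 ≤ ‖ph2 β J i p‖ := by
  have hJ := H.hJ
  rw [ph2, norm_I_mul, abs_mul, eps_abs, one_mul]
  have h0 : 0 ≤ hc β i p.1 := cut_nonneg
  have h1 : hc β i p.1 ≤ 1 := cut_le
  have h2 := Ph1_le (J := J) (i := i) p.2
  have hdb : |hc β i p.1 * Ph1 J i p.2| ≤ 2 * kk i := by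
    rw [abs_mul, abs_of_nonneg h0]
    nlinarith [abs_nonneg (Ph1 J i p.2)]
  have := kk_le (j := i) (by omega)
  have := nn_big (j := i) (by omega)
  have := (abs_le.1 hdb).1
  refine le_trans ?_ (le_abs_self _)
  linarith
end

open Filter Topology

theorem exp_I_sub (a b : ℝ) : ‖Complex.exp (a * Complex.I) - Complex.exp (b * Complex.I)‖ ≤ |a - b| := by
  have e : Complex.exp (a * Complex.I) - Complex.exp (b * Complex.I) =
    Complex.exp (b * Complex.I) * (Complex.exp (Complex.I * ((a - b : ℝ) : ℂ)) - 1) := by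
    rw [mul_sub, ← Complex.exp_add]; congr 1
    · congr 1; push_cast; ring
    · ring
  rw [e, norm_mul, Complex.norm_exp_ofReal_mul_I, one_mul]
  exact Real.norm_exp_I_mul_ofReal_sub_one_le

theorem norm_one_add_exp (τ y : ℝ) : ‖1 + Complex.exp (y * Complex.I)‖ ≤
    2 * ‖1 + Complex.exp (τ + y * Complex.I)‖ ∧ |Real.exp τ - 1| ≤ ‖1 + Complex.exp (τ + y * Complex.I)‖ := by
  have h2 : |Real.exp τ - 1| ≤ ‖1 + Complex.exp (τ + y * Complex.I)‖ := by
    have h := abs_norm_sub_norm_le (Complex.exp (τ + y * Complex.I)) (-1)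
    rw [norm_neg, norm_one, sub_neg_eq_add, add_comm _ (1:ℂ), Complex.norm_exp] at h
    simpa using h
  refine ⟨?_, h2⟩
  have e : 1 + Complex.exp (y * Complex.I) = (1 + Complex.exp (τ + y * Complex.I)) -
     ((Real.exp τ - 1 : ℝ) : ℂ) * Complex.exp (y * Complex.I) := by
    rw [Complex.exp_add]; push_cast; ring
  rw [e]
  refine (norm_sub_le _ _).trans ?_
  rw [norm_mul, Complex.norm_exp_ofReal_mul_I, mul_one, Complex.norm_real, Real.norm_eq_abs]
  linarith

theorem abs_le_exp_sub {x : ℝ} (hx : |x| ≤ 1) : |x| ≤ 2 * |Real.exp x - 1| := by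
  rcases le_total 0 x with h | h
  · rw [abs_of_nonneg h]
    have := Real.add_one_le_exp x
    linarith [le_abs_self (Real.exp x - 1)]
  · rw [abs_of_nonpos h]
    have h1 := Real.add_one_le_exp (-x)
    have h2 : Real.exp (-x) * Real.exp x = 1 := by rw [← Real.exp_add]; simp
    have h3 := Real.exp_pos x
    have h4 : -x ≤ 1 := by rw [abs_of_nonpos h] at hx; exact hx
    have h5 : Real.exp x * (1 - x) ≤ 1 := by nlinarith
    have : -x / 2 ≤ 1 - Real.exp x := by
      have : Real.exp x ≤ 1 := Real.exp_le_one_iff.2 h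
      nlinarith
    linarith [neg_le_abs (Real.exp x - 1)]

theorem g_aux (τ : ℂ) (α φ : ℝ) (h1 : |τ.im| ≤ |τ.re| / 10) (h2 : |τ.re| ≤ 1)
    (h3 : |φ| ≤ 1 / 50 * |Real.sin α|) :
    ‖1 + Complex.exp (α * Complex.I)‖ ≤ 3 * ‖1 + Complex.exp (τ + ((α + φ : ℝ) : ℂ) * Complex.I)‖ := by
  set y := α + φ + τ.im with hy
  have e : τ + ((α + φ : ℝ) : ℂ) * Complex.I = (τ.re : ℂ) + (y : ℂ) * Complex.I := by
    conv_lhs => rw [← Complex.re_add_im τ]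
    rw [hy]; push_cast; ring
  rw [e]
  obtain ⟨k1, k2⟩ := norm_one_add_exp τ.re y
  have k3 := abs_le_exp_sub h2
  have k4 : |Real.sin α| ≤ ‖1 + Complex.exp (α * Complex.I)‖ := by
    refine le_trans (le_of_eq ?_) (Complex.abs_im_le_norm _)
    rw [Complex.add_im, Complex.exp_ofReal_mul_I_im]; simp
  have k5 := exp_I_sub α y
  have k6 : |α - y| ≤ |φ| + |τ.im| := by
    have : α - y = -(φ + τ.im) := by rw [hy]; ring
    rw [this, abs_neg]; exact abs_add_le _ _
  have k7 := norm_add_le (1 + Complex.exp (y * Complex.I)) (Complex.exp (α * Complex.I) - Complex.exp (y * Complex.I))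
  have k8 : 1 + Complex.exp (y * Complex.I) + (Complex.exp (α * Complex.I) - Complex.exp (y * Complex.I))
    = 1 + Complex.exp (α * Complex.I) := by ring
  rw [k8] at k7
  linarith [norm_nonneg (1 + Complex.exp (τ.re + y * Complex.I))]

theorem g_bound (τ : ℂ) (e α φ : ℝ) (he : e = 1 ∨ e = -1) (h1 : |τ.im| ≤ |τ.re| / 10) (h2 : |τ.re| ≤ 1)
    (h3 : |φ| ≤ 1 / 50 * |Real.sin α|) :
    ‖1 + Complex.exp (α * Complex.I)‖ ≤ 3 * ‖1 + Complex.exp (τ - Complex.I * ((e * (α + φ) : ℝ) : ℂ))‖ := by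
  rcases he with rfl | rfl
  · have hc : ‖1 + Complex.exp (α * Complex.I)‖ = ‖1 + Complex.exp ((-α : ℝ) * Complex.I)‖ := by
      rw [← Complex.norm_conj, map_add, map_one, ← Complex.exp_conj]
      simp
    rw [hc]
    have := g_aux τ (-α) (-φ) h1 h2 (by simpa using h3)
    convert this using 5
    push_cast; ring
  · have := g_aux τ α φ h1 h2 h3
    convert this using 5
    push_cast; ring

/-- elliptic-type estimate near a crossing, in abstract form -/
theorem cross_alg {n k B a b a1 b1 a2 b2 g r : ℝ} {E1 E2 V X p1 p2 : ℂ}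
    (hn : 1000 ≤ n) (hk : 16 ≤ k) (hkn : k ≤ n / 100) (hB : 1 ≤ B)
    (hV : ‖V‖ ≤ 10 * (n * k)) (hX : ‖X‖ ≤ 12 * (n * k) * g) (hg0 : 0 ≤ g) (hg : g ≤ 2) (hp1 : ‖p1‖ ≤ 3 * n) (hp2 : ‖p2‖ ≤ 3 * n)
    (ha0 : 0 ≤ a) (ha : a ≤ 1) (hb0 : 0 ≤ b) (hb : b ≤ 1)
    (ha1 : |a1| ≤ B * k) (hb1 : |b1| ≤ B * k) (ha2 : |a2| ≤ B * k ^ 2) (hb2 : |b2| ≤ B * k ^ 2)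
    (hr : ‖E2‖ = Real.exp r * ‖E1‖)
    (hA : |r| ≤ 1 → a = 1 ∧ b = 1 ∧ a1 = 0 ∧ b1 = 0 ∧ a2 = 0 ∧ b2 = 0 ∧ g * ‖E1‖ ≤ 3 * ‖E1 + E2‖)
    (hB1 : 1 < r → b = 1) (hB2 : r < -1 → a = 1) :
    ‖V * (a * E1 + b * E2) + X * (b * E2) + (a2 - 2 * a1 * p1) * E1 + (b2 - 2 * b1 * p2) * E2‖
      ≤ 200 * B * (n * k) * ‖a * E1 + b * E2‖ := by
  have hnk : 0 < n * k := by positivity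
  have hkk : k ^ 2 ≤ n * k := by nlinarith
  have hBnk : n * k ≤ B * (n * k) := by nlinarith
  by_cases hcase : |r| ≤ 1
  · obtain ⟨rfl, rfl, rfl, rfl, rfl, rfl, hg3⟩ := hA hcase
    have e : V * ((1:ℝ) * E1 + (1:ℝ) * E2) + X * ((1:ℝ) * E2) + ((0:ℝ) - 2 * (0:ℝ) * p1) * E1
       + ((0:ℝ) - 2 * (0:ℝ) * p2) * E2 = V * (E1 + E2) + X * E2 := by push_cast; ring
    rw [e]
    simp only [Complex.ofReal_one, one_mul]
    have hexp : Real.exp r ≤ 3 := by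
      have : Real.exp r ≤ Real.exp 1 := Real.exp_le_exp.2 ((le_abs_self r).trans hcase)
      linarith [Real.exp_one_lt_d9]
    refine (norm_add_le _ _).trans ?_
    rw [norm_mul, norm_mul, hr]
    have q1 : ‖V‖ * ‖E1 + E2‖ ≤ 10 * (n * k) * ‖E1 + E2‖ := mul_le_mul_of_nonneg_right hV (norm_nonneg _)
    have q2 : ‖X‖ * (Real.exp r * ‖E1‖) ≤ 12 * (n * k) * g * (3 * ‖E1‖) :=
      mul_le_mul hX (mul_le_mul_of_nonneg_right hexp (norm_nonneg _)) (by positivity) (by positivity)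
    have q3 : 12 * (n * k) * g * (3 * ‖E1‖) ≤ 36 * (n * k) * (3 * ‖E1 + E2‖) := by
      have := mul_le_mul_of_nonneg_left hg3 (by positivity : 0 ≤ 36 * (n * k))
      linarith
    have q4 : n * k * ‖E1 + E2‖ ≤ B * (n * k) * ‖E1 + E2‖ := mul_le_mul_of_nonneg_right hBnk (norm_nonneg _)
    have q5 : 0 ≤ n * k * ‖E1 + E2‖ := by positivity
    linarith
  · have hsum : ‖E1‖ + ‖E2‖ ≤ 3 * ‖a * E1 + b * E2‖ := by
      have he : 2.7 < Real.exp 1 := by linarith [Real.exp_one_gt_d9]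
      rcases lt_or_ge r 0 with h | h
      · have hr1 : r < -1 := by
          rw [abs_of_neg h] at hcase; linarith
        rw [hB2 hr1]
        have hexp : Real.exp r * 2.7 ≤ 1 := by
          have h1 : Real.exp r * Real.exp 1 ≤ 1 := by
            rw [← Real.exp_add]; exact Real.exp_le_one_iff.2 (by linarith)
          nlinarith [Real.exp_pos r]
        have hE : ‖E2‖ * 2.7 ≤ ‖E1‖ := by rw [hr]; nlinarith [norm_nonneg E1]
        have h2 := norm_sub_norm_le E1 (-(b * E2))
        rw [norm_neg, sub_neg_eq_add, norm_mul, Complex.norm_real, Real.norm_of_nonneg hb0] at h2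
        simp only [Complex.ofReal_one, one_mul]
        nlinarith [norm_nonneg E2]
      · have hr1 : 1 < r := by
          rw [abs_of_nonneg h] at hcase; linarith
        rw [hB1 hr1]
        have hexp : 2.7 ≤ Real.exp r := he.le.trans (Real.exp_le_exp.2 hr1.le)
        have hE : ‖E1‖ * 2.7 ≤ ‖E2‖ := by rw [hr]; nlinarith [norm_nonneg E1]
        have h2 := norm_sub_norm_le E2 (-(a * E1))
        rw [norm_neg, sub_neg_eq_add, norm_mul, Complex.norm_real, Real.norm_of_nonneg ha0, add_comm] at h2
        simp only [Complex.ofReal_one, one_mul]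
        nlinarith [norm_nonneg E1]
    have q1 : ‖V * (a * E1 + b * E2)‖ ≤ 10 * (n * k) * ‖a * E1 + b * E2‖ := by
      rw [norm_mul]; exact mul_le_mul_of_nonneg_right hV (norm_nonneg _)
    have q2 : ‖X * (b * E2)‖ ≤ 24 * (n * k) * ‖E2‖ := by
      rw [norm_mul, norm_mul, Complex.norm_real, Real.norm_of_nonneg hb0]
      have : ‖X‖ ≤ 24 * (n * k) := by nlinarith
      exact mul_le_mul this (mul_le_of_le_one_left (norm_nonneg _) hb) (by positivity) (by positivity)
    have hco : ∀ (x1 x2 : ℝ) (p : ℂ), |x1| ≤ B * k → |x2| ≤ B * k ^ 2 → ‖p‖ ≤ 3 * n →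
        ‖(x2 - 2 * x1 * p : ℂ)‖ ≤ 7 * B * (n * k) := by
      intro x1 x2 p h1 h2 h3
      refine (norm_sub_le _ _).trans ?_
      rw [norm_mul, norm_mul, Complex.norm_real, Complex.norm_real, Complex.norm_ofNat,
        Real.norm_eq_abs, Real.norm_eq_abs]
      have := mul_le_mul h1 h3 (norm_nonneg _) (by positivity)
      have : B * k ^ 2 ≤ B * (n * k) := mul_le_mul_of_nonneg_left hkk (by linarith)
      linarith
    have q3 : ‖(a2 - 2 * a1 * p1) * E1‖ ≤ 7 * B * (n * k) * ‖E1‖ := by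
      rw [norm_mul]; exact mul_le_mul_of_nonneg_right (hco _ _ _ ha1 ha2 hp1) (norm_nonneg _)
    have q4 : ‖(b2 - 2 * b1 * p2) * E2‖ ≤ 7 * B * (n * k) * ‖E2‖ := by
      rw [norm_mul]; exact mul_le_mul_of_nonneg_right (hco _ _ _ hb1 hb2 hp2) (norm_nonneg _)
    have q5 : n * k * ‖a * E1 + b * E2‖ ≤ B * (n * k) * ‖a * E1 + b * E2‖ :=
      mul_le_mul_of_nonneg_right hBnk (norm_nonneg _)
    have q6 : n * k * ‖E2‖ ≤ B * (n * k) * ‖E2‖ := mul_le_mul_of_nonneg_right hBnk (norm_nonneg _)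
    have q7 : B * (n * k) * (‖E1‖ + ‖E2‖) ≤ B * (n * k) * (3 * ‖a * E1 + b * E2‖) :=
      mul_le_mul_of_nonneg_left hsum (by positivity)
    have q8 : 0 ≤ B * (n * k) * ‖E1‖ := by positivity
    refine (norm_add_le _ _).trans ?_
    refine (add_le_add ((norm_add_le _ _).trans (add_le_add ((norm_add_le _ _).trans (add_le_add q1 q2)) q3)) q4).trans ?_
    have q9 : 0 ≤ B * (n * k) * ‖a * E1 + b * E2‖ := by positivity
    linarith

theorem cross_grad {n k a b a1 b1 F r e : ℝ} {E1 E2 p1 p2 : ℂ}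
    (hn : 1000 ≤ n) (hkn : k ≤ n / 100) (he : |e| = 1)
    (hp1 : ‖p1 - n‖ ≤ n / 10) (hp2 : ‖p2 - p1‖ ≤ 2 * k) (hF : n - k ≤ F) (hF' : F ≤ n + 3 * k)
    (ha0 : 0 ≤ a) (ha : a ≤ 1) (hb0 : 0 ≤ b) (hb : b ≤ 1)
    (hr : ‖E2‖ = Real.exp r * ‖E1‖)
    (hA : |r| ≤ 1 → a = 1 ∧ b = 1 ∧ a1 = 0 ∧ b1 = 0)
    (hB1 : 1 < r → b = 1) (hB2 : r < -1 → a = 1) :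
    n / 3 * ‖a * E1 + b * E2‖ ≤ ‖(a1 - a * p1) * E1 + (b1 - b * p2) * E2‖ +
      ‖Complex.I * (e : ℂ) * (n * (a * E1) - F * (b * E2))‖ := by
  have hnorm : ‖Complex.I * (e : ℂ) * (n * (a * E1) - F * (b * E2))‖ = ‖n * (a * E1) - F * (b * E2)‖ := by
    rw [norm_mul, norm_I_mul, he, one_mul]
  rw [hnorm]
  by_cases hcase : |r| ≤ 1
  · obtain ⟨rfl, rfl, rfl, rfl⟩ := hA hcase
    simp only [Complex.ofReal_one, one_mul, Complex.ofReal_zero, zero_sub]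
    by_cases hE : ‖E1 + E2‖ ≤ ‖E2‖
    · have h1 : (n : ℂ) * E1 - F * E2 = n * (E1 + E2) - ((n + F : ℝ) : ℂ) * E2 := by push_cast; ring
      rw [h1]
      have h2 := norm_sub_norm_le (((n + F : ℝ) : ℂ) * E2) (n * (E1 + E2))
      rw [norm_sub_rev, norm_mul, norm_mul, Complex.norm_real, Complex.norm_real,
        Real.norm_of_nonneg (by linarith), Real.norm_of_nonneg (by linarith)] at h2
      have h3 := norm_nonneg (-p1 * E1 + -p2 * E2)
      nlinarith [norm_nonneg (E1 + E2)]
    · push Not at hE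
      have h1 : -p1 * E1 + -p2 * E2 = -((n * (E1 + E2)) + (p1 - n) * (E1 + E2) + (p2 - p1) * E2) := by ring
      rw [h1, norm_neg]
      have h2 := norm_sub_norm_le ((n : ℂ) * (E1 + E2)) (-((p1 - n) * (E1 + E2) + (p2 - p1) * E2))
      rw [norm_neg, sub_neg_eq_add, ← add_assoc] at h2
      have h3 := norm_add_le ((p1 - n) * (E1 + E2)) ((p2 - p1) * E2)
      rw [norm_mul, norm_mul] at h3
      rw [norm_mul, Complex.norm_real, Real.norm_of_nonneg (by linarith)] at h2
      have h4 : ‖p1 - n‖ * ‖E1 + E2‖ ≤ n / 10 * ‖E1 + E2‖ := mul_le_mul_of_nonneg_right hp1 (norm_nonneg _)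
      have h5 : ‖p2 - p1‖ * ‖E2‖ ≤ n / 50 * ‖E1 + E2‖ :=
        mul_le_mul (by linarith) hE.le (norm_nonneg _) (by linarith)
      have h6 := norm_nonneg (n * E1 - F * E2)
      have h7 : 0 ≤ n * ‖E1 + E2‖ := by positivity
      linarith
  · have he : 2.7 < Real.exp 1 := by linarith [Real.exp_one_gt_d9]
    have h0 := norm_nonneg ((a1 - a * p1) * E1 + (b1 - b * p2) * E2)
    have hadd := norm_add_le (a * E1) (b * E2)
    rcases lt_or_ge r 0 with h | h
    · have hr1 : r < -1 := by
        rw [abs_of_neg h] at hcase; linarith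
      have ha1 := hB2 hr1
      have hexp : Real.exp r * 2.7 ≤ 1 := by
        have h1 : Real.exp r * Real.exp 1 ≤ 1 := by
          rw [← Real.exp_add]; exact Real.exp_le_one_iff.2 (by linarith)
        nlinarith [Real.exp_pos r]
      have hE : ‖b * E2‖ * 2.7 ≤ ‖a * E1‖ := by
        rw [norm_mul, norm_mul, Complex.norm_real, Complex.norm_real, Real.norm_of_nonneg hb0, ha1, norm_one, one_mul]
        have : ‖E2‖ * 2.7 ≤ ‖E1‖ := by rw [hr]; nlinarith [norm_nonneg E1]
        nlinarith [norm_nonneg E2]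
      have h2 := norm_sub_norm_le (n * (a * E1)) (F * (b * E2))
      rw [norm_mul, norm_mul (F : ℂ), Complex.norm_real, Complex.norm_real,
        Real.norm_of_nonneg (by linarith), Real.norm_of_nonneg (by linarith)] at h2
      have : F * ‖b * E2‖ ≤ (n * 1.03) * ‖b * E2‖ := mul_le_mul_of_nonneg_right (by linarith) (norm_nonneg _)
      have : n * (‖b * E2‖ * 2.7) ≤ n * ‖a * E1‖ := mul_le_mul_of_nonneg_left hE (by linarith)
      have : n / 3 * ‖a * E1 + b * E2‖ ≤ n / 3 * (‖a * E1‖ + ‖b * E2‖) := mul_le_mul_of_nonneg_left hadd (by linarith)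
      have : 0 ≤ n * ‖b * E2‖ := by positivity
      linarith
    · have hr1 : 1 < r := by
        rw [abs_of_nonneg h] at hcase; linarith
      have hb1 := hB1 hr1
      have hexp : 2.7 ≤ Real.exp r := he.le.trans (Real.exp_le_exp.2 hr1.le)
      have hE : ‖a * E1‖ * 2.7 ≤ ‖b * E2‖ := by
        rw [norm_mul, norm_mul, Complex.norm_real, Complex.norm_real, Real.norm_of_nonneg ha0, hb1, norm_one, one_mul]
        have : ‖E1‖ * 2.7 ≤ ‖E2‖ := by rw [hr]; nlinarith [norm_nonneg E1]
        nlinarith [norm_nonneg E1]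
      have h2 := norm_sub_norm_le (F * (b * E2)) (n * (a * E1))
      rw [norm_sub_rev, norm_mul (F : ℂ), norm_mul (n : ℂ), Complex.norm_real, Complex.norm_real,
        Real.norm_of_nonneg (by linarith), Real.norm_of_nonneg (by linarith)] at h2
      have : (n * 0.99) * ‖b * E2‖ ≤ F * ‖b * E2‖ := mul_le_mul_of_nonneg_right (by linarith) (norm_nonneg _)
      have : n * (‖a * E1‖ * 2.7) ≤ n * ‖b * E2‖ := mul_le_mul_of_nonneg_left hE (by linarith)
      have : n / 3 * ‖a * E1 + b * E2‖ ≤ n / 3 * (‖a * E1‖ + ‖b * E2‖) := mul_le_mul_of_nonneg_left hadd (by linarith)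
      have : 0 ≤ n * ‖a * E1‖ := by positivity
      linarith

open Filter Topology

section
variable {lam : ℂ} {β : ℝ} {J i j : ℕ} {s : ℝ}

def fl (β : ℝ) (j : ℕ) (s : ℝ) : ℝ := cut β (-16) (3 + 16 * (j : ℝ)) s
def fl1 (β : ℝ) (j : ℕ) (s : ℝ) : ℝ := cut1 β (-16) (3 + 16 * (j : ℝ)) s
def fl2 (β : ℝ) (j : ℕ) (s : ℝ) : ℝ := cut2 β (-16) (3 + 16 * (j : ℝ)) s
def rs (β : ℝ) (j : ℕ) (s : ℝ) : ℝ := cut β 16 (3 - 16 * (j : ℝ)) s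
def rs1 (β : ℝ) (j : ℕ) (s : ℝ) : ℝ := cut1 β 16 (3 - 16 * (j : ℝ)) s
def rs2 (β : ℝ) (j : ℕ) (s : ℝ) : ℝ := cut2 β 16 (3 - 16 * (j : ℝ)) s

theorem hc_zero (h : (j : ℝ) - 5 / 16 < tt β s) : hc β j s = 0 ∧ hc1 β j s = 0 ∧ hc2 β j s = 0 :=
  ⟨cut_zero (by linarith), cut1_zero (Or.inl (by linarith)), cut2_zero (Or.inl (by linarith))⟩

theorem hc_one (h : tt β s < j + 5 / 16) : hc β (j + 1) s = 1 ∧ hc1 β (j + 1) s = 0 ∧ hc2 β (j + 1) s = 0 :=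
  ⟨cut_one (by push_cast; linarith), cut1_zero (Or.inr (by push_cast; linarith)),
    cut2_zero (Or.inr (by push_cast; linarith))⟩

theorem pp_left (h : (j : ℝ) - 5 / 16 < tt β s) : pp lam β J j s = sg lam j s + dv lam j s ∧
    dpp lam β J j s = dsg lam j s + ddv lam j s := by
  obtain ⟨h0, h1, -⟩ := hc_zero h
  rw [pp, dpp, h0, h1, pR, dpR]; simp

theorem pp_right (hj : J ≤ j) (h : tt β s < j + 5 / 16) : pp lam β J (j + 1) s = sg lam j s - dv lam j s ∧
    dpp lam β J (j + 1) s = dsg lam j s - ddv lam j s := by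
  obtain ⟨h0, h1, -⟩ := hc_one h
  rw [pp, dpp, h0, h1, PL, dPL, if_neg (by omega), if_neg (by omega)]; simp

theorem tau_est (H : Hy lam β J) (hj : J ≤ j) (hx : |tt β s - j| < 5 / 16) :
    ‖(SS lam β J j s - SS lam β J (j + 1) s) - kk j * ((s - sc β j : ℝ) : ℂ)‖
      ≤ kk j / 25 * |s - sc β j| := by
  have hJ := H.hJ
  set T : Set ℝ := {s | tt β s ∈ Set.Ioo ((j : ℝ) - 5 / 16) (j + 5 / 16)} with hT
  have hmono : Monotone (tt β) := fun x y hxy => (tt_le_iff H).2 hxy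
  have hconv : Convex ℝ T := (Set.ordConnected_Ioo.preimage_mono hmono).convex
  have hd : ∀ x ∈ T, HasDerivWithinAt (fun s => (SS lam β J j s - SS lam β J (j + 1) s) - kk j * ((s - sc β j : ℝ) : ℂ))
      (2 * dv lam j x - kk j) T x := by
    intro x hx
    have h1 := SS_deriv (i := j) (s := x) H hj (by linarith [hx.2])
    have h2 := SS_deriv (i := j + 1) (s := x) H (by omega) (by push_cast; linarith [hx.2])
    rw [(pp_left hx.1).1] at h1
    rw [(pp_right hj hx.2).1] at h2
    have h3 : HasDerivAt (fun s : ℝ => ((s - sc β j : ℝ) : ℂ)) 1 x := by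
      have := ((hasDerivAt_id x).sub_const (sc β j)).ofReal_comp
      simpa using this
    refine (((h1.sub h2).sub (h3.const_mul (kk j : ℂ))).congr_deriv ?_).hasDerivWithinAt
    ring
  have hbd : ∀ x ∈ T, ‖2 * dv lam j x - kk j‖ ≤ kk j / 25 := by
    intro x hx
    have hw := H.hw j (by omega) x (by linarith [hx.2])
    have := dv_near hw (by omega)
    have e : 2 * dv lam j x - kk j = 2 * (dv lam j x - kk j / 2) := by ring
    rw [e, norm_mul, Complex.norm_ofNat]; linarith
  have hs : s ∈ T := by
    have := abs_lt.1 hx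
    exact ⟨by linarith, by linarith⟩
  have hsc : sc β j ∈ T := by
    rw [hT, Set.mem_ofPred_eq, tt_sc H (by omega)]
    exact ⟨by linarith, by linarith⟩
  have := hconv.norm_image_sub_le_of_norm_hasDerivWithin_le hd hbd hsc hs
  simpa [SS_match, Real.norm_eq_abs] using this

theorem y_big (H : Hy lam β J) (hj : J ≤ j) (hx : |tt β s - j| < 5 / 16) (hx' : 1 / 8 ≤ |tt β s - j|) :
    3 ≤ kk j * |s - sc β j| := by
  have hJ := H.hJ
  have hb := H.h1
  have hb2 := H.h2
  have hj0 : (300 : ℝ) ≤ j := by exact_mod_cast (by omega : 300 ≤ j)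
  have ht := tt_pos (β := β) (s := s)
  have hy : s - sc β j = 2 / β * Real.log (tt β s / j) := by
    rw [Real.log_div ht.ne' (by linarith), tt, Real.log_exp, sc]; field_simp
  have h2b : 1 ≤ 2 / β := by rw [le_div_iff₀ (by linarith)]; linarith
  rw [hy, abs_mul, abs_of_pos (by positivity : 0 < 2 / β)]
  have key : 1 / (8 * j + 1) ≤ |Real.log (tt β s / j)| := by
    rcases le_total 0 (tt β s - j) with h | h
    · rw [abs_of_nonneg h] at hx hx'
      refine le_trans ?_ (le_abs_self _)
      have h1 := Real.one_sub_inv_le_log_of_pos (div_pos ht (by linarith : (0:ℝ) < j))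
      refine le_trans ?_ h1
      rw [inv_div, one_sub_div ht.ne', div_le_div_iff₀ (by linarith) ht]
      nlinarith
    · rw [abs_of_nonpos h] at hx hx'
      refine le_trans ?_ (neg_le_abs _)
      have h1 := Real.log_le_sub_one_of_pos (div_pos ht (by linarith : (0:ℝ) < j))
      have h2 : 1 / (8 * j + 1) ≤ 1 - tt β s / j := by
        rw [one_sub_div (by linarith), div_le_div_iff₀ (by linarith) (by linarith)]
        nlinarith
      linarith
  have h3 : 3 ≤ kk j * (1 / (8 * j + 1)) := by
    rw [kk, mul_one_div, le_div_iff₀ (by linarith)]; linarith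
  have hk := kk_pos (j := j)
  have h4 : |Real.log (tt β s / j)| ≤ 2 / β * |Real.log (tt β s / j)| := by
    nlinarith [abs_nonneg (Real.log (tt β s / j))]
  exact h3.trans (mul_le_mul_of_nonneg_left (key.trans h4) hk.le)

def tau (lam : ℂ) (β : ℝ) (J j : ℕ) (s : ℝ) : ℂ := SS lam β J j s - SS lam β J (j + 1) s

theorem tau_facts (H : Hy lam β J) (hj : J ≤ j) (hx : |tt β s - j| < 5 / 16) :
    |(tau lam β J j s).im| ≤ |(tau lam β J j s).re| / 10 ∧
    (|(tau lam β J j s).re| ≤ 1 → |tt β s - j| < 1 / 8) ∧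
    (0 < (tau lam β J j s).re → (j : ℝ) < tt β s) ∧
    ((tau lam β J j s).re < 0 → tt β s < j) ∧
    ((j : ℝ) ≤ tt β s → 0 ≤ (tau lam β J j s).re) ∧
    (tt β s ≤ j → (tau lam β J j s).re ≤ 0) := by
  have hJ := H.hJ
  have h := tau_est H hj hx
  rw [← tau] at h
  set τ := tau lam β J j s
  set y := s - sc β j with hy
  have hk := kk_pos (j := j)
  have h1 := (Complex.abs_re_le_norm _).trans h
  have h2 := (Complex.abs_im_le_norm _).trans h
  simp only [Complex.sub_re, Complex.sub_im, Complex.re_ofReal_mul, Complex.im_ofReal_mul,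
    Complex.ofReal_re, Complex.ofReal_im, mul_zero, sub_zero] at h1 h2
  have hky : |kk j * y| = kk j * |y| := by rw [abs_mul, abs_of_pos hk]
  have h3 : 24 / 25 * (kk j * |y|) ≤ |τ.re| := by
    have := abs_sub_abs_le_abs_sub (kk j * y) τ.re
    rw [abs_sub_comm, hky] at this
    linarith
  have hyt : 0 < y ↔ (j : ℝ) < tt β s := by
    rw [hy, sub_pos, ← tt_lt_iff H, tt_sc H (by omega)]
  have hyt' : y < 0 ↔ tt β s < j := by
    rw [hy, sub_neg, ← tt_lt_iff H, tt_sc H (by omega)]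
  have hpos : 0 ≤ y → 0 ≤ τ.re := by
    intro h0
    rw [abs_of_nonneg h0] at h1
    have := (abs_le.1 h1).1
    nlinarith
  have hneg : y ≤ 0 → τ.re ≤ 0 := by
    intro h0
    rw [abs_of_nonpos h0] at h1
    have := (abs_le.1 h1).2
    nlinarith
  have h00 : 0 ≤ kk j * |y| := by positivity
  refine ⟨by linarith, ?_, ?_, ?_, ?_, ?_⟩
  · intro h4
    by_contra h5
    push Not at h5
    have := y_big H hj hx h5
    rw [← hy] at this
    linarith
  · intro h4
    rw [← hyt]
    by_contra h5
    linarith [hneg (not_lt.1 h5)]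
  · intro h4
    rw [← hyt']
    by_contra h5
    linarith [hpos (not_lt.1 h5)]
  · intro h4
    apply hpos
    by_contra h5
    linarith [hyt'.1 (not_le.1 h5)]
  · intro h4
    apply hneg
    by_contra h5
    linarith [hyt.1 (not_le.1 h5)]

theorem EE_norm (p : ℝ × ℝ) : ‖EE lam β J i p‖ = Real.exp (-(SS lam β J i p.1).re) := by
  rw [EE, Complex.norm_exp, ph]; simp

theorem EE_ratio_norm (p : ℝ × ℝ) :
    ‖EE lam β J (j + 1) p‖ = Real.exp (tau lam β J j p.1).re * ‖EE lam β J j p‖ := by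
  rw [EE_norm, EE_norm, ← Real.exp_add, tau]; congr 1; simp; ring

theorem eps_succ : eps J (j + 1) = -eps J j := by
  rw [eps, eps, show j + 1 + J = j + J + 1 by ring, pow_succ]; ring

theorem EE_ratio (p : ℝ × ℝ) (h0 : hc β j p.1 = 0) (h1 : hc β (j + 1) p.1 = 1) :
    EE lam β J (j + 1) p = EE lam β J j p * Complex.exp (tau lam β J j p.1 -
      Complex.I * ((eps J j * (MM (j + 1) * p.2 + Ph J (j + 1) p.2) : ℝ) : ℂ)) := by
  rw [EE, EE, ← Complex.exp_add, ph, ph, tau, h0, h1, eps_succ, MM]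
  congr 1
  simp only [Nat.add_sub_cancel]
  push_cast
  ring

theorem eps_cases : eps J j = 1 ∨ eps J j = -1 := neg_one_pow_eq_or ℝ _

theorem E_sum_bound (H : Hy lam β J) (hj : J ≤ j) (p : ℝ × ℝ) (hx : |tt β p.1 - j| < 5 / 16)
    (hr : |(tau lam β J j p.1).re| ≤ 1) :
    ‖1 + Complex.exp ((MM (j + 1) * p.2 : ℝ) * Complex.I)‖ * ‖EE lam β J j p‖ ≤
      3 * ‖EE lam β J j p + EE lam β J (j + 1) p‖ := by
  have hJ := H.hJ
  have hx' := abs_lt.1 hx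
  rw [EE_ratio p (hc_zero (by linarith)).1 (hc_one (by linarith)).1]
  have e : ∀ z w : ℂ, z + z * w = (1 + w) * z := fun z w => by ring
  rw [e, norm_mul, ← mul_assoc]
  refine mul_le_mul_of_nonneg_right ?_ (norm_nonneg _)
  exact g_bound _ _ _ _ eps_cases (tau_facts H hj hx).1 hr (Ph_small (by omega) _)
end

open Filter Topology

section
variable {lam : ℂ} {β : ℝ} {J i j : ℕ} {s : ℝ}

theorem X_bound (hj : 299 ≤ j) (θ e : ℝ) (he : |e| = 1) :
    ‖(((nn j - kk j) ^ 2 - (nn j + kk j + 2 * kk j * Real.cos θ) ^ 2 : ℝ) : ℂ)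
      + Complex.I * ((e * (-(2 * kk j * (2 * nn j + kk j) * Real.sin θ)) : ℝ) : ℂ)‖ ≤
      12 * (nn j * kk j) * ‖1 + Complex.exp (θ * Complex.I)‖ := by
  have hn := nn_big hj
  have hk := kk_big (j := j)
  have hkn := kk_le hj
  set n := nn j
  set k := kk j
  set g := ‖1 + Complex.exp (θ * Complex.I)‖ with hg
  have k4 : |Real.sin θ| ≤ g := by
    refine le_trans (le_of_eq ?_) (Complex.abs_im_le_norm _)
    rw [Complex.add_im, Complex.exp_ofReal_mul_I_im]; simp
  have k5 : |1 + Real.cos θ| ≤ g := by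
    refine le_trans (le_of_eq ?_) (Complex.abs_re_le_norm _)
    rw [Complex.add_re, Complex.exp_ofReal_mul_I_re]; simp
  refine (norm_add_le _ _).trans ?_
  rw [norm_I_mul, Complex.norm_real, Real.norm_eq_abs, abs_mul e, he, one_mul, abs_neg]
  have c := Real.abs_cos_le_one θ
  have h1 : |(n - k) ^ 2 - (n + k + 2 * k * Real.cos θ) ^ 2| ≤ 6 * (n * k) * g := by
    have e : (n - k) ^ 2 - (n + k + 2 * k * Real.cos θ) ^ 2 =
      -((2 * k * (2 * n + 2 * k * Real.cos θ)) * (1 + Real.cos θ)) := by ring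
    rw [e, abs_neg, abs_mul]
    refine mul_le_mul ?_ k5 (abs_nonneg _) (by positivity)
    have := abs_le.1 c
    rw [abs_of_nonneg (by apply mul_nonneg; linarith; nlinarith)]
    have : k * Real.cos θ ≤ k := by nlinarith
    have : k * (k * Real.cos θ) ≤ n / 2 * k := by nlinarith
    linarith
  have h2 : |2 * k * (2 * n + k) * Real.sin θ| ≤ 6 * (n * k) * g := by
    rw [abs_mul]
    refine mul_le_mul ?_ k4 (abs_nonneg _) (by positivity)
    rw [abs_of_nonneg (by positivity)]
    nlinarith
  linarith

theorem pp1_near (H : Hy lam β J) (hj : J ≤ j) (ht : tt β s ≤ j + 1) :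
    ‖sg lam j s + dv lam j s - nn j‖ ≤ nn j / 10 ∧ ‖sg lam j s - dv lam j s - nn j‖ ≤ nn j / 10 := by
  have hJ := H.hJ
  have hw := H.hw j (by omega) s (by linarith)
  have h1 := sg_near hw (by omega)
  have h2 := dv_le hw (by omega)
  have h3 := kk_le (j := j) (by omega)
  have h4 := nn_big (j := j) (by omega)
  have e1 : sg lam j s + dv lam j s - nn j = (sg lam j s - nn j) + dv lam j s := by ring
  have e2 : sg lam j s - dv lam j s - nn j = (sg lam j s - nn j) - dv lam j s := by ring
  rw [e1, e2]
  exact ⟨by linarith [norm_add_le (sg lam j s - nn j) (dv lam j s)],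
    by linarith [norm_sub_le (sg lam j s - nn j) (dv lam j s)]⟩

theorem R1_weights (hx : |tt β s - j| < 1 / 8) : fl β j s = 1 ∧ rs β j s = 1 ∧ fl1 β j s = 0 ∧
    rs1 β j s = 0 ∧ fl2 β j s = 0 ∧ rs2 β j s = 0 := by
  have := abs_lt.1 hx
  exact ⟨cut_one (by linarith), cut_one (by linarith), cut1_zero (Or.inr (by linarith)),
    cut1_zero (Or.inr (by linarith)), cut2_zero (Or.inr (by linarith)), cut2_zero (Or.inr (by linarith))⟩

theorem R1_phases (hj : J ≤ j) {p : ℝ × ℝ} (hx : |tt β p.1 - j| < 5 / 16) :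
    ph1 lam β J j p = -(sg lam j p.1 + dv lam j p.1) ∧
    ph11 lam β J j p = -(dsg lam j p.1 + ddv lam j p.1) ∧
    ph2 β J j p = Complex.I * (eps J j : ℂ) * nn j ∧
    ph22 β J j p = 0 ∧
    ph1 lam β J (j + 1) p = -(sg lam j p.1 - dv lam j p.1) ∧
    ph11 lam β J (j + 1) p = -(dsg lam j p.1 - ddv lam j p.1) ∧
    ph2 β J (j + 1) p = -(Complex.I * (eps J j : ℂ) * ((nn j + kk j + 2 * kk j * Real.cos (MM (j + 1) * p.2) : ℝ) : ℂ)) ∧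
    ph22 β J (j + 1) p = Complex.I * ((eps J (j + 1) * (-(2 * kk j * (2 * nn j + kk j) * Real.sin (MM (j + 1) * p.2))) : ℝ) : ℂ) := by
  have hx' := abs_lt.1 hx
  obtain ⟨a0, a1, a2⟩ := hc_zero (β := β) (j := j) (s := p.1) (by linarith)
  obtain ⟨b0, b1, b2⟩ := hc_one (β := β) (j := j) (s := p.1) (by linarith)
  obtain ⟨c0, c1⟩ := pp_left (lam := lam) (J := J) (β := β) (j := j) (s := p.1) (by linarith)
  obtain ⟨d0, d1⟩ := pp_right (lam := lam) (β := β) (s := p.1) hj (by linarith)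
  have hka : ka J (j + 1) = 2 * kk j := by rw [ka, if_neg (by omega)]; simp
  refine ⟨?_, ?_, ?_, ?_, ?_, ?_, ?_, ?_⟩
  · rw [ph1, c0, a1]; simp
  · rw [ph11, c1, a2]; simp
  · rw [ph2, a0]; push_cast; ring
  · rw [ph22, a0]; simp
  · rw [ph1, d0, b1]; simp
  · rw [ph11, d1, b2]; simp
  · rw [ph2, b0, Ph1, hka, nn_succ, eps_succ]; push_cast; ring
  · have hM : MM (j + 1) = 2 * nn j + kk j := by rw [MM, nn_succ]; simp; ring
    rw [ph22, b0, Ph2, hka]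
    rw [← hM]; push_cast; ring

set_option maxHeartbeats 1000000 in
theorem R1_est {B : ℝ} (hB : 1 ≤ B) (hB1 : ∀ x, |deriv Real.smoothTransition x| ≤ B)
    (hB2 : ∀ x, |deriv (deriv Real.smoothTransition) x| ≤ B)
    (H : Hy lam β J) (hj : J ≤ j) {p : ℝ × ℝ} (hx : |tt β p.1 - j| < 5 / 16) :
    ‖((fl2 β j p.1 + 2 * fl1 β j p.1 * ph1 lam β J j p +
        fl β j p.1 * (ph11 lam β J j p + ph1 lam β J j p ^ 2)) * EE lam β J j p +
      (rs2 β j p.1 + 2 * rs1 β j p.1 * ph1 lam β J (j + 1) p +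
        rs β j p.1 * (ph11 lam β J (j + 1) p + ph1 lam β J (j + 1) p ^ 2)) * EE lam β J (j + 1) p) +
      (fl β j p.1 * (ph22 β J j p + ph2 β J j p ^ 2) * EE lam β J j p +
       rs β j p.1 * (ph22 β J (j + 1) p + ph2 β J (j + 1) p ^ 2) * EE lam β J (j + 1) p) +
      lam * Complex.exp (2 * p.1) * (fl β j p.1 * EE lam β J j p + rs β j p.1 * EE lam β J (j + 1) p)‖
    ≤ 200 * B * (nn j * kk j) * ‖fl β j p.1 * EE lam β J j p + rs β j p.1 * EE lam β J (j + 1) p‖ ∧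
    nn j / 3 * ‖fl β j p.1 * EE lam β J j p + rs β j p.1 * EE lam β J (j + 1) p‖ ≤
      ‖(fl1 β j p.1 + fl β j p.1 * ph1 lam β J j p) * EE lam β J j p +
        (rs1 β j p.1 + rs β j p.1 * ph1 lam β J (j + 1) p) * EE lam β J (j + 1) p‖ +
      ‖fl β j p.1 * ph2 β J j p * EE lam β J j p + rs β j p.1 * ph2 β J (j + 1) p * EE lam β J (j + 1) p‖ := by
  have hJ := H.hJ
  have hx' := abs_lt.1 hx
  have hj0 : (300 : ℝ) ≤ j := by exact_mod_cast (by omega : 300 ≤ j)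
  obtain ⟨g1, g2, g3, g4, g5, g6, g7, g8⟩ := R1_phases (lam := lam) hj hx
  obtain ⟨t1, t2, t3, t4, -, -⟩ := tau_facts H hj hx
  have hw := H.hw j (by omega) p.1 (by linarith)
  have hn := nn_big (j := j) (by omega)
  have hk := kk_big (j := j)
  have hkn := kk_le (j := j) (by omega)
  obtain ⟨pn1, pn2⟩ := pp1_near (s := p.1) H hj (by linarith)
  have htK : tt β p.1 ≤ kk j / 30 := by rw [kk]; linarith
  have ht1 : 1 ≤ tt β p.1 := by linarith
  have cb : ∀ a b : ℝ, |a| ≤ 16 → |cut1 β a b p.1| ≤ B * kk j ∧ |cut2 β a b p.1| ≤ B * kk j ^ 2 := by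
    intro a b ha
    have h := cut_bdd (b := b) (s := p.1) hB1 hB2 H.h1 H.h2 ha
    have : tt β p.1 ^ 2 ≤ (kk j / 30) ^ 2 := by gcongr
    refine ⟨h.1.trans ?_, (h.2 ht1).trans ?_⟩
    · nlinarith
    · nlinarith
  have hfl := cb (-16) (3 + 16 * (j : ℝ)) (by norm_num)
  have hrs := cb 16 (3 - 16 * (j : ℝ)) (by norm_num)
  have hA : |(tau lam β J j p.1).re| ≤ 1 → fl β j p.1 = 1 ∧ rs β j p.1 = 1 ∧ fl1 β j p.1 = 0 ∧
    rs1 β j p.1 = 0 ∧ fl2 β j p.1 = 0 ∧ rs2 β j p.1 = 0 := fun h => R1_weights (t2 h)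
  have hBr : 1 < (tau lam β J j p.1).re → rs β j p.1 = 1 := fun h =>
    cut_one (by linarith [t3 (by linarith)])
  have hBl : (tau lam β J j p.1).re < -1 → fl β j p.1 = 1 := fun h =>
    cut_one (by linarith [t4 (by linarith)])
  have norm_p : ∀ z : ℂ, ‖z - nn j‖ ≤ nn j / 10 → ‖z‖ ≤ 3 * nn j := by
    intro z hz
    have := norm_sub_norm_le z (nn j : ℂ)
    rw [Complex.norm_real, Real.norm_of_nonneg (by linarith)] at this
    linarith
  have he2 : ((eps J j : ℝ) : ℂ) ^ 2 = 1 := by exact_mod_cast eps_sq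
  constructor
  · have := cross_alg (n := nn j) (k := kk j) (B := B) (E1 := EE lam β J j p) (E2 := EE lam β J (j + 1) p)
      (V := V0 lam j p.1) (p1 := sg lam j p.1 + dv lam j p.1) (p2 := sg lam j p.1 - dv lam j p.1)
      (r := (tau lam β J j p.1).re)
      (a := fl β j p.1) (b := rs β j p.1) (a1 := fl1 β j p.1) (b1 := rs1 β j p.1)
      (a2 := fl2 β j p.1) (b2 := rs2 β j p.1)
      hn hk hkn hB (V0_le hw (by omega)) (X_bound (by omega) (MM (j + 1) * p.2) (eps J (j + 1)) eps_abs)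
      (norm_nonneg _) ?_ (norm_p _ pn1) (norm_p _ pn2) cut_nonneg cut_le cut_nonneg cut_le
      hfl.1 hrs.1 hfl.2 hrs.2 (EE_ratio_norm p) ?_ hBr hBl
    · refine le_trans (le_of_eq ?_) this
      congr 1
      rw [← g8, g1, g2, g3, g4, g5, g6, g7, lam_wv (j := j) (by omega)]
      have hV2 := V0_eq hw (by omega)
      have hV1 : V0 lam j p.1 = (sg lam j p.1 + dv lam j p.1) ^ 2 - (dsg lam j p.1 + ddv lam j p.1)
        - nn j ^ 2 + nn j ^ 2 * wv lam j p.1 := rfl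
      have e1 : V0 lam j p.1 * (fl β j p.1 * EE lam β J j p + rs β j p.1 * EE lam β J (j + 1) p) =
         fl β j p.1 * EE lam β J j p * V0 lam j p.1 + rs β j p.1 * EE lam β J (j + 1) p * V0 lam j p.1 := by ring
      rw [e1]
      conv_rhs =>
        enter [1, 1, 1, 1]
        rw [hV1]
      conv_rhs =>
        enter [1, 1, 1, 2]
        rw [hV2]
      have hI : (Complex.I * (eps J j : ℂ)) ^ 2 = -1 := by rw [mul_pow, he2, Complex.I_sq]; ring
      generalize (Complex.I * (eps J j : ℂ)) = ie at hI
      push_cast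
      linear_combination (fl β j p.1 * EE lam β J j p * nn j ^ 2 + rs β j p.1 * EE lam β J (j + 1) p *
        (nn j + kk j + 2 * kk j * Complex.cos (MM (j + 1) * p.2)) ^ 2) * hI
    · refine (norm_add_le _ _).trans ?_
      rw [Complex.norm_exp_ofReal_mul_I]; norm_num
    · intro h
      obtain ⟨h1, h2, h3, h4, h5, h6⟩ := hA h
      exact ⟨h1, h2, h3, h4, h5, h6, E_sum_bound H hj p hx h⟩
  · have hcos := abs_le.1 (Real.abs_cos_le_one (MM (j + 1) * p.2))
    have := cross_grad (n := nn j) (k := kk j) (E1 := EE lam β J j p) (E2 := EE lam β J (j + 1) p)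
      (p1 := sg lam j p.1 + dv lam j p.1) (p2 := sg lam j p.1 - dv lam j p.1)
      (r := (tau lam β J j p.1).re) (F := nn j + kk j + 2 * kk j * Real.cos (MM (j + 1) * p.2))
      (a := fl β j p.1) (b := rs β j p.1) (a1 := fl1 β j p.1) (b1 := rs1 β j p.1) (e := eps J j)
      hn hkn eps_abs pn1 ?_ (by nlinarith) (by nlinarith) cut_nonneg cut_le cut_nonneg cut_le
      (EE_ratio_norm p) (fun h => ⟨(hA h).1, (hA h).2.1, (hA h).2.2.1, (hA h).2.2.2.1⟩) hBr hBl
    · refine this.trans (le_of_eq ?_)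
      rw [g1, g3, g5, g7]
      congr 1
      · congr 1; ring
      · congr 1; ring
    · have e : sg lam j p.1 - dv lam j p.1 - (sg lam j p.1 + dv lam j p.1) = -(2 * dv lam j p.1) := by ring
      rw [e, norm_neg, norm_mul, Complex.norm_ofNat]
      linarith [dv_le hw (show 299 ≤ j by omega)]
end

open Filter Topology

section
variable {lam : ℂ} {β : ℝ} {J i j : ℕ} {s : ℝ}

/-- the solution in log-polar coordinates -/
def FF (lam : ℂ) (β : ℝ) (J : ℕ) (p : ℝ × ℝ) : ℂ :=
  if ⌊tt β p.1 + 1 / 2⌋₊ < J then EE lam β J J p else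
    fl β ⌊tt β p.1 + 1 / 2⌋₊ p.1 * EE lam β J ⌊tt β p.1 + 1 / 2⌋₊ p +
    rs β ⌊tt β p.1 + 1 / 2⌋₊ p.1 * EE lam β J (⌊tt β p.1 + 1 / 2⌋₊ + 1) p

def Est (lam : ℂ) (β : ℝ) (J : ℕ) (p : ℝ × ℝ) (K c : ℝ) : Prop :=
  ∃ (f f1 f2 : ℝ × ℝ → ℂ) (f11 f22 : ℂ), Good f f1 f2 f11 f22 p ∧
    (∀ᶠ q in 𝓝 p, FF lam β J q = f q) ∧
    ‖f11 + f22 + lam * Complex.exp (2 * p.1) * f p‖ ≤ K * ‖f p‖ ∧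
    c * ‖f p‖ ≤ ‖f1 p‖ + ‖f2 p‖

theorem Est.mono {p : ℝ × ℝ} {K c K' c' : ℝ} (h : Est lam β J p K c) (hK : K ≤ K') (hc : c' ≤ c) :
    Est lam β J p K' c' := by
  obtain ⟨f, f1, f2, f11, f22, hg, he, h1, h2⟩ := h
  refine ⟨f, f1, f2, f11, f22, hg, he, h1.trans ?_, le_trans ?_ h2⟩ <;> gcongr

theorem tt_ev {P : ℝ → Prop} {p : ℝ × ℝ} (h : ∀ᶠ t in 𝓝 (tt β p.1), P t) :
    ∀ᶠ q : ℝ × ℝ in 𝓝 p, P (tt β q.1) :=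
  (((tt_cd (n := 2)).continuous.comp continuous_fst).continuousAt).eventually h

theorem fl_one (h : tt β s ≤ j + 1 / 8) : fl β j s = 1 := cut_one (by linarith)
theorem fl_zero (h : j + 3 / 16 ≤ tt β s) : fl β j s = 0 := cut_zero (by linarith)
theorem rs_one (h : j - 1 / 8 ≤ tt β s) : rs β j s = 1 := cut_one (by linarith)
theorem rs_zero (h : tt β s ≤ j - 3 / 16) : rs β j s = 0 := cut_zero (by linarith)

theorem FF_R1 {p : ℝ × ℝ} (hj : J ≤ j) (h : |tt β p.1 - j| < 5 / 16) :
    FF lam β J p = fl β j p.1 * EE lam β J j p + rs β j p.1 * EE lam β J (j + 1) p := by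
  rw [abs_lt] at h
  have e : ⌊tt β p.1 + 1 / 2⌋₊ = j := by
    rw [Nat.floor_eq_iff (by linarith [tt_pos (β := β) (s := p.1)])]
    constructor <;> linarith
  rw [FF, e, if_neg (by omega)]

theorem FF_mono {p : ℝ × ℝ} (hj : J ≤ j) (h : j + 3 / 16 < tt β p.1) (h' : tt β p.1 < j + 13 / 16) :
    FF lam β J p = EE lam β J (j + 1) p := by
  have h0 : 0 ≤ tt β p.1 + 1 / 2 := by linarith [tt_pos (β := β) (s := p.1)]
  rcases lt_or_ge (tt β p.1) (j + 1 / 2) with h2 | h2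
  · have e : ⌊tt β p.1 + 1 / 2⌋₊ = j := by
      rw [Nat.floor_eq_iff h0]
      constructor <;> linarith
    rw [FF, e, if_neg (by omega), fl_zero (by linarith), rs_one (by linarith)]
    simp
  · have e : ⌊tt β p.1 + 1 / 2⌋₊ = j + 1 := by
      rw [Nat.floor_eq_iff h0]
      push_cast
      constructor <;> linarith
    rw [FF, e, if_neg (by omega), fl_one (by push_cast; linarith), rs_zero (by push_cast; linarith)]
    simp

theorem FF_core {p : ℝ × ℝ} (h : tt β p.1 < J - 3 / 16) :
    FF lam β J p = EE lam β J J p := by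
  have h0 : 0 ≤ tt β p.1 + 1 / 2 := by linarith [tt_pos (β := β) (s := p.1)]
  by_cases hl : ⌊tt β p.1 + 1 / 2⌋₊ < J
  · rw [FF, if_pos hl]
  · have e : ⌊tt β p.1 + 1 / 2⌋₊ = J := by
      apply le_antisymm _ (not_lt.1 hl)
      apply Nat.lt_succ_iff.1
      rw [Nat.floor_lt h0]
      push_cast; linarith
    rw [FF, e, if_neg (by omega), fl_one (by linarith), rs_zero (by linarith)]
    simp

theorem ee_good (H : Hy lam β J) (hi : J ≤ i) {p : ℝ × ℝ} (hp : tt β p.1 < i + 1) :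
    Good (EE lam β J i) (fun q => ph1 lam β J i q * EE lam β J i q)
      (fun q => ph2 β J i q * EE lam β J i q)
      ((ph11 lam β J i p + ph1 lam β J i p ^ 2) * EE lam β J i p)
      ((ph22 β J i p + ph2 β J i p ^ 2) * EE lam β J i p) p := by
  have := term_good H hi (w := fun _ => 1) (w1 := fun _ => 0) (w2 := fun _ => 0) contDiff_const
    (fun s => hasDerivAt_const _ _) (fun s => hasDerivAt_const _ _) hp
  simpa using this

theorem ee_est (H : Hy lam β J) (hi : J ≤ i) {p : ℝ × ℝ} (hp : tt β p.1 < i + 1) {K : ℝ}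
    (he : ∀ᶠ q in 𝓝 p, FF lam β J q = EE lam β J i q)
    (hK : ‖ph11 lam β J i p + ph1 lam β J i p ^ 2 + (ph22 β J i p + ph2 β J i p ^ 2) +
       lam * Complex.exp (2 * p.1)‖ ≤ K) : Est lam β J p K (nn i / 2) := by
  refine ⟨_, _, _, _, _, ee_good H hi hp, he, ?_, ?_⟩
  · rw [← add_mul, ← add_mul, norm_mul]
    gcongr
  · rw [norm_mul, norm_mul]
    have := mono_grad H hi p
    nlinarith [norm_nonneg (EE lam β J i p), norm_nonneg (ph1 lam β J i p), mul_nonneg (norm_nonneg (ph1 lam β J i p)) (norm_nonneg (EE lam β J i p))]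

theorem fl_cd : ContDiff ℝ 2 (fl β j) := cut_cd
theorem fl_d (s : ℝ) : HasDerivAt (fl β j) (fl1 β j s) s := cut_deriv
theorem fl1_d (s : ℝ) : HasDerivAt (fl1 β j) (fl2 β j s) s := cut1_deriv
theorem rs_cd : ContDiff ℝ 2 (rs β j) := cut_cd
theorem rs_d (s : ℝ) : HasDerivAt (rs β j) (rs1 β j s) s := cut_deriv
theorem rs1_d (s : ℝ) : HasDerivAt (rs1 β j) (rs2 β j s) s := cut1_deriv

theorem r1_Est {B : ℝ} (hB : 1 ≤ B) (hB1 : ∀ (x : ℝ), |deriv Real.smoothTransition x| ≤ B)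
    (hB2 : ∀ (x : ℝ), |deriv (deriv Real.smoothTransition) x| ≤ B) (H : Hy lam β J) (hj : J ≤ j)
    {p : ℝ × ℝ} (hx : |tt β p.1 - j| < 5 / 16) :
    Est lam β J p (200 * B * (nn j * kk j)) (nn j / 3) := by
  obtain ⟨e1, e2⟩ := R1_est hB hB1 hB2 H hj hx
  have hx2 := abs_lt.1 hx
  have g := (term_good H hj (fl_cd (β := β) (j := j)) fl_d fl1_d (p := p) (by linarith)).add
    (term_good H (i := j + 1) (by omega) (rs_cd (β := β) (j := j)) rs_d rs1_d (p := p) (by push_cast; linarith))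
  refine ⟨_, _, _, _, _, g, ?_, e1, e2⟩
  have : ∀ᶠ t : ℝ in 𝓝 (tt β p.1), |t - (j : ℝ)| < 5 / 16 :=
    (Continuous.continuousAt (by fun_prop)).eventually_lt continuousAt_const hx
  filter_upwards [tt_ev this] with q hq using FF_R1 hj hq

theorem outer_est (H : Hy lam β J) : ∃ K : ℝ, 0 < K ∧ ∀ p : ℝ × ℝ, (J : ℝ) - 1 / 4 ≤ tt β p.1 →
    Est lam β J p (K * tt β p.1 ^ 3) (tt β p.1 ^ 2) := by
  obtain ⟨B, hB, hB1, hB2⟩ := st_bdd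
  refine ⟨2000 * B ^ 2 * 6144, by positivity, fun p hp => ?_⟩
  have hJ : (300 : ℝ) ≤ J := by exact_mod_cast H.hJ
  set t := tt β p.1 with ht
  have key : ∀ i : ℕ, t / 2 ≤ i → (i : ℝ) ≤ 2 * t → nn i * kk i ≤ 6144 * t ^ 3 ∧ t ^ 2 ≤ nn i / 3 := by
    intro i h1 h2
    have hi : (1 : ℝ) ≤ i := by linarith
    simp only [nn, kk]
    constructor
    · have : (i : ℝ) ^ 3 ≤ (2 * t) ^ 3 := by gcongr
      nlinarith [sq_nonneg (i : ℝ)]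
    · nlinarith
  have mono : ∀ j : ℕ, J ≤ j → (j : ℝ) + 3 / 16 < t → t < j + 13 / 16 →
      Est lam β J p (2000 * B ^ 2 * 6144 * t ^ 3) (t ^ 2) := by
    intro j hj h1 h2
    have e := ee_est H (i := j + 1) (by omega) (p := p) (by push_cast; linarith) ?_
      (mono_est hB hB1 hB2 H (i := j + 1) (by omega) (by push_cast; linarith) (by push_cast; linarith))
    · obtain ⟨k1, k2⟩ := key (j + 1) (by push_cast; linarith) (by push_cast; linarith)
      refine e.mono ?_ ?_
      · rw [mul_assoc (2000 * B ^ 2) 6144]; gcongr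
      · nlinarith [sq_nonneg t]
    · filter_upwards [tt_ev (lt_mem_nhds h1), tt_ev (gt_mem_nhds h2)] with q a b using FF_mono hj a b
  obtain ⟨j, hj⟩ : ∃ j, j = ⌊t + 1 / 2⌋₊ := ⟨_, rfl⟩
  have hf := (Nat.floor_eq_iff (a := t + 1 / 2) (n := j) (by linarith)).1 hj.symm
  have hjJ : J ≤ j := by rw [hj]; apply Nat.le_floor; linarith
  by_cases hx : |t - j| < 5 / 16
  · have hx2 := abs_lt.1 hx
    obtain ⟨k1, k2⟩ := key j (by linarith) (by linarith)
    refine (r1_Est hB hB1 hB2 H hjJ hx).mono ?_ k2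
    rw [mul_assoc (2000 * B ^ 2) 6144]
    have : 200 * B ≤ 2000 * B ^ 2 := by nlinarith
    have hn : 0 ≤ nn j * kk j := by simp only [nn, kk]; positivity
    gcongr
  · rw [not_lt, le_abs] at hx
    rcases hx with h | h
    · exact mono j hjJ (by linarith) (by linarith)
    · have : J ≠ j := by rintro rfl; linarith
      have h1 : 1 ≤ j := by omega
      refine mono (j - 1) (by omega) ?_ ?_ <;> rw [Nat.cast_sub h1] <;> push_cast <;> linarith

theorem hc_core (hJ : 1 ≤ J) (h : tt β s < J - 1 + 5 / 16) : hc β J s = 1 ∧ hc1 β J s = 0 := by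
  have := hc_one (β := β) (j := J - 1) (s := s) (by rw [Nat.cast_sub hJ]; push_cast; linarith)
  rw [Nat.sub_add_cancel hJ] at this
  exact ⟨this.1, this.2.1⟩

theorem core_est (H : Hy lam β J) : ∃ K : ℝ, 0 < K ∧ ∀ p : ℝ × ℝ, tt β p.1 < (J : ℝ) - 3 / 16 →
    Est lam β J p (K * Real.exp (2 * p.1)) 1 := by
  have hJ : (300 : ℝ) ≤ J := by exact_mod_cast H.hJ
  have hcpt : ContinuousOn (fun s => -dpp lam β J J s + pp lam β J J s ^ 2 - (nn J : ℂ) ^ 2)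
      (Set.Icc (sc β (J - 1)) (sc β J)) := by
    intro s hs
    have : tt β s < J + 1 := by
      have := (tt_le_iff H).2 hs.2
      rw [tt_sc H (by have := H.hJ; omega)] at this
      linarith
    exact ((((dpp_cont H le_rfl this).neg.add ((pp_deriv H le_rfl this).continuousAt.pow 2)).sub
      continuousAt_const)).continuousWithinAt
  obtain ⟨M, hM⟩ := isCompact_Icc.exists_bound_of_continuousOn hcpt
  refine ⟨|M| / Real.exp (2 * sc β (J - 1)) + ‖lam‖ + 1, by positivity, fun p hp => ?_⟩
  have e : ph11 lam β J J p + ph1 lam β J J p ^ 2 + (ph22 β J J p + ph2 β J J p ^ 2) +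
       lam * Complex.exp (2 * p.1) = (-dpp lam β J J p.1 + pp lam β J J p.1 ^ 2 - (nn J : ℂ) ^ 2) +
         lam * Complex.exp (2 * p.1) := by
    have h1 : (eps J J : ℂ) ^ 2 = 1 := by
      have := eps_sq (J := J) (i := J)
      exact_mod_cast this
    simp only [ph11, ph1, ph22, ph2, Ph, Ph1, Ph2, ka, le_refl, if_true]
    push_cast
    simp only [zero_div, zero_mul, mul_zero, add_zero, neg_zero, mul_pow, Complex.I_sq, h1]
    ring
  have hb : ‖-dpp lam β J J p.1 + pp lam β J J p.1 ^ 2 - (nn J : ℂ) ^ 2‖ ≤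
      |M| / Real.exp (2 * sc β (J - 1)) * Real.exp (2 * p.1) := by
    rcases lt_or_ge (tt β p.1) (J - 1 + 5 / 16) with h | h
    · obtain ⟨a, b⟩ := hc_core (by have := H.hJ; omega) h
      have : -dpp lam β J J p.1 + pp lam β J J p.1 ^ 2 - (nn J : ℂ) ^ 2 = 0 := by
        simp only [dpp, pp, a, b, PL, dPL, le_refl, if_true]; push_cast; ring
      rw [this, norm_zero]; positivity
    · have hs : p.1 ∈ Set.Icc (sc β (J - 1)) (sc β J) := by
        constructor
        · rw [← tt_le_iff H, tt_sc H (by have := H.hJ; omega), Nat.cast_sub (by have := H.hJ; omega)]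
          push_cast; linarith
        · rw [← tt_le_iff H, tt_sc H (by have := H.hJ; omega)]
          linarith
      have h1 := (hM _ hs).trans (le_abs_self M)
      refine h1.trans ?_
      rw [div_mul_eq_mul_div, le_div_iff₀ (by positivity)]
      have := hs.1
      gcongr
  have hn : (1 : ℝ) ≤ nn J / 2 := by simp only [nn]; nlinarith
  refine (ee_est H le_rfl (p := p) (by linarith) ?_ le_rfl).mono ?_ hn
  · filter_upwards [tt_ev (gt_mem_nhds hp)] with q a using FF_core a
  · rw [e]
    refine (norm_add_le _ _).trans ?_
    have h2 : ‖lam * Complex.exp (2 * p.1)‖ = ‖lam‖ * Real.exp (2 * p.1) := by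
      rw [norm_mul, Complex.norm_exp]; simp
    rw [h2]
    nlinarith [Real.exp_pos (2 * p.1)]

theorem inner_est (H : Hy lam β J) : ∃ K : ℝ, 0 < K ∧ ∀ p : ℝ × ℝ, tt β p.1 ≤ (J : ℝ) →
    Est lam β J p (K * Real.exp (2 * p.1)) 1 := by
  have hJ : (300 : ℝ) ≤ J := by exact_mod_cast H.hJ
  obtain ⟨K1, h1, k1⟩ := outer_est H
  obtain ⟨K2, h2, k2⟩ := core_est H
  refine ⟨K2 + K1 * J ^ 3 / Real.exp (2 * sc β (J - 1)), by positivity, fun p hp => ?_⟩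
  rcases lt_or_ge (tt β p.1) (J - 1 / 4) with h | h
  · refine (k2 p (by linarith)).mono ?_ le_rfl
    have : 0 ≤ K1 * J ^ 3 / Real.exp (2 * sc β (J - 1)) := by positivity
    nlinarith [Real.exp_pos (2 * p.1)]
  · refine (k1 p h).mono ?_ (by nlinarith)
    have hs : sc β (J - 1) ≤ p.1 := by
      rw [← tt_le_iff H, tt_sc H (by have := H.hJ; omega), Nat.cast_sub (by have := H.hJ; omega)]
      push_cast; linarith
    have a : K1 * tt β p.1 ^ 3 ≤ K1 * J ^ 3 := by
      have := (tt_pos (β := β) (s := p.1)).le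
      gcongr
    have b : K1 * J ^ 3 ≤ K1 * J ^ 3 / Real.exp (2 * sc β (J - 1)) * Real.exp (2 * p.1) := by
      rw [div_mul_eq_mul_div, le_div_iff₀ (by positivity)]
      gcongr
    nlinarith [Real.exp_pos (2 * p.1)]

end

open Filter Topology

section
variable {lam : ℂ} {β : ℝ} {J i j : ℕ} {s : ℝ}

/-- the solution on the plane -/
def uu (lam : ℂ) (β : ℝ) (J : ℕ) (x : EuclideanSpace ℝ (Fin 2)) : ℂ :=
  if x = 0 then 0 else FF lam β J (Real.log ‖x‖, Complex.arg (zc x))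

theorem EE_per (s θ : ℝ) (m : ℤ) : EE lam β J i (s, θ + 2 * Real.pi * m) = EE lam β J i (s, θ) := by
  have hM : MM i = ((16 * (i - 1) ^ 2 + 16 * i ^ 2 : ℕ) : ℝ) := by
    simp only [MM, nn]; push_cast; ring
  have hs : Ph J i (θ + 2 * Real.pi * m) = Ph J i θ := by
    rw [Ph, Ph, hM]
    have : ((16 * (i - 1) ^ 2 + 16 * i ^ 2 : ℕ) : ℝ) * (θ + 2 * Real.pi * m) =
        ((16 * (i - 1) ^ 2 + 16 * i ^ 2 : ℕ) : ℝ) * θ +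
          (((16 * (i - 1) ^ 2 + 16 * i ^ 2 : ℕ) * m : ℤ) : ℝ) * (2 * Real.pi) := by
      push_cast; ring
    rw [this, Real.sin_add_int_mul_two_pi]
  rw [EE, EE, Complex.exp_eq_exp_iff_exists_int]
  refine ⟨(-1) ^ (i + J) * (16 * i ^ 2) * m, ?_⟩
  simp only [ph, hs, eps, nn]
  push_cast; ring

theorem FF_per (s θ : ℝ) (m : ℤ) : FF lam β J (s, θ + 2 * Real.pi * m) = FF lam β J (s, θ) := by
  simp only [FF, EE_per]

theorem uu_gl {x y : EuclideanSpace ℝ (Fin 2)} (hx : x ≠ 0) (hy : y ≠ 0) :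
    uu lam β J y = FF lam β J (gl x y) := by
  have h : ((Complex.arg (zc x) + Complex.arg (zc y / zc x) : ℝ) : Real.Angle) = Complex.arg (zc y) := by
    rw [Real.Angle.coe_add, Complex.arg_div_coe_angle (zc_ne hy) (zc_ne hx)]
    abel
  obtain ⟨k, hk⟩ := Real.Angle.angle_eq_iff_two_pi_dvd_sub.1 h
  rw [uu, if_neg hy, gl]
  have : Complex.arg (zc x) + Complex.arg (zc y / zc x) = Complex.arg (zc y) + 2 * Real.pi * k := by
    linarith
  rw [this, FF_per]

theorem transfer {x : EuclideanSpace ℝ (Fin 2)} (hx : x ≠ 0) {K c : ℝ}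
    (hE : Est lam β J (Real.log ‖x‖, Complex.arg (zc x)) K c) :
    ContDiffAt ℝ 2 (uu lam β J) x ∧
    ‖lap (uu lam β J) x + lam * uu lam β J x‖ * ‖x‖ ^ 2 ≤ K * ‖uu lam β J x‖ ∧
    c * ‖uu lam β J x‖ ≤ 2 * ‖x‖ * (‖pd (uu lam β J) 0 x‖ + ‖pd (uu lam β J) 1 x‖) := by
  rw [← gl_self hx] at hE
  obtain ⟨f, f1, f2, f11, f22, hg, he, h1, h2⟩ := hE
  have hu : ∀ᶠ y in 𝓝 x, uu lam β J y = f (gl x y) := by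
    have a := (gl_contDiffAt hx).continuousAt.eventually he
    filter_upwards [a, slit_near hx] with y h3 h4
    rw [uu_gl hx h4.1, h3]
  obtain ⟨r1, r2, r3, r4⟩ := polar_transfer (uu lam β J) f f1 f2 f11 f22 x hx hu hg.cd hg.d1 hg.d2 hg.d11 hg.d22
  have hux : uu lam β J x = f (gl x x) := hu.self_of_nhds
  have hr : 0 < ‖x‖ := norm_pos_iff.2 hx
  have hrc : ((‖x‖ : ℝ) : ℂ) ≠ 0 := by exact_mod_cast hr.ne'
  refine ⟨r1, ?_, ?_⟩
  · rw [hux]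
    refine le_trans (le_of_eq ?_) h1
    have e : Complex.exp (2 * ((gl x x).1 : ℂ)) = (‖x‖ : ℂ) ^ 2 := by
      rw [gl_self hx]
      have : (2 * ((Real.log ‖x‖ : ℝ) : ℂ)) = ((2 * Real.log ‖x‖ : ℝ) : ℂ) := by push_cast; ring
      simp only
      rw [this, ← Complex.ofReal_exp]
      have : Real.exp (2 * Real.log ‖x‖) = ‖x‖ ^ 2 := by
        rw [two_mul, Real.exp_add, Real.exp_log hr, sq]
      rw [this]; push_cast; rfl
    have n2 : ‖x‖ ^ 2 = ‖(‖x‖ : ℂ) ^ 2‖ := by rw [norm_pow, Complex.norm_real, norm_norm]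
    rw [e, r2, n2, ← norm_mul]
    congr 1
    field_simp
  · rw [hux]
    refine h2.trans ?_
    have hsq : ((x 0 : ℝ) : ℂ) ^ 2 + ((x 1 : ℝ) : ℂ) ^ 2 = (‖x‖ : ℂ) ^ 2 := by
      rw [← Complex.ofReal_pow ‖x‖, norm_sq_two]; push_cast; ring
    have e1 : f1 (gl x x) = pd (uu lam β J) 0 x * x 0 + pd (uu lam β J) 1 x * x 1 := by
      rw [r3, r4]; field_simp; rw [← hsq]; ring
    have e2 : f2 (gl x x) = pd (uu lam β J) 1 x * x 0 - pd (uu lam β J) 0 x * x 1 := by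
      rw [r3, r4]; field_simp; rw [← hsq]; ring
    have b0 : ‖((x 0 : ℝ) : ℂ)‖ ≤ ‖x‖ := by
      rw [Complex.norm_real, Real.norm_eq_abs]
      apply abs_le_of_sq_le_sq _ hr.le
      rw [norm_sq_two]; nlinarith [sq_nonneg (x 1)]
    have b1 : ‖((x 1 : ℝ) : ℂ)‖ ≤ ‖x‖ := by
      rw [Complex.norm_real, Real.norm_eq_abs]
      apply abs_le_of_sq_le_sq _ hr.le
      rw [norm_sq_two]; nlinarith [sq_nonneg (x 0)]
    have c1 : ‖f1 (gl x x)‖ ≤ ‖pd (uu lam β J) 0 x‖ * ‖x‖ + ‖pd (uu lam β J) 1 x‖ * ‖x‖ := by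
      rw [e1]
      refine (norm_add_le _ _).trans ?_
      rw [norm_mul, norm_mul]; gcongr
    have c2 : ‖f2 (gl x x)‖ ≤ ‖pd (uu lam β J) 1 x‖ * ‖x‖ + ‖pd (uu lam β J) 0 x‖ * ‖x‖ := by
      rw [e2]
      refine (norm_sub_le _ _).trans ?_
      rw [norm_mul, norm_mul]; gcongr
    linarith

theorem SS_lin (H : Hy lam β J) : ∃ A : ℂ, ∀ s, tt β s < J - 1 →
    SS lam β J J s = A - nn J * s := by
  have hJ := H.hJ
  have hJ' : (300 : ℝ) ≤ J := by exact_mod_cast hJ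
  have hd : ∀ s, tt β s < J - 1 → HasDerivAt (fun s : ℝ => SS lam β J J s + nn J * s) 0 s := by
    intro s hs
    have h1 := SS_deriv H (le_refl J) (s := s) (by linarith)
    have h2 : HasDerivAt (fun s : ℝ => (nn J : ℂ) * s) (nn J : ℂ) s := by
      simpa using (Complex.ofRealCLM.hasDerivAt (x := s)).const_mul (nn J : ℂ)
    refine (h1.add h2).congr_deriv ?_
    obtain ⟨a, b⟩ := hc_core (β := β) (J := J) (s := s) (by omega) (by linarith)
    simp [pp, a, PL]
  have hset : ∀ s, s ∈ Set.Iio (sc β (J - 1)) ↔ tt β s < J - 1 := by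
    intro s
    rw [Set.mem_Iio, ← tt_lt_iff H, tt_sc H (by omega), Nat.cast_sub (by omega)]
    push_cast; rfl
  have hconst := fun x y hx hy => IsOpen.is_const_of_deriv_eq_zero (isOpen_Iio (a := sc β (J - 1)))
    (convex_Iio (𝕜 := ℝ) _).isPreconnected
    (f := fun s : ℝ => SS lam β J J s + nn J * s)
    (fun s hs => (hd s ((hset s).1 hs)).differentiableAt.differentiableWithinAt)
    (fun s hs => (hd s ((hset s).1 hs)).deriv) (x := x) (y := y) hx hy
  refine ⟨SS lam β J J (sc β (J - 1) - 1) + nn J * (sc β (J - 1) - 1 : ℝ), fun s hs => ?_⟩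
  have := hconst _ _ ((hset s).2 hs) (Set.mem_Iio.2 (sub_one_lt (sc β (J - 1))))
  rw [← this]; ring

theorem uu_zero (H : Hy lam β J) : ∃ c : ℂ, c ≠ 0 ∧
    ∀ᶠ x in 𝓝 (0 : EuclideanSpace ℝ (Fin 2)), uu lam β J x = c * zcL x ^ (16 * J ^ 2) := by
  have hJ := H.hJ
  have hJ' : (300 : ℝ) ≤ J := by exact_mod_cast hJ
  obtain ⟨A, hA⟩ := SS_lin H
  refine ⟨Complex.exp (-A), Complex.exp_ne_zero _, ?_⟩
  filter_upwards [Metric.ball_mem_nhds (0 : EuclideanSpace ℝ (Fin 2)) (Real.exp_pos (sc β (J - 1)))] with x hx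
  rw [mem_ball_zero_iff] at hx
  by_cases h0 : x = 0
  · subst h0
    rw [uu, if_pos rfl, map_zero, zero_pow (by positivity), mul_zero]
  · have hr : 0 < ‖x‖ := norm_pos_iff.2 h0
    have hs : tt β (Real.log ‖x‖) < J - 1 := by
      have : Real.log ‖x‖ < sc β (J - 1) := by
        rw [Real.log_lt_iff_lt_exp hr]; exact hx
      rw [← tt_lt_iff H, tt_sc H (by omega), Nat.cast_sub (by omega)] at this
      simpa using this
    rw [uu, if_neg h0, FF_core (by simp only; linarith), EE, ph]
    simp only [hA _ hs, Ph, ka, le_refl, if_true, eps]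
    rw [zcL_apply]
    have e0 : zc x ^ (16 * J ^ 2) = Complex.exp (Complex.log (zc x)) ^ (16 * J ^ 2) := by
      rw [Complex.exp_log (zc_ne h0)]
    rw [e0, ← Complex.exp_nat_mul, ← Complex.exp_add]
    congr 1
    have e : Complex.log (zc x) = (Real.log ‖x‖ : ℝ) + Complex.arg (zc x) * Complex.I := by
      rw [← zc_norm x]; rfl
    rw [e]
    have e2 : ((-1 : ℝ)) ^ (J + J) = 1 := by rw [← two_mul, pow_mul]; simp
    rw [e2]
    simp only [nn]
    push_cast; ring

theorem at_zero (H : Hy lam β J) : ContDiffAt ℝ 2 (uu lam β J) 0 ∧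
    (∀ i, pd (uu lam β J) i 0 = 0) ∧ lap (uu lam β J) 0 = 0 ∧ uu lam β J ≠ 0 := by
  have hJ := H.hJ
  obtain ⟨c, hc, hu⟩ := uu_zero H
  obtain ⟨N, hN⟩ : ∃ N, 16 * J ^ 2 = N + 3 := ⟨16 * J ^ 2 - 3, by
    have : 3 ≤ 16 * J ^ 2 := by nlinarith
    omega⟩
  rw [hN] at hu
  have dpow : ∀ (m : ℕ) (y : EuclideanSpace ℝ (Fin 2)), HasFDerivAt (fun x => zcL x ^ (m + 1))
      (((m + 1 : ℂ) * zcL y ^ m) • zcL) y := by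
    intro m y
    have := (zcL.hasFDerivAt (x := y)).pow (m + 1)
    refine this.congr_fderiv ?_
    ext v
    simp
  have hpd : ∀ i, ∀ᶠ x in 𝓝 (0 : EuclideanSpace ℝ (Fin 2)), pd (uu lam β J) i x =
      c * ((N + 2 + 1 : ℂ) * zcL x ^ (N + 2) * zcL (EuclideanSpace.single i 1)) := by
    intro i
    filter_upwards [hu.eventually_nhds] with x hx
    have := ((dpow (N + 2) x).const_mul c).congr_of_eventuallyEq hx
    rw [pd_of_hasFDerivAt this]
    simp
  refine ⟨?_, ?_, ?_, ?_⟩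
  · have : ContDiff ℝ 2 (fun x => c * zcL x ^ (N + 3)) := contDiff_const.mul (zcL.contDiff.pow _)
    exact this.contDiffAt.congr_of_eventuallyEq hu
  · intro i
    rw [(hpd i).self_of_nhds]; simp
  · rw [lap]
    apply Finset.sum_eq_zero
    intro i _
    have h1 := (((dpow (N + 1) 0).const_mul (c * (N + 2 + 1 : ℂ))).mul_const
      (zcL (EuclideanSpace.single i 1)))
    have h2 := h1.congr_of_eventuallyEq (f₁ := fun y => pd (uu lam β J) i y)
      (by filter_upwards [hpd i] with x hx; rw [hx]; ring)
    rw [pd_of_hasFDerivAt h2]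
    simp
  · intro h0
    have hev : ∀ᶠ a : ℝ in 𝓝 0, uu lam β J (a • EuclideanSpace.single 0 1) =
        c * zcL (a • EuclideanSpace.single 0 1) ^ (N + 3) := by
      have hcont : ContinuousAt (fun a : ℝ => a • (EuclideanSpace.single 0 1 : EuclideanSpace ℝ (Fin 2))) 0 := by
        fun_prop
      have hu' : ∀ᶠ x in 𝓝 ((0 : ℝ) • (EuclideanSpace.single 0 1 : EuclideanSpace ℝ (Fin 2))),
          uu lam β J x = c * zcL x ^ (N + 3) := by simpa using hu
      exact hcont.eventually hu'
    have h3 : ∃ a : ℝ, a ≠ 0 ∧ uu lam β J (a • EuclideanSpace.single 0 1) =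
        c * zcL (a • EuclideanSpace.single 0 1) ^ (N + 3) := by
      have : ∀ᶠ a : ℝ in 𝓝[≠] 0, uu lam β J (a • EuclideanSpace.single 0 1) =
        c * zcL (a • EuclideanSpace.single 0 1) ^ (N + 3) := hev.filter_mono nhdsWithin_le_nhds
      obtain ⟨a, h⟩ := (this.and self_mem_nhdsWithin).exists
      exact ⟨a, h.2, h.1⟩
    obtain ⟨a, ha, h4⟩ := h3
    rw [h0, zcL_apply] at h4
    simp [zc, hc, ha] at h4
end

open Filter Topology

section
variable {lam : ℂ} {β : ℝ} {J i j : ℕ} {s : ℝ}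

theorem Hy_exists (lam : ℂ) (β : ℝ) (h1 : 1 < β) (h2 : β ≤ 2) : ∃ J, Hy lam β J := by
  have hg : 0 < 4 - 4 / β := by
    have : 4 / β < 4 := by rw [div_lt_iff₀ (by linarith)]; linarith
    linarith
  have ht : Tendsto (fun j : ℕ => ‖lam‖ * ((j : ℝ) ^ (-(4 - 4 / β)))) atTop (𝓝 0) := by
    have := ((tendsto_rpow_neg_atTop hg).comp tendsto_natCast_atTop_atTop).const_mul ‖lam‖
    simpa using this
  have hev := ht.eventually (gt_mem_nhds (show (0 : ℝ) < 1 / 100 by norm_num))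
  obtain ⟨n, hn⟩ := eventually_atTop.1 hev
  refine ⟨n + 300, by omega, h1, h2, fun j hj s hs => ?_⟩
  have hj2 : (299 : ℝ) ≤ j := by
    have : 299 ≤ j := by omega
    exact_mod_cast this
  have hjp : (0 : ℝ) < j := by linarith
  have hn' := hn j (by omega)
  have e1 : Real.exp (2 * s) = tt β s ^ (4 / β) := by
    rw [tt, ← Real.exp_mul]; congr 1; field_simp; ring
  have e2 : tt β s ^ (4 / β) ≤ 16 * (j : ℝ) ^ (4 / β) := by
    have a : tt β s ^ (4 / β) ≤ (2 * (j : ℝ)) ^ (4 / β) :=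
      Real.rpow_le_rpow (tt_pos (β := β) (s := s)).le (by linarith) (by positivity)
    have b : (2 : ℝ) ^ (4 / β) ≤ 2 ^ (4 : ℝ) :=
      Real.rpow_le_rpow_of_exponent_le (by norm_num) (by linarith)
    rw [Real.mul_rpow (by norm_num) hjp.le] at a
    have b' : (2 : ℝ) ^ (4 / β) ≤ 16 := b.trans (by norm_num)
    refine a.trans ?_
    gcongr
  have e3 : (j : ℝ) ^ (-(4 - 4 / β)) = (j : ℝ) ^ (4 / β) / (j : ℝ) ^ 4 := by
    rw [neg_sub, Real.rpow_sub hjp]; norm_num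
  have e4 : ‖wv lam j s‖ = ‖lam‖ * Real.exp (2 * s) / (16 * (j : ℝ) ^ 2) ^ 2 := by
    rw [wv, norm_div, norm_mul, Complex.norm_exp, norm_pow, Complex.norm_real, nn, Real.norm_of_nonneg (by positivity)]
    simp
  rw [e3] at hn'
  rw [e4, e1]
  have hl := norm_nonneg lam
  calc ‖lam‖ * tt β s ^ (4 / β) / (16 * (j : ℝ) ^ 2) ^ 2
      ≤ ‖lam‖ * (16 * (j : ℝ) ^ (4 / β)) / (16 * (j : ℝ) ^ 2) ^ 2 := by gcongr
    _ = (‖lam‖ * ((j : ℝ) ^ (4 / β) / (j : ℝ) ^ 4)) / 16 := by field_simp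
    _ ≤ 1 / 100 := by
      have : 0 ≤ ‖lam‖ * ((j : ℝ) ^ (4 / β) / (j : ℝ) ^ 4) := by positivity
      linarith

theorem pp_re (H : Hy lam β J) (hj : J ≤ j) (hs : tt β s ≤ j + 1) (hs' : j ≤ tt β s) :
    β * tt β s ^ 2 ≤ (pp lam β J (j + 1) s).re := by
  have hJ := H.hJ
  have hj2 : (300 : ℝ) ≤ j := by
    have : 300 ≤ j := by omega
    exact_mod_cast this
  have a := (pp1_near H hj hs).2
  have b := (pp1_near H (j := j + 1) (by omega) (s := s) (by push_cast; linarith)).1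
  have a' := (Complex.abs_re_le_norm _).trans a
  have b' := (Complex.abs_re_le_norm _).trans b
  have h0 : 0 ≤ hc β (j + 1) s := cut_nonneg
  have h1 : hc β (j + 1) s ≤ 1 := cut_le
  have e : (pp lam β J (j + 1) s).re = hc β (j + 1) s * (sg lam j s - dv lam j s).re +
      (1 - hc β (j + 1) s) * (sg lam (j + 1) s + dv lam (j + 1) s).re := by
    have h : ¬ (j + 1 ≤ J) := by omega
    simp only [pp, PL, pR, if_neg h, Nat.add_sub_cancel]
    have : (1 - (hc β (j + 1) s : ℂ)) = ((1 - hc β (j + 1) s : ℝ) : ℂ) := by push_cast; ring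
    rw [this, Complex.add_re, Complex.re_ofReal_mul, Complex.re_ofReal_mul]
  rw [Complex.sub_re, Complex.ofReal_re] at a' b'
  rw [e]
  have ha := (abs_le.1 a').1
  have hb := (abs_le.1 b').1
  have hn : nn j ≤ nn (j + 1) := by simp only [nn]; push_cast; nlinarith
  have hk : β * tt β s ^ 2 ≤ 2 * ((j : ℝ) + 1) ^ 2 := by
    have := H.h2
    have := H.h1
    have := (tt_pos (β := β) (s := s)).le
    gcongr
  have hm : 2 * ((j : ℝ) + 1) ^ 2 ≤ 9 / 10 * nn j := by simp only [nn]; nlinarith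
  nlinarith

theorem SS_low (H : Hy lam β J) : ∃ C0 : ℝ, ∀ j, J ≤ j → ∀ s, tt β s ≤ j + 1 → j ≤ tt β s →
    tt β s ^ 2 - C0 ≤ (SS lam β J (j + 1) s).re := by
  have hJ := H.hJ
  have hJ' : (300 : ℝ) ≤ J := by exact_mod_cast hJ
  have step : ∀ j, J ≤ j → ∀ s, tt β s ≤ j + 1 → j ≤ tt β s →
      (SS lam β J (j + 1) (sc β j)).re - (j : ℝ) ^ 2 ≤ (SS lam β J (j + 1) s).re - tt β s ^ 2 := by
    intro j hj s h1 h2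
    have hd : ∀ x, tt β x ≤ j + 1 → HasDerivAt (fun x => (SS lam β J (j + 1) x).re - tt β x ^ 2)
        ((pp lam β J (j + 1) x).re - β * tt β x ^ 2) x := by
      intro x hx
      have a := SS_deriv H (i := j + 1) (by omega) (s := x) (by push_cast; linarith)
      have a' : HasDerivAt (fun x => (SS lam β J (j + 1) x).re) (pp lam β J (j + 1) x).re x :=
        Complex.reCLM.hasFDerivAt.comp_hasDerivAt x a
      have b := (tt_deriv (β := β) (s := x)).pow 2
      refine (a'.sub b).congr_deriv ?_
      push_cast; ring
    have hs : sc β j ≤ s := by rw [← tt_le_iff H, tt_sc H (by omega)]; exact h2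
    have hle : ∀ x ∈ Set.Icc (sc β j) s, tt β x ≤ j + 1 ∧ (j : ℝ) ≤ tt β x := by
      intro x hx
      have a := (tt_le_iff H).2 hx.1
      rw [tt_sc H (by omega)] at a
      exact ⟨((tt_le_iff H).2 hx.2).trans h1, a⟩
    have hm := monotoneOn_of_deriv_nonneg (convex_Icc (sc β j) s)
      (f := fun x => (SS lam β J (j + 1) x).re - tt β x ^ 2)
      (fun x hx => (hd x (hle x hx).1).continuousAt.continuousWithinAt)
      (fun x hx => (hd x (hle x (interior_subset hx)).1).differentiableAt.differentiableWithinAt)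
      (fun x hx => by
        have h3 := hle x (interior_subset hx)
        rw [(hd x h3.1).deriv]
        linarith [pp_re H hj h3.1 h3.2])
    have := hm (Set.left_mem_Icc.2 hs) (Set.right_mem_Icc.2 hs) hs
    simp only [tt_sc H (show 1 ≤ j by omega)] at this
    exact this
  refine ⟨(J : ℝ) ^ 2 - (SS lam β J J (sc β J)).re, ?_⟩
  have ind : ∀ j, J ≤ j → (j : ℝ) ^ 2 - ((J : ℝ) ^ 2 - (SS lam β J J (sc β J)).re) ≤
      (SS lam β J j (sc β j)).re := by
    intro j hj
    induction j, hj using Nat.le_induction with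
    | base => linarith
    | succ j hj ih =>
      have := step j hj (sc β (j + 1)) (by rw [tt_sc H (by omega)]; push_cast; rfl)
        (by rw [tt_sc H (by omega)]; push_cast; linarith)
      rw [tt_sc H (by omega), ← SS_match] at this
      linarith
  intro j hj s h1 h2
  have a := step j hj s h1 h2
  rw [← SS_match] at a
  linarith [ind j hj]

theorem FF_decay (H : Hy lam β J) : ∃ C : ℝ, 0 < C ∧ ∀ p : ℝ × ℝ, (J : ℝ) ≤ tt β p.1 →
    ‖FF lam β J p‖ ≤ C * Real.exp (-(tt β p.1 ^ 2)) := by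
  obtain ⟨C0, hC⟩ := SS_low H
  refine ⟨2 * Real.exp C0, by positivity, fun p hp => ?_⟩
  obtain ⟨j, hjd⟩ : ∃ j, j = ⌊tt β p.1⌋₊ := ⟨_, rfl⟩
  have hf := (Nat.floor_eq_iff (n := j) (tt_pos (β := β) (s := p.1)).le).1 hjd.symm
  have hj : J ≤ j := by rw [hjd]; exact Nat.le_floor hp
  have hE : ‖EE lam β J (j + 1) p‖ ≤ Real.exp C0 * Real.exp (-(tt β p.1 ^ 2)) := by
    rw [EE_norm, ← Real.exp_add, Real.exp_le_exp]
    linarith [hC j hj p.1 hf.2.le hf.1]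
  suffices h : ‖FF lam β J p‖ ≤ 2 * ‖EE lam β J (j + 1) p‖ by linarith
  have two : ∀ (a b : ℝ) (z w : ℂ), 0 ≤ a → a ≤ 1 → 0 ≤ b → b ≤ 1 →
      ‖(a : ℂ) * z + (b : ℂ) * w‖ ≤ ‖z‖ + ‖w‖ := by
    intro a b z w a0 a1 b0 b1
    refine (norm_add_le _ _).trans ?_
    rw [norm_mul, norm_mul, Complex.norm_real, Complex.norm_real, Real.norm_of_nonneg a0, Real.norm_of_nonneg b0]
    have := norm_nonneg z
    have := norm_nonneg w
    nlinarith
  rcases lt_or_ge (tt β p.1) (j + 5 / 16) with h | h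
  · have hx : |tt β p.1 - j| < 5 / 16 := by rw [abs_lt]; constructor <;> linarith
    rw [FF_R1 hj hx]
    have h1 := two (fl β j p.1) (rs β j p.1) (EE lam β J j p) (EE lam β J (j + 1) p)
      cut_nonneg cut_le cut_nonneg cut_le
    have h2 := (tau_facts H hj hx).2.2.2.2.1 hf.1
    have h3 := EE_ratio_norm (lam := lam) (β := β) (J := J) (j := j) p
    have h4 := Real.one_le_exp h2
    have h5 : ‖EE lam β J j p‖ ≤ ‖EE lam β J (j + 1) p‖ := by
      rw [h3]; nlinarith [norm_nonneg (EE lam β J j p)]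
    linarith
  · rcases lt_or_ge (tt β p.1) (j + 3 / 4) with h' | h'
    · rw [FF_mono hj (by linarith) (by linarith)]
      linarith [norm_nonneg (EE lam β J (j + 1) p)]
    · have hx : |tt β p.1 - (j + 1 : ℕ)| < 5 / 16 := by
        rw [abs_lt]; push_cast; constructor <;> linarith
      rw [FF_R1 (j := j + 1) (by omega) hx]
      have h1 := two (fl β (j + 1) p.1) (rs β (j + 1) p.1) (EE lam β J (j + 1) p) (EE lam β J (j + 1 + 1) p)
        cut_nonneg cut_le cut_nonneg cut_le
      have h2 := (tau_facts H (j := j + 1) (by omega) hx).2.2.2.2.2 (by push_cast; linarith)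
      have h3 := EE_ratio_norm (lam := lam) (β := β) (J := J) (j := j + 1) p
      have h4 : Real.exp (tau lam β J (j + 1) p.1).re ≤ 1 := Real.exp_le_one_iff.2 h2
      have h5 : ‖EE lam β J (j + 1 + 1) p‖ ≤ ‖EE lam β J (j + 1) p‖ := by
        rw [h3]; nlinarith [norm_nonneg (EE lam β J (j + 1) p)]
      linarith
end

theorem core (lam : ℂ) (β : ℝ) (h1 : 1 < β) (h2 : β ≤ 2) :
    ∃ (u : EuclideanSpace ℝ (Fin 2) → ℂ) (C R c : ℝ), 0 < C ∧ 1 ≤ R ∧ 0 < c ∧ u ≠ 0 ∧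
      ContDiff ℝ 2 u ∧ u 0 = 0 ∧ (∀ i, pd u i 0 = 0) ∧
      (∀ x, ‖x‖ ≤ R → ‖lap u x + lam * u x‖ ≤ C * ‖u x‖) ∧
      (∀ x, ‖x‖ ≤ R → ‖lap u x + lam * u x‖ ≤ C * (‖pd u 0 x‖ + ‖pd u 1 x‖)) ∧
      (∀ x, R ≤ ‖x‖ → ‖lap u x + lam * u x‖ ≤ C * ‖x‖ ^ (3 * β / 2 - 2) * ‖u x‖) ∧
      (∀ x, R ≤ ‖x‖ → ‖lap u x + lam * u x‖ ≤
        C * ‖x‖ ^ (β / 2 - 1) * (‖pd u 0 x‖ + ‖pd u 1 x‖)) ∧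
      (∀ x, R ≤ ‖x‖ → ‖u x‖ ≤ C * Real.exp (-(c * ‖x‖ ^ β))) := by
  obtain ⟨J, H⟩ := Hy_exists lam β h1 h2
  have hJ := H.hJ
  have hJ' : (300 : ℝ) ≤ J := by exact_mod_cast hJ
  obtain ⟨K1, hK1, e1⟩ := outer_est H
  obtain ⟨K2, hK2, e2⟩ := inner_est H
  obtain ⟨K3, hK3, e3⟩ := FF_decay H
  obtain ⟨z1, z2, z3, z4⟩ := at_zero H
  have z0 : uu lam β J 0 = 0 := by rw [uu, if_pos rfl]
  have hsc : 0 ≤ sc β J := by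
    rw [sc]; have := Real.log_nonneg (show (1 : ℝ) ≤ J by linarith); positivity
  have hR1 : 1 ≤ Real.exp (sc β J) := Real.one_le_exp hsc
  -- inner region
  have inn : ∀ x : EuclideanSpace ℝ (Fin 2), x ≠ 0 → ‖x‖ ≤ Real.exp (sc β J) →
      ContDiffAt ℝ 2 (uu lam β J) x ∧
      ‖lap (uu lam β J) x + lam * uu lam β J x‖ ≤ K2 * ‖uu lam β J x‖ ∧
      ‖uu lam β J x‖ ≤ 2 * Real.exp (sc β J) * (‖pd (uu lam β J) 0 x‖ + ‖pd (uu lam β J) 1 x‖) := by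
    intro x hx hxR
    have hr : 0 < ‖x‖ := norm_pos_iff.2 hx
    have ht : tt β (Real.log ‖x‖) ≤ J := by
      rw [← tt_sc H (show 1 ≤ J by omega), tt_le_iff H]
      exact (Real.log_le_iff_le_exp hr).2 hxR
    obtain ⟨a, b, c⟩ := transfer hx (e2 (Real.log ‖x‖, Complex.arg (zc x)) ht)
    refine ⟨a, ?_, ?_⟩
    · simp only at b
      rw [two_mul, Real.exp_add, Real.exp_log hr] at b
      have : 0 < ‖x‖ ^ 2 := by positivity
      nlinarith
    · rw [one_mul] at c
      refine c.trans ?_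
      gcongr
  -- outer region
  have out : ∀ x : EuclideanSpace ℝ (Fin 2), Real.exp (sc β J) ≤ ‖x‖ → 0 < ‖x‖ ∧
      ContDiffAt ℝ 2 (uu lam β J) x ∧
      ‖lap (uu lam β J) x + lam * uu lam β J x‖ ≤ K1 * ‖x‖ ^ (3 * β / 2 - 2) * ‖uu lam β J x‖ ∧
      ‖lap (uu lam β J) x + lam * uu lam β J x‖ ≤
        2 * K1 * ‖x‖ ^ (β / 2 - 1) * (‖pd (uu lam β J) 0 x‖ + ‖pd (uu lam β J) 1 x‖) ∧
      ‖uu lam β J x‖ ≤ K3 * Real.exp (-(1 * ‖x‖ ^ β)) := by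
    intro x hxR
    have hr : 0 < ‖x‖ := by linarith
    have hx : x ≠ 0 := norm_pos_iff.1 hr
    have ht : J ≤ tt β (Real.log ‖x‖) := by
      rw [← tt_sc H (show 1 ≤ J by omega), tt_le_iff H]
      exact (Real.le_log_iff_exp_le hr).2 hxR
    obtain ⟨a, b, c⟩ := transfer hx (e1 (Real.log ‖x‖, Complex.arg (zc x)) (by simp only; linarith))
    have d := e3 (Real.log ‖x‖, Complex.arg (zc x)) ht
    simp only at b c d
    have htt : tt β (Real.log ‖x‖) = ‖x‖ ^ (β / 2) := by
      rw [tt, Real.rpow_def_of_pos hr, mul_comm]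
    have r1 : ‖x‖ ^ (3 * β / 2 - 2) * ‖x‖ ^ 2 = tt β (Real.log ‖x‖) ^ 3 := by
      rw [htt, ← Real.rpow_natCast, ← Real.rpow_natCast, ← Real.rpow_mul hr.le, ← Real.rpow_add hr]
      congr 1; push_cast; ring
    have r2 : ‖x‖ ^ (β / 2 - 1) * ‖x‖ = tt β (Real.log ‖x‖) := by
      rw [htt, Real.rpow_sub_one hr.ne']; field_simp
    have r3 : tt β (Real.log ‖x‖) ^ 2 = ‖x‖ ^ β := by
      rw [htt, ← Real.rpow_natCast, ← Real.rpow_mul hr.le]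
      congr 1; push_cast; ring
    have hr2 : 0 < ‖x‖ ^ 2 := by positivity
    refine ⟨hr, a, ?_, ?_, ?_⟩
    · rw [← r1] at b
      refine le_of_mul_le_mul_right (b.trans (le_of_eq ?_)) hr2
      ring
    · refine le_of_mul_le_mul_right (b.trans ?_) hr2
      have hp := tt_pos (β := β) (s := Real.log ‖x‖)
      set T := tt β (Real.log ‖x‖) with hT
      calc K1 * T ^ 3 * ‖uu lam β J x‖ = K1 * T * (T ^ 2 * ‖uu lam β J x‖) := by ring
        _ ≤ K1 * T * (2 * ‖x‖ * (‖pd (uu lam β J) 0 x‖ + ‖pd (uu lam β J) 1 x‖)) := by gcongr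
        _ = _ := by rw [← r2]; ring
    · rw [one_mul, ← r3, uu, if_neg hx]
      exact d
  have hcd : ContDiff ℝ 2 (uu lam β J) := by
    rw [contDiff_iff_contDiffAt]
    intro x
    by_cases hx : x = 0
    · rw [hx]; exact z1
    · rcases le_total ‖x‖ (Real.exp (sc β J)) with h | h
      · exact (inn x hx h).1
      · exact (out x h).2.1
  refine ⟨uu lam β J, 2 * K1 + K2 + K2 * (2 * Real.exp (sc β J)) + K3, Real.exp (sc β J), 1, by positivity, hR1, one_pos,
    z4, hcd, z0, z2, ?_, ?_, ?_, ?_, ?_⟩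
  · intro x hx
    by_cases h0 : x = 0
    · rw [h0, z3, z0]; simp
    · refine (inn x h0 hx).2.1.trans ?_
      have : 0 ≤ K2 * (2 * Real.exp (sc β J)) := by positivity
      gcongr
      linarith
  · intro x hx
    by_cases h0 : x = 0
    · rw [h0, z3, z0, z2, z2]; simp
    · have a := (inn x h0 hx).2.1
      have b := (inn x h0 hx).2.2
      calc _ ≤ K2 * (2 * Real.exp (sc β J) * (‖pd (uu lam β J) 0 x‖ + ‖pd (uu lam β J) 1 x‖)) := a.trans (by gcongr)
        _ = K2 * (2 * Real.exp (sc β J)) * (‖pd (uu lam β J) 0 x‖ + ‖pd (uu lam β J) 1 x‖) := by ring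
        _ ≤ _ := by gcongr; linarith
  · intro x hx
    refine (out x hx).2.2.1.trans ?_
    have : 0 ≤ K2 * (2 * Real.exp (sc β J)) := by positivity
    gcongr
    linarith
  · intro x hx
    refine (out x hx).2.2.2.1.trans ?_
    have : 0 ≤ K2 * (2 * Real.exp (sc β J)) := by positivity
    gcongr
    linarith
  · intro x hx
    refine (out x hx).2.2.2.2.trans ?_
    have : 0 ≤ K2 * (2 * Real.exp (sc β J)) := by positivity
    gcongr
    linarith

theorem jap_bound (C R a : ℝ) (hC : 0 < C) (hR : 1 ≤ R) (ha : 0 ≤ a) :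
    ∃ D, 0 < D ∧ C ≤ D ∧ 1 ≤ D ∧ ∀ x : EuclideanSpace ℝ (Fin 2),
      (‖x‖ ≤ R → C ≤ D * Real.sqrt (1 + ‖x‖ ^ 2) ^ (-a)) ∧
      (R ≤ ‖x‖ → C * ‖x‖ ^ (-a) ≤ D * Real.sqrt (1 + ‖x‖ ^ 2) ^ (-a)) := by
  have hR0 : 0 < 2 * R := by linarith
  have hp : 1 ≤ (2 * R) ^ a := Real.one_le_rpow (by linarith) ha
  refine ⟨(C + 1) * (2 * R) ^ a, by positivity, by nlinarith, by nlinarith, fun x => ?_⟩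
  have hj : 0 < Real.sqrt (1 + ‖x‖ ^ 2) := Real.sqrt_pos.2 (by positivity)
  constructor
  · intro hx
    have h : Real.sqrt (1 + ‖x‖ ^ 2) ≤ 2 * R := by
      apply Real.sqrt_le_iff.2 ⟨by linarith, ?_⟩
      nlinarith [norm_nonneg x]
    have := Real.rpow_le_rpow_of_nonpos hj h (neg_nonpos.2 ha)
    have e : (2 * R) ^ a * (2 * R) ^ (-a) = 1 := by
      rw [← Real.rpow_add hR0]; simp
    calc C ≤ (C + 1) * ((2 * R) ^ a * (2 * R) ^ (-a)) := by rw [e]; linarith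
      _ ≤ (C + 1) * (2 * R) ^ a * Real.sqrt (1 + ‖x‖ ^ 2) ^ (-a) := by
        rw [← mul_assoc]; gcongr
  · intro hx
    have hx0 : 0 < ‖x‖ := by linarith
    have h : Real.sqrt (1 + ‖x‖ ^ 2) ≤ (2 * R) * ‖x‖ := by
      apply Real.sqrt_le_iff.2 ⟨by positivity, ?_⟩
      have h4 : 1 ≤ ‖x‖ := hR.trans hx
      have h5 : ‖x‖ ≤ R * ‖x‖ := by nlinarith
      nlinarith
    have := Real.rpow_le_rpow_of_nonpos hj h (neg_nonpos.2 ha)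
    rw [Real.mul_rpow hR0.le hx0.le] at this
    have e : (2 * R) ^ a * (2 * R) ^ (-a) = 1 := by
      rw [← Real.rpow_add hR0]; simp
    calc C * ‖x‖ ^ (-a) ≤ (C + 1) * ((2 * R) ^ a * (2 * R) ^ (-a)) * ‖x‖ ^ (-a) := by
          rw [e]; gcongr; linarith
      _ = (C + 1) * (2 * R) ^ a * ((2 * R) ^ (-a) * ‖x‖ ^ (-a)) := by ring
      _ ≤ _ := by gcongr

theorem decay_all (u : EuclideanSpace ℝ (Fin 2) → ℂ) (hu : Continuous u) (C R c β : ℝ)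
    (hC : 0 < C) (hβ : 0 < β)
    (h : ∀ x, R ≤ ‖x‖ → ‖u x‖ ≤ C * Real.exp (-(c * ‖x‖ ^ β))) :
    ∃ D, 0 < D ∧ ∀ x, ‖u x‖ ≤ D * Real.exp (-(c * ‖x‖ ^ β)) := by
  have hc1 : Continuous (fun x => ‖u x‖ * Real.exp (c * ‖x‖ ^ β)) := by
    have : Continuous (fun x : EuclideanSpace ℝ (Fin 2) => ‖x‖ ^ β) :=
      continuous_norm.rpow_const (fun _ => Or.inr hβ.le)
    fun_prop
  obtain ⟨B, hB⟩ := (isCompact_closedBall (0 : EuclideanSpace ℝ (Fin 2)) R).exists_bound_of_continuousOn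
    hc1.continuousOn
  refine ⟨C + |B|, by positivity, fun x => ?_⟩
  have e : Real.exp (c * ‖x‖ ^ β) * Real.exp (-(c * ‖x‖ ^ β)) = 1 := by
    rw [← Real.exp_add]; simp
  by_cases hx : R ≤ ‖x‖
  · refine (h x hx).trans ?_
    gcongr
    linarith [abs_nonneg B]
  · have := hB x (by simpa using (not_le.1 hx).le)
    rw [Real.norm_of_nonneg (by positivity)] at this
    calc ‖u x‖ = ‖u x‖ * Real.exp (c * ‖x‖ ^ β) * Real.exp (-(c * ‖x‖ ^ β)) := by
          rw [mul_assoc, e, mul_one]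
      _ ≤ _ := by gcongr; linarith [le_abs_self B]

theorem stmt9 (lam : ℂ) (N P : ℝ) (hN : 0 ≤ N) (hP : 0 ≤ P)
    (hβ : 1 < max (2 - 2 * P) ((4 - 2 * N) / 3)) :
    ∃ (C c : ℝ) (V : EuclideanSpace ℝ (Fin 2) → ℂ)
      (W : EuclideanSpace ℝ (Fin 2) → EuclideanSpace ℂ (Fin 2))
      (u : EuclideanSpace ℝ (Fin 2) → ℂ),
      0 < C ∧ 0 < c ∧
      ((V = 0 ∧ W ≠ 0) ∨ (V ≠ 0 ∧ W = 0)) ∧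
      u ≠ 0 ∧ ContDiff ℝ 2 u ∧
      (∀ x, -lap u x + (∑ i, W x i * pd u i x) + V x * u x = lam * u x) ∧
      (∀ x, ‖V x‖ ≤ C * Real.sqrt (1 + ‖x‖ ^ 2) ^ (-N)) ∧
      (∀ x, ‖W x‖ ≤ C * Real.sqrt (1 + ‖x‖ ^ 2) ^ (-P)) ∧
      (∃ A : ℝ, (A = -1 ∨ A = 0) ∧
        ∀ x : EuclideanSpace ℝ (Fin 2), 2 ≤ ‖x‖ →
          ‖u x‖ ≤ C * Real.exp (-(c * ‖x‖ ^ (max (2 - 2 * P) ((4 - 2 * N) / 3)) *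
            Real.log ‖x‖ ^ A))) := by
  set β := max (2 - 2 * P) ((4 - 2 * N) / 3) with hβdef
  have hβ2 : β ≤ 2 := max_le (by linarith) (by linarith)
  obtain ⟨u, C, R, c, hC, hR, hc, hu0, hu, hz, hpz, i1, i2, o1, o2, dec⟩ := core lam β hβ hβ2
  obtain ⟨D0, hD0, hdec⟩ := decay_all u hu.continuous C R c β hC (by linarith) dec
  have hjp : ∀ x : EuclideanSpace ℝ (Fin 2), 0 < Real.sqrt (1 + ‖x‖ ^ 2) := fun x =>
    Real.sqrt_pos.2 (by positivity)
  rcases le_total ((4 - 2 * N) / 3) (2 - 2 * P) with hcase | hcase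
  · -- W case
    have hb : β = 2 - 2 * P := max_eq_left hcase
    obtain ⟨D, hD, -, hD1, hDx⟩ := jap_bound (2 * C) R P (by linarith) hR hP
    have hL : ∀ x, ‖lap u x + lam * u x‖ ≤
        D / 2 * Real.sqrt (1 + ‖x‖ ^ 2) ^ (-P) * (‖pd u 0 x‖ + ‖pd u 1 x‖) := by
      intro x
      rcases le_total ‖x‖ R with hx | hx
      · refine (i2 x hx).trans ?_
        gcongr
        linarith [(hDx x).1 hx]
      · refine (o2 x hx).trans ?_
        have : β / 2 - 1 = -P := by rw [hb]; ring
        rw [this]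
        exact mul_le_mul_of_nonneg_right (by linarith [(hDx x).2 hx]) (by positivity)
    classical
    let W : EuclideanSpace ℝ (Fin 2) → EuclideanSpace ℂ (Fin 2) := fun x =>
      if ‖pd u 1 x‖ ≤ ‖pd u 0 x‖ then
        (if pd u 0 x = 0 then EuclideanSpace.single 0 ((Real.sqrt (1 + ‖x‖ ^ 2) ^ (-P) : ℝ) : ℂ)
        else EuclideanSpace.single 0 ((lap u x + lam * u x) / pd u 0 x))
      else EuclideanSpace.single 1 ((lap u x + lam * u x) / pd u 1 x)
    refine ⟨D + D0, c, 0, W, u, by positivity, hc, Or.inl ⟨rfl, ?_⟩, hu0, hu, ?_, ?_, ?_, 0,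
      Or.inr rfl, ?_⟩
    · intro h
      have := congrArg (fun f => f 0 0) h
      simp [W, hpz] at this
    · intro x
      simp only [Fin.sum_univ_two, W, Pi.zero_apply, zero_mul, add_zero]
      split_ifs with h1 h2
      · have h3 : pd u 1 x = 0 := by simpa [h2] using h1
        have := hL x
        simp only [h2, h3, norm_zero, add_zero, mul_zero, norm_le_zero_iff] at this
        simp [h2, h3]
        linear_combination -this
      · simp
        field_simp
        ring
      · have h3 : pd u 1 x ≠ 0 := by
          intro h; simp [h] at h1
        simp
        field_simp
        ring
    · intro x
      have := Real.rpow_nonneg (hjp x).le (-N)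
      simp; positivity
    · intro x
      have hj := Real.rpow_nonneg (hjp x).le (-P)
      have hLx := hL x
      have hfin : D * Real.sqrt (1 + ‖x‖ ^ 2) ^ (-P) ≤ (D + D0) * Real.sqrt (1 + ‖x‖ ^ 2) ^ (-P) := by
        gcongr; linarith
      refine le_trans ?_ hfin
      simp only [W]
      split_ifs with h1 h2
      · simp only [PiLp.norm_single, Complex.norm_real, Real.norm_of_nonneg hj]
        nlinarith
      · simp only [PiLp.norm_single, norm_div]
        rw [div_le_iff₀ (norm_pos_iff.2 h2)]
        refine hLx.trans ?_
        nlinarith [mul_nonneg hD.le hj]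
      · have h3 : 0 < ‖pd u 1 x‖ := by
          by_contra h; push Not at h; exact h1 (h.trans (norm_nonneg _))
        simp only [PiLp.norm_single, norm_div]
        rw [div_le_iff₀ h3]
        refine hLx.trans ?_
        nlinarith [mul_nonneg hD.le hj]
    · intro x _
      simp only [Real.rpow_zero, mul_one]
      refine (hdec x).trans ?_
      gcongr; linarith
  · have hb : β = (4 - 2 * N) / 3 := max_eq_right hcase
    obtain ⟨D, hD, -, hD1, hDx⟩ := jap_bound C R N (by linarith) hR hN
    have hL : ∀ x, ‖lap u x + lam * u x‖ ≤ D * Real.sqrt (1 + ‖x‖ ^ 2) ^ (-N) * ‖u x‖ := by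
      intro x
      rcases le_total ‖x‖ R with hx | hx
      · refine (i1 x hx).trans ?_
        gcongr
        linarith [(hDx x).1 hx]
      · refine (o1 x hx).trans ?_
        have : 3 * β / 2 - 2 = -N := by rw [hb]; ring
        rw [this]
        exact mul_le_mul_of_nonneg_right (by linarith [(hDx x).2 hx]) (by positivity)
    classical
    let V : EuclideanSpace ℝ (Fin 2) → ℂ := fun x =>
        if u x = 0 then ((Real.sqrt (1 + ‖x‖ ^ 2) ^ (-N) : ℝ) : ℂ)
        else (lap u x + lam * u x) / u x
    refine ⟨D + D0, c, V, 0, u, by positivity, hc, Or.inr ⟨?_, rfl⟩, hu0, hu, ?_, ?_, ?_, 0,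
      Or.inr rfl, ?_⟩
    · intro h
      have := congrArg (fun f => f 0) h
      simp [V, hz] at this
    · intro x
      simp only [Pi.zero_apply, V]
      split_ifs with h2
      · have := hL x
        simp only [h2, norm_zero, mul_zero, norm_le_zero_iff] at this
        simp [h2]
        simpa using this
      · simp
        field_simp
        ring
    · intro x
      have hj := Real.rpow_nonneg (hjp x).le (-N)
      have hLx := hL x
      have hfin : D * Real.sqrt (1 + ‖x‖ ^ 2) ^ (-N) ≤ (D + D0) * Real.sqrt (1 + ‖x‖ ^ 2) ^ (-N) := by
        gcongr; linarith
      refine le_trans ?_ hfin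
      simp only [V]
      split_ifs with h2
      · simp only [Complex.norm_real, Real.norm_of_nonneg hj]
        nlinarith
      · simp only [norm_div]
        rw [div_le_iff₀ (norm_pos_iff.2 h2)]
        exact hLx
    · intro x
      have := Real.rpow_nonneg (hjp x).le (-P)
      simp; positivity
    · intro x _
      simp only [Real.rpow_zero, mul_one]
      refine (hdec x).trans ?_
      gcongr; linarith
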